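/- arXiv:1410.7535 — 2 statements merged into one kernel-verified Lean document; each statement's English description precedes it below -/
import Mathlib

section
/- Let G be a finite group satisfying Condition (4). Then G can be embedded into the symmetric group S₆, and the order of G is not divisible by 2⁴ = 16. -/
/-- The character value of the small Mathieu representation at an element of the given order. -/
def mathieuCharValue : ℕ → ℂ
  | 1 => 12
  | 2 => 4
  | 3 => 3
  | 4 => 4
  | 5 => 2
  | 6 => 1
  | 8 => 2
  | 11 => 1
  | _ => 0

/-- A representation is a small Mathieu representation if it is 12-dimensional, every group
element has order in {1,2,3,4,5,6,8,11}, and the character at `g` depends only on the order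
of `g`, with the values of the permutation character of `M₁₁` acting on 12 points. -/
def IsSmallMathieuRep {G : Type*} [Group G] {V : Type*} [AddCommGroup V] [Module ℂ V]
    (ρ : Representation ℂ G V) : Prop :=
  Module.finrank ℂ V = 12 ∧
    (∀ g : G, orderOf g ∈ ({1, 2, 3, 4, 5, 6, 8, 11} : Set ℕ)) ∧
    (∀ g : G, LinearMap.trace ℂ V (ρ g) = mathieuCharValue (orderOf g))

/-- `G` admits a small Mathieu representation. -/
def HasSmallMathieuRep (G : Type*) [Group G] : Prop :=
  ∃ (V : Type) (_ : AddCommGroup V) (_ : Module ℂ V) (ρ : Representation ℂ G V),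
    IsSmallMathieuRep ρ

/-- `G` admits a small Mathieu representation whose invariant subspace has dimension ≥ 3. -/
def HasSmallMathieuRep3 (G : Type*) [Group G] : Prop :=
  ∃ (V : Type) (_ : AddCommGroup V) (_ : Module ℂ V) (ρ : Representation ℂ G V),
    IsSmallMathieuRep ρ ∧ 3 ≤ Module.finrank ℂ ρ.invariants

/-- Condition (4): `G` has a small Mathieu representation `V` with `dim V^G ≥ 3`, the 2-Sylow
subgroups of `G` embed into `S₆`, and `G` is not isomorphic to the dicyclic group `Q₁₂`
(realized in Mathlib as `QuaternionGroup 3`). -/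
def Condition4 (G : Type*) [Group G] [Fintype G] : Prop :=
  HasSmallMathieuRep3 G ∧
    (∀ P : Sylow 2 G, ∃ f : P →* Equiv.Perm (Fin 6), Function.Injective f) ∧
    IsEmpty (G ≃* QuaternionGroup 3)

/-!
Applied to the subgroups of `G` and to their characters, the fact that multiplicities are integers,
together with `3 ≤ dim V^G`, bounds Sylow subgroups and centralizers: `|G|` divides `360`, elements
have order at most `6`, and commuting elements of coprime orders are rare.

If `5 ∤ |G|` and `|Q| = 9` for a Sylow 3-subgroup `Q`, then `Q` is normal, elementary abelian and
self-centralizing, and has a complement. Some subgroup of order `3` of `Q` has at most two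
conjugates, and `Q` and the complement then provide two subgroups of index `3`, or one of
index `6`, with trivial core. If `5 ∤ |G|` and the Sylow 3-subgroup has order `3`, a complement or
the normalizer of it has index at most `4`. The core of this subgroup is trivial or generated by a
central involution; in the latter case the Sylow 2-subgroups are elementary abelian, since `Q₁₂` is
excluded, and the transfer yields a subgroup of index `2` avoiding the involution.

If `5 ∣ |G|`, there are at most `6` or exactly `36` Sylow 5-subgroups. In the first case a
complement or the normalizer of one of them has index at most `6` and trivial core. In the second
case `|G| = 360`, there are `10` Sylow 3-subgroups and every element has prime power order.
Counting the involutions outside the normalizer of a Sylow 3-subgroup yields `x` and `y` of orders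
`2` and `3` with `x * y` of order `5`. They generate a subgroup of order `60`, whose index is `6`
and whose core is trivial.
-/

/-! ### Embeddings into `S₆` -/

/-- The group `G` acts faithfully on at most six points, i.e. embeds into the symmetric group
`S₆`. -/
def EmbedsInS6 (G : Type*) [Group G] : Prop :=
  ∃ f : G →* Equiv.Perm (Fin 6), Function.Injective f

namespace EmbedsInS6

variable {G : Type*} [Group G]

lemma of_injective {α : Type*} [Finite α] (hα : Nat.card α ≤ 6) (f : G →* Equiv.Perm α)
    (hf : Function.Injective f) : EmbedsInS6 G := by
  classical
  have := Fintype.ofFinite α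
  obtain ⟨e⟩ : Nonempty (α ↪ Fin 6) :=
    Function.Embedding.nonempty_of_card_le (by
      rwa [← Nat.card_eq_fintype_card, Fintype.card_fin])
  exact ⟨(Equiv.Perm.viaEmbeddingHom e).comp f, (Equiv.Perm.viaEmbeddingHom_injective e).comp hf⟩

lemma of_index_le (H : Subgroup G) [H.FiniteIndex] (hH : H.index ≤ 6) (hcore : H.normalCore = ⊥) :
    EmbedsInS6 G :=
  of_injective (α := G ⧸ H) hH (MulAction.toPermHom G (G ⧸ H)) <| by
    rw [← MonoidHom.ker_eq_bot_iff, ← Subgroup.normalCore_eq_ker, hcore]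

lemma of_index_add_index_le (H K : Subgroup G) [H.FiniteIndex] [K.FiniteIndex]
    (hHK : H.index + K.index ≤ 6) (hcore : H.normalCore ⊓ K.normalCore = ⊥) : EmbedsInS6 G := by
  refine of_injective (α := (G ⧸ H) ⊕ (G ⧸ K)) (by rwa [Nat.card_sum])
    ((Equiv.Perm.sumCongrHom _ _).comp
      ((MulAction.toPermHom G (G ⧸ H)).prod (MulAction.toPermHom G (G ⧸ K))))
    (Equiv.Perm.sumCongrHom_injective.comp ?_)
  rw [← MonoidHom.ker_eq_bot_iff, MonoidHom.ker_prod, ← Subgroup.normalCore_eq_ker,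
    ← Subgroup.normalCore_eq_ker, hcore]

end EmbedsInS6

/-! ### Small Mathieu representations -/

lemma sum_eq_of_forall_ne_one {K M : Type*} [Group K] [Fintype K] [AddCommMonoid M] {F : K → M}
    {b : M} (hF : ∀ k, k ≠ 1 → F k = b) : ∑ k, F k = F 1 + (Nat.card K - 1) • b := by
  classical
  rw [← Finset.add_sum_erase _ _ (Finset.mem_univ (1 : K)),
    Finset.sum_congr rfl fun k hk => hF k (Finset.ne_of_mem_erase hk), Finset.sum_const,
    Finset.card_erase_of_mem (Finset.mem_univ _), Finset.card_univ, Nat.card_eq_fintype_card]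

lemma sum_hom_mul_eq_sub {K R : Type*} [Group K] [Fintype K] [CommRing R] [IsDomain R] {χ : K →* R}
    (hχ : χ ≠ 1) {F : K → R} {b : R} (hF : ∀ k, k ≠ 1 → F k = b) : ∑ k, χ k * F k = F 1 - b := calc
  ∑ k, χ k * F k = ∑ k, χ k * (F k - b) + (∑ k, χ k) * b := by
    rw [Finset.sum_mul, ← Finset.sum_add_distrib]
    exact Finset.sum_congr rfl fun k _ => by ring
  _ = F 1 - b := by
    rw [sum_hom_units_eq_zero χ hχ, Fintype.sum_eq_single 1 fun k hk => by simp [hF k hk]]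
    simp

lemma sum_eq_add_of_sum_hom_mul_eq {C E : Type*} [Group C] [Fintype C] [Fintype E] {χ : C →* ℂ}
    (hχ : χ ≠ 1) {F : C → E → ℕ} {s m : ℕ} (hs : ∀ c, c ≠ 1 → ∑ e, F c e = s)
    (hm : ∑ x : C × E, χ x.1 * (F x.1 x.2 : ℂ) = m) : ∑ e, F 1 e = s + m := by
  have hsub : ∑ c, χ c * ((∑ e, F c e : ℕ) : ℂ) = ((∑ e, F 1 e : ℕ) : ℂ) - s :=
    sum_hom_mul_eq_sub hχ fun c hc => by rw [hs c hc]
  simp only [Fintype.sum_prod_type, ← Finset.mul_sum, ← Nat.cast_sum] at hm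
  exact_mod_cast sub_eq_iff_eq_add'.1 (hsub.symm.trans hm)

/-- The values of `mathieuCharValue`, which are natural numbers, as such. -/
def mathieuCharNat : ℕ → ℕ
  | 1 => 12
  | 2 => 4
  | 3 => 3
  | 4 => 4
  | 5 => 2
  | 6 => 1
  | 8 => 2
  | 11 => 1
  | _ => 0

lemma mathieuCharValue_eq_natCast (n : ℕ) : mathieuCharValue n = mathieuCharNat n := by
  unfold mathieuCharValue mathieuCharNat
  split <;> simp

section Representation

variable {K V : Type*} [Group K] [AddCommGroup V] [Module ℂ V]

lemma sum_trace_eq_card_mul_finrank_invariants [Fintype K] [FiniteDimensional ℂ V]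
    (ρ : Representation ℂ K V) :
    ∑ k, LinearMap.trace ℂ V (ρ k) = Nat.card K * Module.finrank ℂ ρ.invariants := by
  have hK : (Nat.card K : ℂ) ≠ 0 := Nat.cast_ne_zero.2 Nat.card_pos.ne'
  let _ : Invertible (Nat.card K : ℂ) := invertibleOfNonzero hK
  rw [← Representation.card_inv_mul_sum_char_eq_finrank ρ, mul_inv_cancel_left₀ hK]
  rfl

/-- The tensor product of a representation with the one-dimensional representation `χ`. -/
def twist (ρ : Representation ℂ K V) (χ : K →* ℂ) : Representation ℂ K V where
  toFun k := χ k • ρ k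
  map_one' := by simp
  map_mul' a b := by rw [map_mul, map_mul, smul_mul_smul_comm]

lemma exists_monoidHom_complex_ne_one (C : Type*) [Group C] [Finite C] [IsCyclic C] [Nontrivial C] :
    ∃ χ : C →* ℂ, χ ≠ 1 := by
  let _ : CommGroup C := IsCyclic.commGroup
  obtain ⟨c, hc⟩ := exists_ne (1 : C)
  obtain ⟨φ, hφ⟩ := CommGroup.exists_apply_ne_one_of_hasEnoughRootsOfUnity C ℂ hc
  exact ⟨(Units.coeHom ℂ).comp φ, fun h => hφ (Units.ext (DFunLike.congr_fun h c))⟩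

end Representation

namespace IsSmallMathieuRep

variable {G V : Type*} [Group G] [AddCommGroup V] [Module ℂ V] {ρ : Representation ℂ G V}

lemma finiteDimensional (h : IsSmallMathieuRep ρ) : FiniteDimensional ℂ V :=
  Module.finite_of_finrank_pos (by rw [h.1]; norm_num)

lemma trace_eq (h : IsSmallMathieuRep ρ) (g : G) :
    LinearMap.trace ℂ V (ρ g) = mathieuCharNat (orderOf g) := by
  rw [h.2.2, mathieuCharValue_eq_natCast]

lemma exists_sum_twist_eq (h : IsSmallMathieuRep ρ) {K : Type*} [Group K] [Fintype K]
    (f : K →* G) (χ : K →* ℂ) :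
    ∃ n : ℕ, ∑ k, χ k * (mathieuCharNat (orderOf (f k)) : ℂ) = n * Nat.card K := by
  have := h.finiteDimensional
  refine ⟨Module.finrank ℂ (twist (ρ.comp f) χ).invariants, ?_⟩
  rw [mul_comm, ← sum_trace_eq_card_mul_finrank_invariants]
  exact Finset.sum_congr rfl fun k _ => by simp [twist, h.trace_eq]

/-- The multiplicity of a nontrivial character of `C` in the restriction of `ρ` to `C × E` is an
integer. -/
lemma exists_prime_mul_exponent_eq (h : IsSmallMathieuRep ρ) {p q : ℕ} (hp : p.Prime)
    (hq : q.Prime) (hpq : p ≠ q) (C E : Subgroup G) [Finite E] (hC : Nat.card C = p)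
    (hE : ∀ e ∈ E, e ^ q = 1) (hCE : ∀ c ∈ C, ∀ e ∈ E, Commute c e) :
    ∃ n : ℕ, 12 + (Nat.card E - 1) * mathieuCharNat q =
      mathieuCharNat p + (Nat.card E - 1) * mathieuCharNat (p * q) + n * (p * Nat.card E) := by
  have := Fact.mk hp
  have := Fact.mk hq
  have : Finite C := Nat.finite_of_card_ne_zero (hC ▸ hp.ne_zero)
  have := Fintype.ofFinite C
  have := Fintype.ofFinite E
  have orderOf_left {c : C} (hc : c ≠ 1) : orderOf (c : G) = p := by
    rw [Subgroup.orderOf_coe]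
    exact orderOf_eq_prime (hC ▸ pow_card_eq_one') hc
  have orderOf_right {e : E} (he : e ≠ 1) : orderOf (e : G) = q :=
    orderOf_eq_prime (hE e e.2) (by simpa using he)
  have orderOf_both {c : C} {e : E} (hc : c ≠ 1) (he : e ≠ 1) : orderOf (c * e : G) = p * q := by
    rw [(hCE c c.2 e e.2).orderOf_mul_eq_mul_orderOf_of_coprime, orderOf_left hc, orderOf_right he]
    rw [orderOf_left hc, orderOf_right he]
    exact (Nat.coprime_primes hp hq).2 hpq
  obtain ⟨χ, hχ⟩ : ∃ χ : C →* ℂ, χ ≠ 1 :=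
    have := Finite.one_lt_card_iff_nontrivial.1 (hC ▸ hp.one_lt)
    have := isCyclic_of_prime_card hC
    exists_monoidHom_complex_ne_one C
  obtain ⟨n, hn⟩ := h.exists_sum_twist_eq
    (C.subtype.noncommCoprod E.subtype fun c e => hCE c c.2 e e.2) (χ.comp (MonoidHom.fst C E))
  have hone : ∑ e : E, mathieuCharNat (orderOf (((1 : C) : G) * e)) =
      12 + (Nat.card E - 1) * mathieuCharNat q := by
    simp only [OneMemClass.coe_one, one_mul]
    rw [sum_eq_of_forall_ne_one fun e he => by rw [orderOf_right he]]
    simp [mathieuCharNat]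
  have hne_one (c : C) (hc : c ≠ 1) : ∑ e : E, mathieuCharNat (orderOf (c * e : G)) =
      mathieuCharNat p + (Nat.card E - 1) * mathieuCharNat (p * q) := by
    rw [sum_eq_of_forall_ne_one fun e he => by rw [orderOf_both hc he]]
    simp [orderOf_left hc]
  refine ⟨n, ?_⟩
  rw [← hone]
  refine sum_eq_add_of_sum_hom_mul_eq hχ hne_one ?_
  rw [Nat.card_prod, hC] at hn
  exact_mod_cast hn

end IsSmallMathieuRep

namespace HasSmallMathieuRep3

variable {G : Type*} [Group G]

lemma subgroup (h : HasSmallMathieuRep3 G) (H : Subgroup G) : HasSmallMathieuRep3 H := by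
  obtain ⟨V, _, _, ρ, hρ, h3⟩ := h
  have := hρ.finiteDimensional
  refine ⟨V, _, _, ρ.comp H.subtype, ⟨hρ.1, fun g => ?_, fun g => ?_⟩,
    h3.trans (Submodule.finrank_mono fun v hv k => hv k)⟩
  · rw [← Subgroup.orderOf_coe]
    exact hρ.2.1 g
  · rw [← Subgroup.orderOf_coe]
    exact hρ.2.2 g

lemma exists_sum_eq [Fintype G] (h : HasSmallMathieuRep3 G) :
    ∃ n, 3 ≤ n ∧ ∑ g : G, mathieuCharNat (orderOf g) = n * Nat.card G := by
  obtain ⟨V, _, _, ρ, hρ, h3⟩ := h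
  have := hρ.finiteDimensional
  have hsum := sum_trace_eq_card_mul_finrank_invariants ρ
  simp only [hρ.trace_eq] at hsum
  exact ⟨_, h3, by rw [mul_comm]; exact_mod_cast hsum⟩

lemma exists_card_mul_eq [Finite G] (h : HasSmallMathieuRep3 G) {b : ℕ}
    (hb : ∀ g : G, g ≠ 1 → mathieuCharNat (orderOf g) = b) :
    ∃ n, 3 ≤ n ∧ 12 + (Nat.card G - 1) * b = n * Nat.card G := by
  have := Fintype.ofFinite G
  obtain ⟨n, hn, hsum⟩ := h.exists_sum_eq
  rw [sum_eq_of_forall_ne_one hb] at hsum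
  exact ⟨n, hn, by simpa [mathieuCharNat] using hsum⟩

end HasSmallMathieuRep3

/-! ### Sylow subgroups of small order -/

section Sylow

variable {G : Type*} [Group G] {p : ℕ}

lemma mem_sylow_of_mem_normalizer (P : Sylow p G) {g : G} {k : ℕ} (hg : orderOf g = p ^ k)
    (hgP : g ∈ Subgroup.normalizer (P : Set G)) : g ∈ P := by
  have hpg : IsPGroup p (Subgroup.zpowers g) := IsPGroup.of_card (by rw [Nat.card_zpowers, hg])
  have h : g ∈ Subgroup.zpowers g ⊓ Subgroup.normalizer (P : Set G) :=
    ⟨Subgroup.mem_zpowers g, hgP⟩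
  rw [hpg.inf_normalizer_sylow P] at h
  exact h.2

lemma card_sylow_eq_pow [Finite G] [Fact p.Prime] (P : Sylow p G) {k : ℕ}
    (hk : p ^ k ∣ Nat.card G) (hk' : ¬ p ^ (k + 1) ∣ Nat.card G) : Nat.card P = p ^ k := by
  have hp : p.Prime := Fact.out
  rw [hp.pow_dvd_iff_le_factorization Nat.card_pos.ne'] at hk hk'
  rw [P.card_eq_multiplicity]
  congr 1
  omega

lemma sylow_normal_of_card_eq_one (P : Sylow p G)
    (h : Nat.card (Sylow p G) = 1) : (P : Subgroup G).Normal := by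
  have := (Nat.card_eq_one_iff_unique.1 h).1
  exact P.normal_of_subsingleton

lemma exists_orderOf_eq_pow_of_mem_sylow [Fact p.Prime] (P : Sylow p G) {g : G}
    (hg : g ∈ P) : ∃ k, orderOf g = p ^ k := by
  obtain ⟨k, hk⟩ := IsPGroup.iff_orderOf.1 P.2 ⟨g, hg⟩
  exact ⟨k, by rwa [Subgroup.orderOf_mk] at hk⟩

lemma disjoint_of_prime_card_of_not_le {P N : Subgroup G} (hP : (Nat.card P).Prime)
    (h : ¬ P ≤ N) : Disjoint P N := by
  have := Fact.mk hP
  rcases (N.subgroupOf P).eq_bot_or_eq_top_of_prime_card with h1 | h1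
  · exact (Subgroup.subgroupOf_eq_bot.1 h1).symm
  · exact absurd (Subgroup.subgroupOf_eq_top.1 h1) h

lemma le_centralizer_of_disjoint {N P : Subgroup G} [hN : N.Normal]
    (hNP : N ≤ Subgroup.normalizer (P : Set G)) (hd : Disjoint N P) :
    N ≤ Subgroup.centralizer (P : Set G) := by
  intro n hn x hx
  have hcomm : n * x * n⁻¹ * x⁻¹ ∈ N ⊓ P := by
    refine ⟨?_, P.mul_mem ((Subgroup.mem_normalizer_iff.1 (hNP hn) x).1 hx) (P.inv_mem hx)⟩
    rw [mul_assoc, mul_assoc, ← mul_assoc x]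
    exact N.mul_mem hn (hN.conj_mem _ (N.inv_mem hn) x)
  rw [hd.eq_bot, Subgroup.mem_bot, mul_inv_eq_one, mul_inv_eq_iff_eq_mul] at hcomm
  exact hcomm.symm

lemma sylow_normal_of_le_normal [Fact p.Prime] (P : Sylow p G) {N : Subgroup G}
    [hN : N.Normal] (hPN : (P : Subgroup G) ≤ N) (hNP : N ≤ Subgroup.normalizer (P : Set G)) :
    (P : Subgroup G).Normal := by
  refine ⟨fun x hx g => ?_⟩
  obtain ⟨k, hk⟩ := exists_orderOf_eq_pow_of_mem_sylow P hx
  refine mem_sylow_of_mem_normalizer P (k := k) ?_ (hNP (hN.conj_mem x (hPN hx) g))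
  rw [← hk]
  exact (MulAut.conj g).orderOf_eq x

/-- `M` is a complement of `P` if `P` is normal, and the normalizer of `P` otherwise. -/
lemma exists_index_le_max_of_card_sylow_prime [Finite G] [Fact p.Prime] (P : Sylow p G)
    (hP : Nat.card P = p) :
    ∃ M : Subgroup G, M.index ≤ max p (Nat.card (Sylow p G)) ∧
      Disjoint M.normalCore (P : Subgroup G) ∧
        M.normalCore ≤ Subgroup.centralizer (P : Set G) := by
  have hp : (Nat.card (P : Subgroup G)).Prime := hP.symm ▸ Fact.out
  suffices ∃ M : Subgroup G, M.index ≤ max p (Nat.card (Sylow p G)) ∧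
      Disjoint M.normalCore (P : Subgroup G) ∧
        M.normalCore ≤ Subgroup.normalizer (P : Set G) by
    obtain ⟨M, hM, hd, hn⟩ := this
    exact ⟨M, hM, hd, le_centralizer_of_disjoint hn hd⟩
  by_cases hn : (P : Subgroup G).Normal
  · obtain ⟨M, hM⟩ := Subgroup.exists_right_complement'_of_coprime P.card_coprime_index
    refine ⟨M, ?_, hM.disjoint.symm.mono_left M.normalCore_le, ?_⟩
    · rw [hM.index_eq_card]
      exact hP.le.trans (le_max_left _ _)
    · rw [← Sylow.coe_coe, Subgroup.normalizer_eq_top]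
      exact le_top
  · refine ⟨Subgroup.normalizer (P : Set G), ?_, ?_, Subgroup.normalCore_le _⟩
    · rw [P.card_eq_index_normalizer]
      exact le_max_right _ _
    · exact (disjoint_of_prime_card_of_not_le hp fun hle =>
        hn (sylow_normal_of_le_normal P hle (Subgroup.normalCore_le _))).symm

end Sylow

lemma ncard_iUnion_diff_one {G ι : Type*} [Group G] [Finite G] [Finite ι] (H : ι → Subgroup G)
    (hH : Pairwise (Function.onFun Disjoint H)) {m : ℕ} (hm : ∀ i, Nat.card (H i) = m) :
    {g : G | g ≠ 1 ∧ ∃ i, g ∈ H i}.ncard = Nat.card ι * (m - 1) := by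
  have hunion : {g : G | g ≠ 1 ∧ ∃ i, g ∈ H i} = ⋃ i, (H i : Set G) \ {1} := by
    ext g
    simp [and_comm]
  have hdisj : Pairwise (Function.onFun Disjoint fun i => (H i : Set G) \ {1}) := by
    intro i j hij
    refine Set.disjoint_left.2 fun g hi hj => hi.2 ?_
    exact Subgroup.mem_bot.1 ((hH hij).le_bot ⟨hi.1, hj.1⟩)
  rw [hunion, Set.ncard_iUnion_of_finite (fun i => Set.toFinite _) hdisj,
    finsum_congr fun i => (?_ : ((H i : Set G) \ {1}).ncard = m - 1)]
  · have := Fintype.ofFinite ι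
    rw [finsum_eq_sum_of_fintype, Finset.sum_const, smul_eq_mul, Finset.card_univ,
      Nat.card_eq_fintype_card]
  · rw [Set.ncard_sdiff_singleton_of_mem (H i).one_mem, ← Nat.card_coe_set_eq]
    exact congrArg (· - 1) (hm i)

section QuaternionGroup

variable {G : Type*} [Group G] {n : ℕ} {g h : G}

lemma zpow_mul_eq_mul_zpow_neg (hgh : h * g * h⁻¹ = g⁻¹) (i : ℤ) : g ^ i * h = h * g ^ (-i) := by
  have hconj : h * g ^ (-i) * h⁻¹ = g ^ i := by
    rw [← conj_zpow, hgh, inv_zpow, zpow_neg, inv_inv]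
  rw [← hconj, inv_mul_cancel_right]

/-- The homomorphism from the generalized quaternion (dicyclic) group of order `4 * n` determined by
the images `g` of the rotation and `h` of the extra generator. -/
def quaternionGroupLift (hg : g ^ (2 * n) = 1) (hh : h ^ 2 = g ^ n) (hgh : h * g * h⁻¹ = g⁻¹) :
    QuaternionGroup n →* G :=
  let φ : ZMod (2 * n) →+ Additive G :=
    ZMod.lift (2 * n) ⟨zmultiplesHom (Additive G) (Additive.ofMul g), by
      rw [zmultiplesHom_apply, natCast_zsmul, ← ofMul_pow, hg, ofMul_one]⟩
  have hφ (i : ℤ) : (φ i).toMul = g ^ i := by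
    rw [ZMod.lift_coe, zmultiplesHom_apply, ← ofMul_zpow, toMul_ofMul]
  { toFun := fun
      | .a i => (φ i).toMul
      | .xa i => h * (φ i).toMul
    map_one' := congrArg Additive.toMul (map_zero φ)
    map_mul' := by
      rintro (i | i) (j | j) <;> obtain ⟨i, rfl⟩ := ZMod.intCast_surjective i <;>
        obtain ⟨j, rfl⟩ := ZMod.intCast_surjective j
      · simp only [QuaternionGroup.a_mul_a, ← Int.cast_add, hφ, zpow_add]
      · simp only [QuaternionGroup.a_mul_xa, ← Int.cast_sub, hφ]
        rw [← mul_assoc, zpow_mul_eq_mul_zpow_neg hgh, mul_assoc, ← zpow_add, neg_add_eq_sub]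
      · simp only [QuaternionGroup.xa_mul_a, ← Int.cast_add, hφ, zpow_add, mul_assoc]
      · simp only [QuaternionGroup.xa_mul_xa, ← Int.cast_natCast (R := ZMod (2 * n)) n,
          ← Int.cast_add, ← Int.cast_sub, hφ]
        rw [mul_assoc, ← mul_assoc (g ^ i), zpow_mul_eq_mul_zpow_neg hgh, mul_assoc,
          ← zpow_add, ← mul_assoc, ← sq, hh, ← zpow_natCast, ← zpow_add, add_sub_assoc,
          neg_add_eq_sub] }

lemma quaternionGroupLift_a (hg : g ^ (2 * n) = 1) (hh : h ^ 2 = g ^ n) (hgh : h * g * h⁻¹ = g⁻¹)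
    (i : ℤ) : quaternionGroupLift hg hh hgh (.a i) = g ^ i := by
  change ((ZMod.lift (2 * n) _ : ZMod (2 * n) →+ Additive G) (i : ZMod (2 * n))).toMul = g ^ i
  rw [ZMod.lift_coe, zmultiplesHom_apply, ← ofMul_zpow, toMul_ofMul]

lemma quaternionGroupLift_xa (hg : g ^ (2 * n) = 1) (hh : h ^ 2 = g ^ n)
    (hgh : h * g * h⁻¹ = g⁻¹) (i : ℤ) : quaternionGroupLift hg hh hgh (.xa i) = h * g ^ i :=
  congrArg (h * ·) (quaternionGroupLift_a hg hh hgh i)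

lemma quaternionGroupLift_injective (hg : orderOf g = 2 * n) (hh : h ^ 2 = g ^ n)
    (hgh : h * g * h⁻¹ = g⁻¹) (hmem : h ∉ Subgroup.zpowers g) :
    Function.Injective (quaternionGroupLift (orderOf_dvd_iff_pow_eq_one.1 hg.dvd) hh hgh) := by
  rw [injective_iff_map_eq_one]
  rintro (i | i) hi <;> obtain ⟨i, rfl⟩ := ZMod.intCast_surjective i
  · rw [quaternionGroupLift_a, ← orderOf_dvd_iff_zpow_eq_one, hg,
      ← ZMod.intCast_zmod_eq_zero_iff_dvd] at hi
    rw [hi, QuaternionGroup.a_zero]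
  · rw [quaternionGroupLift_xa, mul_eq_one_iff_eq_inv] at hi
    exact absurd (hi ▸ inv_mem (zpow_mem (Subgroup.mem_zpowers g) i)) hmem

lemma nonempty_mulEquiv_quaternionGroup [Finite G] [NeZero n] (hG : Nat.card G = 4 * n)
    (hg : orderOf g = 2 * n) (hh : h ^ 2 = g ^ n) (hgh : h * g * h⁻¹ = g⁻¹)
    (hmem : h ∉ Subgroup.zpowers g) : Nonempty (G ≃* QuaternionGroup n) := by
  have hbij := (Nat.bijective_iff_injective_and_card _).2
    ⟨quaternionGroupLift_injective hg hh hgh hmem, by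
      rw [Nat.card_eq_fintype_card, QuaternionGroup.card, hG]⟩
  exact ⟨(MulEquiv.ofBijective _ hbij).symm⟩

/-- The isomorphism sends `c * t ^ 2` and `t` to the standard generators. -/
lemma nonempty_mulEquiv_quaternionGroup_three [Finite G] (hG : Nat.card G = 12) {c t : G}
    (hc : orderOf c = 3) (ht : orderOf t = 4) (htc : t * c * t⁻¹ = c⁻¹) :
    Nonempty (G ≃* QuaternionGroup 3) := by
  have hc3 : c ^ 3 = 1 := orderOf_dvd_iff_pow_eq_one.1 hc.dvd
  have ht4 : t ^ 4 = 1 := orderOf_dvd_iff_pow_eq_one.1 ht.dvd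
  have hinvert : SemiconjBy t c c⁻¹ := mul_inv_eq_iff_eq_mul.1 htc
  have hcomm : Commute c (t ^ 2) := by
    have h : SemiconjBy (t * t) c c⁻¹⁻¹ := hinvert.inv_right.mul_left hinvert
    rw [inv_inv, ← sq] at h
    exact h.symm
  have horder : orderOf (c * t ^ 2) = 2 * 3 := by
    have ht2 : orderOf (t ^ 2) = 2 := by rw [orderOf_pow, ht]; rfl
    rw [hcomm.orderOf_mul_eq_mul_orderOf_of_coprime] <;> rw [hc, ht2]
    decide
  have hinv : t * (c * t ^ 2) * t⁻¹ = (c * t ^ 2)⁻¹ := by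
    have ht2 : (t ^ 2)⁻¹ = t ^ 2 := inv_eq_of_mul_eq_one_left (by rw [← pow_add, ht4])
    rw [mul_inv_rev, ht2, mul_inv_eq_iff_eq_mul, ← hcomm.inv_left.eq]
    exact hinvert.mul_right (Commute.self_pow t 2)
  refine nonempty_mulEquiv_quaternionGroup hG horder ?_ hinv fun hmem => ?_
  · rw [hcomm.mul_pow, hc3, one_mul, ← pow_mul, show 2 * 3 = 4 + 2 from rfl, pow_add, ht4, one_mul]
  · obtain ⟨k, hk⟩ := Subgroup.mem_zpowers_iff.1 hmem
    have htg : Commute t (c * t ^ 2) := by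
      have h := Commute.zpow_self (c * t ^ 2) k
      rwa [hk] at h
    rw [htg.eq, mul_inv_cancel_right, eq_inv_iff_mul_eq_one,
      ← sq, ← orderOf_dvd_iff_pow_eq_one, horder] at hinv
    omega

end QuaternionGroup

/-- The transfer to `T` followed by a character of `T` takes `z` to an odd power of the value of the
character. -/
lemma exists_index_le_two_of_sq_eq_one {G : Type*} [Group G] [Finite G] (T : Sylow 2 G)
    (hT : ∀ t ∈ T, t ^ 2 = 1) {z : G} (hz : z ∈ Subgroup.center G) (hzT : z ∈ T) (hz1 : z ≠ 1) :
    ∃ H : Subgroup G, H.index ≤ 2 ∧ z ∉ H := by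
  have := Fact.mk Nat.prime_two
  set z' : T := ⟨z, hzT⟩
  have hz' : z' ≠ 1 := fun h => hz1 (congrArg Subtype.val h)
  have hexp : Monoid.exponent T = 2 :=
    (Nat.prime_two.eq_one_or_self_of_dvd _ (Monoid.exponent_dvd_of_forall_pow_eq_one fun t =>
      Subtype.ext (hT t t.2))).resolve_left fun h =>
        hz' (Monoid.exp_eq_one_iff.1 h |>.elim z' 1)
  let _ : CommGroup T := { mul_comm := mul_comm_of_exponent_two hexp }
  have : HasEnoughRootsOfUnity ℤ (Monoid.exponent T) := by
    rw [hexp]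
    exact { prim := ⟨-1, IsPrimitiveRoot.neg_one 0 (by norm_num)⟩, cyc := inferInstance }
  obtain ⟨χ, hχ⟩ := CommGroup.exists_apply_ne_one_of_hasEnoughRootsOfUnity T ℤ hz'
  have htransfer : MonoidHom.transfer χ z = χ z' ^ (T : Subgroup G).index := by
    rw [MonoidHom.transfer_eq_pow χ z fun k g _ => by
      rw [mul_assoc, ((Subgroup.mem_center_iff.1 (pow_mem hz k)) g).symm, inv_mul_cancel_left]]
    exact map_pow χ z' _
  refine ⟨(MonoidHom.transfer χ).ker, ?_, fun hker => hχ ?_⟩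
  · rw [Subgroup.index_ker]
    exact (Subgroup.card_le_card_group _).trans (by simp)
  · have hodd : Odd (T : Subgroup G).index := by
      rw [← Nat.not_even_iff_odd, even_iff_two_dvd]
      exact T.not_dvd_index
    rw [MonoidHom.mem_ker, htransfer] at hker
    rcases Int.units_eq_one_or (χ z') with h | h
    · exact h
    · rw [h, hodd.neg_one_pow] at hker
      exact absurd hker (by decide)

section TwoGroups

variable {T : Type*} [Group T] [Finite T]

lemma exists_orderOf_eq_two_of_isPGroup (hT : IsPGroup 2 T) [Nontrivial T] :
    ∃ t : T, orderOf t = 2 := by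
  have := Fact.mk Nat.prime_two
  obtain ⟨k, hk, hcard⟩ := hT.nontrivial_iff_card.1 inferInstance
  exact exists_prime_orderOf_dvd_card' 2 (hcard ▸ dvd_pow_self 2 hk.ne')

lemma exists_central_involution [Nontrivial T] (hT : IsPGroup 2 T) :
    ∃ z ∈ Subgroup.center T, orderOf z = 2 := by
  have := Fact.mk Nat.prime_two
  have := hT.center_nontrivial
  obtain ⟨z, hz⟩ := exists_orderOf_eq_two_of_isPGroup (hT.to_subgroup (Subgroup.center T))
  exact ⟨z, z.2, by rwa [Subgroup.orderOf_coe]⟩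

/-- All point stabilizers are nontrivial, so a unique involution would act trivially. -/
lemma exists_orderOf_eq_two_ne {α : Type*} [Finite α] (hT : IsPGroup 2 T)
    (f : T →* Equiv.Perm α) (hf : Function.Injective f) (hα : Nat.card α < Nat.card T) {z : T}
    (hz : z ≠ 1) : ∃ s : T, orderOf s = 2 ∧ s ≠ z := by
  by_contra! hunique
  let _ : MulAction T α := MulAction.compHom α f
  have hfix (x : α) : f z x = x := by
    have horbit := (Finite.card_subtype_le (· ∈ MulAction.orbit T x)).trans_lt hα
    have hstab : Nontrivial (MulAction.stabilizer T x) := by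
      rw [Subgroup.nontrivial_iff_ne_bot]
      intro hbot
      have hcard := Nat.card_congr (MulAction.orbitProdStabilizerEquivGroup T x)
      rw [Nat.card_prod, hbot, Subgroup.card_bot, mul_one] at hcard
      exact horbit.ne hcard
    obtain ⟨s, hs⟩ := exists_orderOf_eq_two_of_isPGroup (hT.to_subgroup (MulAction.stabilizer T x))
    rw [← hunique s (by rwa [Subgroup.orderOf_coe])]
    exact s.2
  exact hz (hf ((Equiv.ext hfix).trans (map_one f).symm))

end TwoGroups

/-! ### First consequences of Condition (4) -/

lemma card_mul_relIndex_of_le {G : Type*} [Group G] {H K : Subgroup G} (hHK : H ≤ K) :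
    Nat.card H * H.relIndex K = Nat.card K := by
  rw [← Subgroup.relIndex_bot_left H, Subgroup.relIndex_mul_relIndex ⊥ H K bot_le hHK,
    Subgroup.relIndex_bot_left]

lemma le_normalizer_of_card_le_two_mul {G : Type*} [Group G] [Finite G] {H K : Subgroup G}
    (hHK : H ≤ K) (hcard : Nat.card K ≤ 2 * Nat.card H) : K ≤ Subgroup.normalizer (H : Set G) := by
  rw [← Subgroup.normal_subgroupOf_iff_le_normalizer hHK]
  have hmul := card_mul_relIndex_of_le hHK
  have hpos : H.relIndex K ≠ 0 := by
    intro h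
    rw [h] at hmul
    exact Nat.card_pos.ne hmul
  have hle : H.relIndex K ≤ 2 := by
    rw [← hmul, mul_comm 2] at hcard
    exact Nat.le_of_mul_le_mul_left hcard Nat.card_pos
  obtain h | h : H.relIndex K = 1 ∨ H.relIndex K = 2 := by omega
  · rw [le_antisymm hHK (Subgroup.relIndex_eq_one.1 h), Subgroup.subgroupOf_self]
    infer_instance
  · exact Subgroup.normal_of_index_eq_two h

namespace Condition4

variable {G : Type*} [Group G] [Fintype G]

lemma embedsInS6_of_isPGroup_two (hG : Condition4 G) {T : Subgroup G} (hT : IsPGroup 2 T) :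
    EmbedsInS6 T := by
  obtain ⟨P, hTP⟩ := hT.exists_le_sylow
  obtain ⟨f, hf⟩ := hG.2.1 P
  exact ⟨f.comp (Subgroup.inclusion hTP), hf.comp (Subgroup.inclusion_injective hTP)⟩

lemma exists_mem_orderOf_eq_two_ne (hG : Condition4 G) {T : Subgroup G} (hT : Nat.card T = 8)
    {z : G} (hzT : z ∈ T) (hz : z ≠ 1) : ∃ s ∈ T, orderOf s = 2 ∧ s ≠ z := by
  have hT2 : IsPGroup 2 T := IsPGroup.of_card (n := 3) hT
  obtain ⟨f, hf⟩ := hG.embedsInS6_of_isPGroup_two hT2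
  obtain ⟨s, hs, hsz⟩ := exists_orderOf_eq_two_ne hT2 f hf (by rw [hT, Nat.card_fin]; norm_num)
    (z := ⟨z, hzT⟩) (fun h => hz (congrArg Subtype.val h))
  exact ⟨s, s.2, by rwa [Subgroup.orderOf_coe], fun h => hsz (Subtype.ext h)⟩

lemma orderOf_ne_eight (hG : Condition4 G) (g : G) : orderOf g ≠ 8 := by
  classical
  intro hg
  have hg4 : orderOf (g ^ 4) = 2 := by rw [orderOf_pow, hg]; rfl
  obtain ⟨s, hs, hs2, hne⟩ := hG.exists_mem_orderOf_eq_two_ne (T := Subgroup.zpowers g)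
    (by rw [Nat.card_zpowers, hg]) (Subgroup.npow_mem_zpowers g 4)
    (mt orderOf_eq_one_iff.2 (by omega))
  rw [mem_zpowers_iff_mem_range_orderOf, hg] at hs
  obtain ⟨k, hk, rfl⟩ := Finset.mem_image.1 hs
  have hk8 := Finset.mem_range.1 hk
  rw [orderOf_pow, hg] at hs2
  obtain rfl : k = 4 := by interval_cases k <;> simp_all
  exact hne rfl

lemma orderOf_ne_eleven (hG : Condition4 G) (g : G) : orderOf g ≠ 11 := by
  intro hg
  have hcard : Nat.card (Subgroup.zpowers g) = 11 := by rw [Nat.card_zpowers, hg]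
  obtain ⟨n, hn, h⟩ := (hG.1.subgroup (Subgroup.zpowers g)).exists_card_mul_eq (b := 1)
    fun k hk => by
      have := Fact.mk (show Nat.Prime 11 by norm_num)
      rw [orderOf_eq_prime (hcard ▸ pow_card_eq_one') hk]
      rfl
  rw [hcard] at h
  omega

lemma orderOf_le_six (hG : Condition4 G) (g : G) : orderOf g ≤ 6 := by
  obtain ⟨_, _, _, _, hρ, _⟩ := hG.1
  have horder := hρ.2.1 g
  simp only [Set.mem_insert_iff, Set.mem_singleton_iff] at horder
  have h8 := hG.orderOf_ne_eight g
  have h11 := hG.orderOf_ne_eleven g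
  omega

lemma orderOf_mul_orderOf_le_six (hG : Condition4 G) {x y : G} (hxy : Commute x y)
    (hc : (orderOf x).Coprime (orderOf y)) : orderOf x * orderOf y ≤ 6 := by
  rw [← hxy.orderOf_mul_eq_mul_orderOf_of_coprime hc]
  exact hG.orderOf_le_six _

lemma exists_prime_pow_mul_eq (hG : Condition4 G) {p k b : ℕ} (hp : p.Prime)
    (hk : p ^ k ∣ Nat.card G)
    (hb : ∀ j ∈ Finset.Icc 1 6, p ^ j ≤ 6 → mathieuCharNat (p ^ j) = b) :
    ∃ n, 3 ≤ n ∧ 12 + (p ^ k - 1) * b = n * p ^ k := by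
  have := Fact.mk hp
  obtain ⟨H, hH⟩ := Sylow.exists_subgroup_card_pow_prime p hk
  rw [← hH]
  refine (hG.1.subgroup H).exists_card_mul_eq fun h h1 => ?_
  obtain ⟨j, hj⟩ := IsPGroup.iff_orderOf.1 (IsPGroup.of_card hH) h
  have hle : p ^ j ≤ 6 := by
    rw [← hj, ← Subgroup.orderOf_coe]
    exact hG.orderOf_le_six h
  have hj0 : j ≠ 0 := by
    rintro rfl
    exact h1 (orderOf_eq_one_iff.1 hj)
  rw [hj]
  exact hb j (Finset.mem_Icc.2 ⟨Nat.one_le_iff_ne_zero.2 hj0,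
    (Nat.lt_pow_self hp.one_lt).le.trans hle⟩) hle

lemma not_two_pow_four_dvd_card (hG : Condition4 G) : ¬ 2 ^ 4 ∣ Nat.card G := fun h => by
  obtain ⟨n, _, h⟩ := hG.exists_prime_pow_mul_eq (b := 4) Nat.prime_two h (by decide)
  omega

lemma not_three_pow_three_dvd_card (hG : Condition4 G) : ¬ 3 ^ 3 ∣ Nat.card G := fun h => by
  obtain ⟨n, _, h⟩ := hG.exists_prime_pow_mul_eq (b := 3) Nat.prime_three h (by decide)
  omega

lemma not_five_pow_two_dvd_card (hG : Condition4 G) : ¬ 5 ^ 2 ∣ Nat.card G := fun h => by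
  obtain ⟨n, _, h⟩ := hG.exists_prime_pow_mul_eq (b := 2) Nat.prime_five h (by decide)
  omega

lemma card_dvd (hG : Condition4 G) : Nat.card G ∣ 360 := by
  rw [Nat.dvd_iff_prime_pow_dvd_dvd]
  rintro p (- | k) hp hk
  · simp
  have := Fact.mk hp
  obtain ⟨x, hx⟩ := exists_prime_orderOf_dvd_card' p ((dvd_pow_self p k.succ_ne_zero).trans hk)
  have hp6 : p ≤ 6 := hx ▸ hG.orderOf_le_six x
  have pow_dvd {m : ℕ} (h : ¬ p ^ (m + 1) ∣ Nat.card G) : p ^ (k + 1) ∣ p ^ m :=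
    pow_dvd_pow p (by by_contra! hlt; exact h ((pow_dvd_pow p hlt).trans hk))
  obtain rfl | rfl | rfl : p = 2 ∨ p = 3 ∨ p = 5 := by
    interval_cases p <;> revert hp <;> norm_num
  · exact (pow_dvd hG.not_two_pow_four_dvd_card).trans (by norm_num)
  · exact (pow_dvd hG.not_three_pow_three_dvd_card).trans (by norm_num)
  · exact (pow_dvd hG.not_five_pow_two_dvd_card).trans (by norm_num)

lemma centralizer_sylow_five_le (hG : Condition4 G) (P : Sylow 5 G) (hP : Nat.card P = 5) :
    Subgroup.centralizer (P : Set G) ≤ P := by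
  have := Fact.mk Nat.prime_five
  intro y hy
  obtain ⟨x, hx⟩ := exists_prime_orderOf_dvd_card' (G := P) 5 hP.symm.dvd
  rw [← Subgroup.orderOf_coe] at hx
  by_cases h5 : 5 ∣ orderOf y
  · refine mem_sylow_of_mem_normalizer P (k := 1) ?_
      (Subgroup.centralizer_le_normalizer _ hy)
    have := hG.orderOf_le_six y
    have := orderOf_pos y
    omega
  · have hle := hG.orderOf_mul_orderOf_le_six (hy x x.2)
      (by rwa [hx, Nat.prime_five.coprime_iff_not_dvd])
    have hy1 : orderOf y = 1 := by
      have := orderOf_pos y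
      rw [hx] at hle
      omega
    rw [orderOf_eq_one_iff.1 hy1]
    exact P.one_mem

section OrderThree

variable {c : G}

lemma not_four_dvd_card_centralizer (hG : Condition4 G) (hc : orderOf c = 3) :
    ¬ 4 ∣ Nat.card (Subgroup.centralizer {c}) := by
  intro h4
  have := Fact.mk Nat.prime_two
  obtain ⟨E', hE'⟩ := Sylow.exists_subgroup_card_pow_prime 2 (n := 2) h4
  set E := E'.map (Subgroup.centralizer {c}).subtype with hE_def
  have hE : Nat.card E = 4 := by
    rw [hE_def, Subgroup.card_map_of_injective (Subgroup.subtype_injective _), hE']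
    rfl
  have hcomm (e : G) (he : e ∈ E) : Commute c e :=
    (Subgroup.mem_centralizer_singleton_iff.1 (Subgroup.map_subtype_le E' he)).symm
  have hsq (e : G) (he : e ∈ E) : e ^ 2 = 1 := by
    have hdvd : orderOf e ∣ 4 := hE ▸ E.orderOf_dvd_natCard he
    have hle := hG.orderOf_mul_orderOf_le_six (hcomm e he)
      (Nat.Coprime.coprime_dvd_right hdvd (by rw [hc]; norm_num))
    have hpos := orderOf_pos e
    rw [hc] at hle
    rw [← orderOf_dvd_iff_pow_eq_one]
    obtain h | h : orderOf e = 1 ∨ orderOf e = 2 := by omega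
    · exact h ▸ one_dvd 2
    · exact h.dvd
  obtain ⟨_, _, _, ρ, hρ, _⟩ := hG.1
  obtain ⟨n, hn⟩ := hρ.exists_prime_mul_exponent_eq Nat.prime_three Nat.prime_two (by norm_num)
    (Subgroup.zpowers c) E (by rw [Nat.card_zpowers, hc]) hsq fun x hx e he => by
      obtain ⟨k, rfl⟩ := Subgroup.mem_zpowers_iff.1 hx
      exact (hcomm e he).zpow_left k
  simp only [hE, mathieuCharNat] at hn
  omega

lemma not_five_dvd_card_centralizer (hG : Condition4 G) (hc : orderOf c = 3) :
    ¬ 5 ∣ Nat.card (Subgroup.centralizer {c}) := by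
  intro h5
  have := Fact.mk Nat.prime_five
  obtain ⟨x, hx⟩ := exists_prime_orderOf_dvd_card' 5 h5
  rw [← Subgroup.orderOf_coe] at hx
  have hle := hG.orderOf_mul_orderOf_le_six (Subgroup.mem_centralizer_singleton_iff.1 x.2)
    (by rw [hc, hx]; norm_num)
  rw [hc, hx] at hle
  omega

lemma card_centralizer_dvd_eighteen (hG : Condition4 G) (hc : orderOf c = 3) :
    Nat.card (Subgroup.centralizer {c}) ∣ 18 := by
  have h : ∀ d ∈ Nat.divisors 360, ¬ 4 ∣ d → ¬ 5 ∣ d → d ∣ 18 := by decide +kernel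
  refine h _ (Nat.mem_divisors.2 ⟨?_, by norm_num⟩) (hG.not_four_dvd_card_centralizer hc)
    (hG.not_five_dvd_card_centralizer hc)
  exact (Subgroup.card_subgroup_dvd_card _).trans hG.card_dvd

end OrderThree

end Condition4

section Counting

lemma ncard_modEq_ncard_fixedPoints {α : Type*} {S : Set α} (hS : S.Finite) {f : α → α}
    (hf : Set.MapsTo f S S) {p : ℕ} [Fact p.Prime] (hfp : ∀ x ∈ S, f^[p] x = x) :
    S.ncard ≡ {x ∈ S | f x = x}.ncard [MOD p] := by
  classical
  have := hS.fintype
  let F : Function.End S := hf.restrict f S S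
  have hiter (n : ℕ) (x : S) : ((F ^ n) x : α) = f^[n] x := by
    induction n with
    | zero => rfl
    | succ n ih => rw [pow_succ', Function.iterate_succ_apply', ← ih]; rfl
  have hpow : F ^ p ^ 1 = 1 := by
    rw [pow_one]
    exact funext fun x => Subtype.ext ((hiter p x).trans (hfp x x.2))
  have himage : {x ∈ S | f x = x} = Subtype.val '' F.fixedPoints := by
    ext x
    simp [F, Function.fixedPoints, Function.IsFixedPt, Subtype.ext_iff, and_comm]
  rw [himage, Set.ncard_image_of_injective _ Subtype.val_injective, ← Nat.card_coe_set_eq,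
    ← Nat.card_coe_set_eq, Nat.card_eq_fintype_card, Nat.card_eq_fintype_card]
  exact Equiv.Perm.card_fixedPoints_modEq hpow

variable {G : Type*} [Group G] [Finite G]

lemma card_le_card_centralizer_mul_ncard {x : G} {S : Set G} (hS : ∀ g, g * x * g⁻¹ ∈ S) :
    Nat.card G ≤ Nat.card (Subgroup.centralizer {x}) * S.ncard := by
  have hcard := Nat.card_congr (MulAction.orbitProdStabilizerEquivGroup (ConjAct G) x)
  rw [Nat.card_prod, Nat.card_congr ConjAct.ofConjAct.toEquiv] at hcard
  rw [← hcard, Subgroup.nat_card_centralizer_nat_card_stabilizer, mul_comm]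
  refine Nat.mul_le_mul_left _ (Set.ncard_le_ncard ?_)
  rintro _ ⟨g, rfl⟩
  exact hS (ConjAct.ofConjAct g)

lemma disjoint_sylow_of_card_eq_prime {p : ℕ} [Fact p.Prime] {P : Sylow p G} (hP : Nat.card P = p) :
    Pairwise (Function.onFun Disjoint fun Q : Sylow p G => (Q : Subgroup G)) := by
  have hcard (Q : Sylow p G) : Nat.card Q = p := (Nat.card_congr (Q.equiv P).toEquiv).trans hP
  intro Q R hQR
  refine disjoint_of_prime_card_of_not_le ((hcard Q).symm ▸ Fact.out) fun hle => hQR ?_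
  exact Sylow.ext (Subgroup.eq_of_le_of_card_ge hle ((hcard R).trans (hcard Q).symm).le)

lemma ncard_orderOf_eq_prime {p : ℕ} [Fact p.Prime] (P : Sylow p G)
    (hdisj : Pairwise (Function.onFun Disjoint fun Q : Sylow p G => (Q : Subgroup G)))
    (hexp : ∀ Q : Sylow p G, ∀ x ∈ Q, x ^ p = 1) :
    {g : G | orderOf g = p}.ncard = Nat.card (Sylow p G) * (Nat.card P - 1) := by
  rw [← ncard_iUnion_diff_one _ hdisj fun Q => Nat.card_congr (Q.equiv P).toEquiv]
  congr 1
  ext g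
  refine ⟨fun hg => ⟨?_, ?_⟩, fun ⟨hg1, Q, hgQ⟩ => orderOf_eq_prime (hexp Q g hgQ) hg1⟩
  · rintro rfl
    exact (Fact.out : p.Prime).ne_one ((orderOf_one (G := G)).symm.trans hg).symm
  · have hpg : IsPGroup p (Subgroup.zpowers g) :=
      IsPGroup.of_card (n := 1) (by rw [Nat.card_zpowers, pow_one]; exact hg)
    obtain ⟨Q, hQ⟩ := hpg.exists_le_sylow
    exact ⟨Q, hQ (Subgroup.mem_zpowers g)⟩

lemma ncard_orderOf_eq_of_card_sylow_eq {p : ℕ} [Fact p.Prime] {P : Sylow p G}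
    (hP : Nat.card P = p) : {g : G | orderOf g = p}.ncard = Nat.card (Sylow p G) * (p - 1) := by
  have h := ncard_orderOf_eq_prime P (disjoint_sylow_of_card_eq_prime hP) fun Q x hx => by
    have hQ : Nat.card Q = p := (Nat.card_congr (Q.equiv P).toEquiv).trans hP
    exact orderOf_dvd_iff_pow_eq_one.1 (((Q : Subgroup G).orderOf_dvd_natCard hx).trans hQ.dvd)
  rwa [hP] at h

end Counting

/-! ### Groups of order dividing 24 -/

lemma conj_eq_or_eq_inv_of_orderOf_eq_three {G : Type*} [Group G] {c g : G} (hc : orderOf c = 3)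
    (h : g * c * g⁻¹ ∈ Subgroup.zpowers c) : g * c * g⁻¹ = c ∨ g * c * g⁻¹ = c⁻¹ := by
  classical
  have hc1 : c ≠ 1 := mt orderOf_eq_one_iff.2 (by omega)
  have hc2 : c ^ 2 = c⁻¹ := by
    rw [eq_inv_iff_mul_eq_one, ← pow_succ]
    exact orderOf_dvd_iff_pow_eq_one.1 hc.dvd
  have hfin : IsOfFinOrder c := orderOf_pos_iff.1 (by omega)
  obtain ⟨k, hk, hck⟩ := (hfin.mem_powers_iff_mem_range_orderOf.1
    (hfin.mem_powers_iff_mem_zpowers.2 h) |> Finset.mem_image.1)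
  rw [Finset.mem_range, hc] at hk
  interval_cases k
  · rw [pow_zero, eq_comm, conj_eq_one_iff] at hck
    exact absurd hck hc1
  · exact Or.inl (by rw [← hck, pow_one])
  · exact Or.inr (by rw [← hck, hc2])

section CentralInvolution

variable {G : Type*} [Group G] [Finite G] {z : G}

lemma ncard_orderOf_eq_three_le_six (hz : orderOf z = 2) (hzc : z ∈ Subgroup.center G) :
    {g : G | orderOf g = 3}.ncard ≤ {g : G | orderOf g = 6}.ncard := by
  refine Set.ncard_le_ncard_of_injOn (· * z) (fun g hg => ?_) (mul_left_injective z).injOn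
  have hcomm : Commute g z := Subgroup.mem_center_iff.1 hzc g
  change orderOf (g * z) = 6
  rw [hcomm.orderOf_mul_eq_mul_orderOf_of_coprime] <;> rw [hz, hg]
  decide

/-- The elements of orders 3 and 6 are at least 16 in number, so the other ones make up `T`. -/
lemma mem_sylow_two_of_sq_eq_one (hcard : Nat.card G = 24) (hn3 : Nat.card (Sylow 3 G) = 4)
    (hz : orderOf z = 2) (hzc : z ∈ Subgroup.center G) (T : Sylow 2 G) {t : G} (ht : t ^ 2 = 1) :
    t ∈ T := by
  have := Fact.mk Nat.prime_two
  have := Fact.mk Nat.prime_three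
  have hT : Nat.card T = 8 := card_sylow_eq_pow T (k := 3) (by rw [hcard]; decide)
    (by rw [hcard]; decide)
  obtain ⟨P⟩ : Nonempty (Sylow 3 G) := inferInstance
  have hP : Nat.card P = 3 := card_sylow_eq_pow P (k := 1) (by rw [hcard]; decide)
    (by rw [hcard]; decide)
  let S : Set G := {g | orderOf g = 3} ∪ {g | orderOf g = 6}
  have hS : 16 ≤ S.ncard := by
    have h3 := ncard_orderOf_eq_of_card_sylow_eq hP
    have h6 := ncard_orderOf_eq_three_le_six hz hzc
    rw [Set.ncard_union_eq (Set.disjoint_left.2 fun g h3 h6 => by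
      change orderOf g = 3 at h3
      change orderOf g = 6 at h6
      omega)]
    omega
  have hsub : (T : Set G) ⊆ Sᶜ := by
    intro g hg hgS
    have h8 : orderOf g ∣ 8 := hT ▸ (T : Subgroup G).orderOf_dvd_natCard hg
    rcases hgS with (h : orderOf g = 3) | (h : orderOf g = 6) <;> · rw [h] at h8; omega
  have heq : (T : Set G) = Sᶜ := by
    refine Set.eq_of_subset_of_ncard_le hsub ?_
    have hcompl := Set.ncard_add_ncard_compl S
    have hT' : (T : Set G).ncard = 8 := hT
    omega
  have htS : t ∈ Sᶜ := by
    rw [← orderOf_dvd_iff_pow_eq_one] at ht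
    rintro ((h : orderOf t = 3) | (h : orderOf t = 6)) <;> · rw [h] at ht; omega
  rwa [← heq] at htS

lemma ncard_sq_eq_one_modEq_two (hz : orderOf z = 2) (hzc : z ∈ Subgroup.center G) :
    {t : G | t ^ 2 = 1}.ncard ≡ 0 [MOD 2] := by
  have := Fact.mk Nat.prime_two
  have hz2 : z ^ 2 = 1 := orderOf_dvd_iff_pow_eq_one.1 hz.dvd
  have hz1 : z ≠ 1 := mt orderOf_eq_one_iff.2 (by omega)
  have hfix : {t ∈ {t : G | t ^ 2 = 1} | t * z = t} = ∅ :=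
    Set.eq_empty_of_forall_notMem fun t ht => hz1 (mul_eq_left.1 ht.2)
  have hmod := ncard_modEq_ncard_fixedPoints (S := {t : G | t ^ 2 = 1}) (Set.toFinite _)
    (f := (· * z)) (p := 2) (fun t ht => by
      have hcomm : Commute t z := Subgroup.mem_center_iff.1 hzc t
      change (t * z) ^ 2 = 1
      rw [hcomm.mul_pow, hz2, mul_one, ht]) fun t _ => by
      change t * z * z = t
      rw [mul_assoc, ← sq, hz2, mul_one]
  rwa [hfix, Set.ncard_empty] at hmod

end CentralInvolution

namespace Condition4

variable {G : Type*} [Group G] [Fintype G]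

lemma card_dvd_twenty_four (hG : Condition4 G) (h5 : ¬ 5 ∣ Nat.card G) (h9 : ¬ 9 ∣ Nat.card G) :
    Nat.card G ∣ 24 := by
  have h : ∀ d ∈ Nat.divisors 360, ¬ 5 ∣ d → ¬ 9 ∣ d → d ∣ 24 := by decide +kernel
  exact h _ (Nat.mem_divisors.2 ⟨hG.card_dvd, by norm_num⟩) h5 h9

lemma card_centralizer_dvd_six (hG : Condition4 G) (h9 : ¬ 9 ∣ Nat.card G) {c : G}
    (hc : orderOf c = 3) : Nat.card (Subgroup.centralizer {c}) ∣ 6 := by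
  have h : ∀ d ∈ Nat.divisors 18, ¬ 9 ∣ d → d ∣ 6 := by decide
  exact h _ (Nat.mem_divisors.2 ⟨hG.card_centralizer_dvd_eighteen hc, by norm_num⟩)
    fun hd => h9 (hd.trans (Subgroup.card_subgroup_dvd_card _))

lemma card_le_two_of_disjoint_of_le_centralizer (hG : Condition4 G) (h9 : ¬ 9 ∣ Nat.card G)
    {c : G} (hc : orderOf c = 3) {N : Subgroup G} (hd : Disjoint N (Subgroup.zpowers c))
    (hN : N ≤ Subgroup.centralizer {c}) : Nat.card N ≤ 2 := by
  have hle : Nat.card (N × Subgroup.zpowers c) ≤ Nat.card (Subgroup.centralizer {c}) :=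
    Nat.card_le_card_of_injective
      (fun x => ⟨x.1 * x.2, mul_mem (hN x.1.2)
        ((Subgroup.zpowers_le.2 (Subgroup.mem_centralizer_singleton_iff.2 rfl)) x.2.2)⟩)
      fun x y hxy => Subgroup.mul_injective_of_disjoint hd (congrArg Subtype.val hxy)
  have h6 := Nat.le_of_dvd (by norm_num) (hG.card_centralizer_dvd_six h9 hc)
  rw [Nat.card_prod, Nat.card_zpowers, hc] at hle
  omega

lemma card_eq_twelve_of_orderOf_eq_four (hG : Condition4 G) (h9 : ¬ 9 ∣ Nat.card G) {c t : G}
    (hc : orderOf c = 3) (hn : (Subgroup.zpowers c).Normal) (ht : orderOf t = 4) :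
    Nat.card G = 12 := by
  have hconj (g : G) : g * c * g⁻¹ ∈ ({c, c⁻¹} : Set G) :=
    conj_eq_or_eq_inv_of_orderOf_eq_three hc (hn.conj_mem c (Subgroup.mem_zpowers c) g)
  have hle := (card_le_card_centralizer_mul_ncard hconj).trans
    (Nat.mul_le_mul_left _ (Set.ncard_insert_le c {c⁻¹}))
  rw [Set.ncard_singleton] at hle
  have h6 := Nat.le_of_dvd (by norm_num) (hG.card_centralizer_dvd_six h9 hc)
  have h12 : 12 ∣ Nat.card G :=
    Nat.Coprime.mul_dvd_of_dvd_of_dvd (m := 3) (n := 4) (by norm_num) (hc ▸ orderOf_dvd_natCard c)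
      (ht ▸ orderOf_dvd_natCard t)
  exact le_antisymm (by omega) (Nat.le_of_dvd Nat.card_pos h12)

lemma orderOf_ne_four_of_normal (hG : Condition4 G) (h9 : ¬ 9 ∣ Nat.card G) {c : G}
    (hc : orderOf c = 3) (hn : (Subgroup.zpowers c).Normal) (t : G) : orderOf t ≠ 4 := by
  intro ht
  refine not_nonempty_iff.2 hG.2.2 (nonempty_mulEquiv_quaternionGroup_three
    (hG.card_eq_twelve_of_orderOf_eq_four h9 hc hn ht) hc ht ?_)
  refine (conj_eq_or_eq_inv_of_orderOf_eq_three hc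
    (hn.conj_mem c (Subgroup.mem_zpowers c) t)).resolve_left fun h => ?_
  have hle := hG.orderOf_mul_orderOf_le_six (x := t) (y := c) (mul_inv_eq_iff_eq_mul.1 h)
    (by rw [hc, ht]; norm_num)
  rw [hc, ht] at hle
  omega

lemma sq_eq_one_of_mem_sylow (hG : Condition4 G) {T : Sylow 2 G} {t : G} (ht : t ∈ T)
    (h4 : orderOf t ≠ 4) : t ^ 2 = 1 := by
  have := Fact.mk Nat.prime_two
  obtain ⟨k, hk⟩ := exists_orderOf_eq_pow_of_mem_sylow T ht
  have h6 := hG.orderOf_le_six t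
  rw [hk] at h4 h6
  have hk3 : k < 3 := by
    by_contra! h
    have := Nat.pow_le_pow_right two_pos h
    omega
  rw [← orderOf_dvd_iff_pow_eq_one, hk]
  interval_cases k
  · exact one_dvd 2
  · exact dvd_rfl
  · exact absurd rfl h4

section CardTwentyFour

variable {c z : G}

lemma eq_one_or_eq_of_commute (hG : Condition4 G) (h9 : ¬ 9 ∣ Nat.card G) (hc : orderOf c = 3)
    (hz : orderOf z = 2) (hzc : Commute c z) {t : G} (ht : t ^ 2 = 1) (htc : Commute t c) :
    t = 1 ∨ t = z := by
  classical
  have hcz : orderOf (c * z) = 6 := by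
    rw [hzc.orderOf_mul_eq_mul_orderOf_of_coprime] <;> rw [hc, hz]
    decide
  have hcent : Subgroup.zpowers (c * z) = Subgroup.centralizer {c} := by
    refine Subgroup.eq_of_le_of_card_ge (Subgroup.zpowers_le.2 ?_) ?_
    · exact Subgroup.mem_centralizer_singleton_iff.2 ((Commute.refl c).mul_right hzc).symm
    · rw [Nat.card_zpowers, hcz]
      exact Nat.le_of_dvd (by norm_num) (hG.card_centralizer_dvd_six h9 hc)
  have htcz : t ∈ Subgroup.zpowers (c * z) := hcent ▸ Subgroup.mem_centralizer_singleton_iff.2 htc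
  rw [mem_zpowers_iff_mem_range_orderOf, hcz] at htcz
  obtain ⟨k, hk, rfl⟩ := Finset.mem_image.1 htcz
  rw [← pow_mul, ← orderOf_dvd_iff_pow_eq_one, hcz] at ht
  obtain rfl | rfl : k = 0 ∨ k = 3 := by
    have := Finset.mem_range.1 hk
    omega
  · exact Or.inl (pow_zero _)
  · have hc3 : c ^ 3 = 1 := orderOf_dvd_iff_pow_eq_one.1 hc.dvd
    have hz2 : z ^ 2 = 1 := orderOf_dvd_iff_pow_eq_one.1 hz.dvd
    exact Or.inr (by rw [hzc.mul_pow, hc3, one_mul, pow_succ, hz2, one_mul])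

lemma ncard_sq_eq_one_modEq_three (hG : Condition4 G) (h9 : ¬ 9 ∣ Nat.card G)
    (hc : orderOf c = 3) (hz : orderOf z = 2) (hzc : z ∈ Subgroup.center G) :
    {t : G | t ^ 2 = 1}.ncard ≡ 2 [MOD 3] := by
  have := Fact.mk Nat.prime_three
  have hz1 : z ≠ 1 := mt orderOf_eq_one_iff.2 (by omega)
  have hcz : Commute c z := Subgroup.mem_center_iff.1 hzc c
  have hfix : {t ∈ {t : G | t ^ 2 = 1} | c * t * c⁻¹ = t} = {1, z} := by
    ext t
    refine ⟨fun ht => hG.eq_one_or_eq_of_commute h9 hc hz hcz ht.1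
      (mul_inv_eq_iff_eq_mul.1 ht.2).symm, ?_⟩
    rintro (rfl | rfl)
    · simp
    · exact ⟨orderOf_dvd_iff_pow_eq_one.1 hz.dvd, mul_inv_eq_iff_eq_mul.2 hcz.eq⟩
  have hmod := ncard_modEq_ncard_fixedPoints (S := {t : G | t ^ 2 = 1}) (Set.toFinite _)
    (f := fun t => c * t * c⁻¹) (p := 3) (fun t ht => by
      change (c * t * c⁻¹) ^ 2 = 1
      rw [conj_pow, ht, mul_one, mul_inv_cancel]) fun t _ => by
      have hc3 : c ^ 3 = 1 := orderOf_dvd_iff_pow_eq_one.1 hc.dvd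
      calc c * (c * (c * t * c⁻¹) * c⁻¹) * c⁻¹ = c ^ 3 * t * (c ^ 3)⁻¹ := by
            simp only [pow_three, mul_inv_rev, mul_assoc]
        _ = t := by rw [hc3, one_mul, inv_one, mul_one]
  rwa [hfix, Set.ncard_pair hz1.symm] at hmod

lemma sq_eq_one_of_mem_sylow_of_card_eq_twenty_four (hG : Condition4 G)
    (hcard : Nat.card G = 24) (hn3 : Nat.card (Sylow 3 G) = 4) (hz : orderOf z = 2)
    (hzc : z ∈ Subgroup.center G) (T : Sylow 2 G) {t : G} (ht : t ∈ T) : t ^ 2 = 1 := by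
  have := Fact.mk Nat.prime_two
  have := Fact.mk Nat.prime_three
  obtain ⟨c, hc⟩ := exists_prime_orderOf_dvd_card' (G := G) 3 (by rw [hcard]; decide)
  have hT : Nat.card T = 8 := card_sylow_eq_pow T (k := 3) (by rw [hcard]; decide)
    (by rw [hcard]; decide)
  have hz1 : z ≠ 1 := mt orderOf_eq_one_iff.2 (by omega)
  have hz2 : z ^ 2 = 1 := orderOf_dvd_iff_pow_eq_one.1 hz.dvd
  have hsub : {t : G | t ^ 2 = 1} ⊆ T := fun t => mem_sylow_two_of_sq_eq_one hcard hn3 hz hzc T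
  obtain ⟨s, -, hs, hsz⟩ := hG.exists_mem_orderOf_eq_two_ne hT (hsub hz2) hz1
  have hs1 : s ≠ 1 := mt orderOf_eq_one_iff.2 (by omega)
  have h3 : 3 ≤ {t : G | t ^ 2 = 1}.ncard := by
    rw [← Set.ncard_eq_three.2 ⟨1, z, s, hz1.symm, hs1.symm, hsz.symm, rfl⟩]
    refine Set.ncard_le_ncard ?_
    rintro _ (rfl | rfl | rfl)
    exacts [one_pow 2, hz2, orderOf_dvd_iff_pow_eq_one.1 hs.dvd]
  have hmod2 := ncard_sq_eq_one_modEq_two hz hzc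
  have hmod3 := hG.ncard_sq_eq_one_modEq_three (by rw [hcard]; decide) hc hz hzc
  have hT' : (T : Set G).ncard = 8 := hT
  have heq := Set.eq_of_subset_of_ncard_le hsub (by
    unfold Nat.ModEq at hmod2 hmod3
    omega)
  exact heq.symm.subset ht

end CardTwentyFour

end Condition4

lemma le_center_of_card_eq_two {G : Type*} [Group G] {N : Subgroup G} [hN : N.Normal]
    (hcard : Nat.card N = 2) : N ≤ Subgroup.center G := by
  obtain ⟨y, -, hy⟩ := (Nat.card_eq_two_iff' (1 : N)).1 hcard
  intro z hz
  rw [Subgroup.mem_center_iff]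
  intro g
  by_cases hz1 : z = 1
  · rw [hz1, mul_one, one_mul]
  · have hzy := hy ⟨z, hz⟩ fun h => hz1 (congrArg Subtype.val h)
    have hgzy := hy ⟨g * z * g⁻¹, hN.conj_mem z hz g⟩ fun h =>
      hz1 (conj_eq_one_iff.1 (congrArg Subtype.val h))
    exact mul_inv_eq_iff_eq_mul.1 (congrArg Subtype.val (hgzy.trans hzy.symm))

section SylowThreeOfCardThree

variable {G : Type*} [Group G] [Finite G] {P : Sylow 3 G} {z : G}

lemma card_sylow_three_eq_one_or_four (h24 : Nat.card G ∣ 24) (hP : Nat.card P = 3) :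
    Nat.card (Sylow 3 G) = 1 ∨ Nat.card (Sylow 3 G) = 4 := by
  have := Fact.mk Nat.prime_three
  have hindex : (P : Subgroup G).index ∣ 8 := by
    refine Nat.dvd_of_mul_dvd_mul_left (k := 3) (by norm_num) ?_
    have hmul := (P : Subgroup G).card_mul_index
    rw [hP] at hmul
    exact hmul ▸ h24
  have h : ∀ d ∈ Nat.divisors 8, d ≡ 1 [MOD 3] → d = 1 ∨ d = 4 := by decide
  exact h _ (Nat.mem_divisors.2 ⟨P.card_dvd_index.trans hindex, by norm_num⟩)
    (card_sylow_modEq_one 3 G)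

lemma card_eq_twenty_four_of_card_sylow_three (h24 : Nat.card G ∣ 24) (hP : Nat.card P = 3)
    (hn3 : Nat.card (Sylow 3 G) = 4) (hz : orderOf z = 2) (hzc : z ∈ Subgroup.center G) :
    Nat.card G = 24 := by
  have := Fact.mk Nat.prime_three
  set N := Subgroup.normalizer (P : Set G)
  have hN3 : 3 ∣ Nat.card N := hP ▸ Subgroup.card_dvd_of_le Subgroup.le_normalizer
  have hN2 : 2 ∣ Nat.card N := hz ▸ N.orderOf_dvd_natCard (Subgroup.center_le_normalizer _ hzc)
  have hindex : N.index = 4 := by rw [← hn3, P.card_eq_index_normalizer]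
  have h := N.card_mul_index
  rw [hindex] at h
  have hle := Nat.le_of_dvd (by norm_num) h24
  have hpos : 0 < Nat.card N := Nat.card_pos
  omega

end SylowThreeOfCardThree

namespace Condition4

variable {G : Type*} [Group G] [Fintype G] {P : Sylow 3 G} {z : G}

lemma sq_eq_one_of_mem_sylow_of_card_sylow_three (hG : Condition4 G) (h24 : Nat.card G ∣ 24)
    (hP : Nat.card P = 3) (hz : orderOf z = 2) (hzc : z ∈ Subgroup.center G) (T : Sylow 2 G) {t : G}
    (ht : t ∈ T) : t ^ 2 = 1 := by
  have := Fact.mk Nat.prime_three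
  rcases card_sylow_three_eq_one_or_four h24 hP with h1 | h4
  · obtain ⟨c, hcP⟩ := exists_prime_orderOf_dvd_card' (G := P) 3 hP.symm.dvd
    have hc : orderOf (c : G) = 3 := by rwa [Subgroup.orderOf_coe]
    have hPc : Subgroup.zpowers (c : G) = P :=
      Subgroup.eq_of_le_of_card_ge (Subgroup.zpowers_le.2 c.2) (by
        rw [Nat.card_zpowers, hc]; exact hP.le)
    have h9 : ¬ 9 ∣ Nat.card G := fun h9 => absurd (h9.trans h24) (by decide)
    have hn : (Subgroup.zpowers (c : G)).Normal := by
      rw [hPc]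
      exact sylow_normal_of_card_eq_one P h1
    exact hG.sq_eq_one_of_mem_sylow ht (hG.orderOf_ne_four_of_normal h9 hc hn t)
  · exact hG.sq_eq_one_of_mem_sylow_of_card_eq_twenty_four
      (card_eq_twenty_four_of_card_sylow_three h24 hP h4 hz hzc) h4 hz hzc T ht

/-- If the subgroup of index at most 4 has nontrivial core, then this core is generated by a central
involution, which is avoided by a subgroup of index 2. -/
lemma embedsInS6_of_card_sylow_three_eq_three (hG : Condition4 G) (h24 : Nat.card G ∣ 24)
    (hP : Nat.card P = 3) : EmbedsInS6 G := by
  have := Fact.mk Nat.prime_two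
  have := Fact.mk Nat.prime_three
  obtain ⟨M, hindex, hdisj, hcent⟩ := exists_index_le_max_of_card_sylow_prime P hP
  have hM : M.index ≤ 4 := by
    rcases card_sylow_three_eq_one_or_four h24 hP with h | h <;> · rw [h] at hindex; omega
  by_cases hcore : M.normalCore = ⊥
  · exact .of_index_le M (hM.trans (by norm_num)) hcore
  obtain ⟨c, hcP⟩ := exists_prime_orderOf_dvd_card' (G := P) 3 hP.symm.dvd
  have hc : orderOf (c : G) = 3 := by rwa [Subgroup.orderOf_coe]
  have hcard : Nat.card M.normalCore = 2 := by
    have hle := hG.card_le_two_of_disjoint_of_le_centralizer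
      (fun h9 => absurd (h9.trans h24) (by decide)) hc
      (hdisj.mono_right (Subgroup.zpowers_le.2 c.2))
      (hcent.trans (Subgroup.centralizer_le (Set.singleton_subset_iff.2 c.2)))
    have hlt := (Subgroup.one_lt_card_iff_ne_bot _).2 hcore
    omega
  obtain ⟨z, hz⟩ := exists_prime_orderOf_dvd_card' 2 hcard.symm.dvd
  rw [← Subgroup.orderOf_coe] at hz
  have hzc : (z : G) ∈ Subgroup.center G := le_center_of_card_eq_two hcard z.2
  obtain ⟨T⟩ : Nonempty (Sylow 2 G) := inferInstance
  have hzT : (z : G) ∈ T :=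
    mem_sylow_of_mem_normalizer T (k := 1) hz (Subgroup.center_le_normalizer _ hzc)
  obtain ⟨H, hH, hzH⟩ := exists_index_le_two_of_sq_eq_one T
    (fun t => hG.sq_eq_one_of_mem_sylow_of_card_sylow_three h24 hP hz hzc T) hzc hzT
    (mt orderOf_eq_one_iff.2 (by omega))
  refine .of_index_add_index_le M H (by omega) ?_
  rw [← disjoint_iff]
  refine disjoint_of_prime_card_of_not_le (hcard ▸ Nat.prime_two) fun hle => hzH ?_
  exact H.normalCore_le (hle z.2)

end Condition4

/-! ### Sylow 3-subgroups of order 9 -/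

lemma card_le_card_sylow_of_disjoint {G : Type*} [Group G] [Finite G] {p : ℕ} [Fact p.Prime]
    (P : Sylow p G)
    (hdisj : Pairwise (Function.onFun Disjoint fun Q : Sylow p G => (Q : Subgroup G)))
    (h1 : Nat.card (Sylow p G) ≠ 1) : Nat.card P ≤ Nat.card (Sylow p G) := by
  have : Nontrivial (Sylow p G) := by
    rw [← Finite.one_lt_card_iff_nontrivial]
    have := Nat.card_pos (α := Sylow p G)
    omega
  obtain ⟨R, hRP⟩ := exists_ne P
  refine Nat.card_le_card_of_injective (fun x : P => (x : G) • R) fun x y hxy => ?_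
  have hfix : ((x⁻¹ * y : P) : G) • R = R := by
    rw [Subgroup.coe_mul, Subgroup.coe_inv, mul_smul, inv_smul_eq_iff]
    exact hxy.symm
  obtain ⟨k, hk⟩ := exists_orderOf_eq_pow_of_mem_sylow P (x⁻¹ * y).2
  have hmem := mem_sylow_of_mem_normalizer R hk (Sylow.smul_eq_iff_mem_normalizer.1 hfix)
  have hone := (hdisj hRP.symm).le_bot ⟨(x⁻¹ * y).2, hmem⟩
  exact inv_mul_eq_one.1 (Subtype.ext (Subgroup.mem_bot.1 hone))

lemma commute_of_card_eq_prime_sq {G : Type*} [Group G] {p : ℕ} [Fact p.Prime] {H : Subgroup G}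
    (hH : Nat.card H = p ^ 2) {x y : G} (hx : x ∈ H) (hy : y ∈ H) : Commute x y :=
  have := IsPGroup.isMulCommutative_of_card_eq_prime_sq hH
  congrArg Subtype.val (mul_comm' (⟨x, hx⟩ : H) ⟨y, hy⟩)

namespace Condition4

section SylowThreeOfCardNine

variable {G : Type*} [Group G] [Fintype G] {Q : Sylow 3 G}

lemma pow_three_eq_one_of_mem_sylow (hG : Condition4 G) {x : G} (hx : x ∈ Q) : x ^ 3 = 1 := by
  have := Fact.mk Nat.prime_three
  obtain ⟨k, hk⟩ := exists_orderOf_eq_pow_of_mem_sylow Q hx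
  have h6 := hG.orderOf_le_six x
  have hk2 : k < 2 := by
    by_contra! h
    have := Nat.pow_le_pow_right three_pos h
    omega
  rw [← orderOf_dvd_iff_pow_eq_one, hk]
  interval_cases k <;> decide

lemma orderOf_eq_three_of_mem_sylow (hG : Condition4 G) {x : G} (hx : x ∈ Q) (hx1 : x ≠ 1) :
    orderOf x = 3 :=
  have := Fact.mk Nat.prime_three
  orderOf_eq_prime (hG.pow_three_eq_one_of_mem_sylow hx) hx1

lemma orderOf_ne_two_of_mem_centralizer (hG : Condition4 G) (hQ : Nat.card Q = 9) {z : G}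
    (hz : z ∈ Subgroup.centralizer (Q : Set G)) : orderOf z ≠ 2 := by
  intro hz2
  obtain ⟨_, _, _, ρ, hρ, _⟩ := hG.1
  obtain ⟨n, hn⟩ := hρ.exists_prime_mul_exponent_eq Nat.prime_two Nat.prime_three (by norm_num)
    (Subgroup.zpowers z) Q (by rw [Nat.card_zpowers, hz2])
    (fun _ => hG.pow_three_eq_one_of_mem_sylow) fun c hc e he => by
      obtain ⟨k, rfl⟩ := Subgroup.mem_zpowers_iff.1 hc
      exact (show Commute z e from (hz e he).symm).zpow_left k
  have hQ' : Nat.card (Q : Subgroup G) = 9 := hQ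
  simp only [hQ', mathieuCharNat] at hn
  omega

lemma centralizer_sylow_three_le (hG : Condition4 G) (hQ : Nat.card Q = 9) :
    Subgroup.centralizer (Q : Set G) ≤ Q := by
  have := Fact.mk Nat.prime_three
  intro y hy
  obtain ⟨x, hx⟩ := exists_prime_orderOf_dvd_card' (G := Q) 3 (by rw [hQ]; norm_num)
  rw [← Subgroup.orderOf_coe] at hx
  have hy6 := hG.orderOf_le_six y
  have hpos := orderOf_pos y
  by_cases h3 : 3 ∣ orderOf y
  · obtain h | h : orderOf y = 3 ∨ orderOf y = 6 := by omega
    · exact mem_sylow_of_mem_normalizer Q (k := 1) h (Subgroup.centralizer_le_normalizer _ hy)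
    · refine absurd ?_ (hG.orderOf_ne_two_of_mem_centralizer hQ (pow_mem hy 3))
      rw [orderOf_pow, h]
      rfl
  · have hle := hG.orderOf_mul_orderOf_le_six (hy x x.2)
      (by rwa [hx, Nat.prime_three.coprime_iff_not_dvd])
    rw [hx] at hle
    have hy2 := hG.orderOf_ne_two_of_mem_centralizer hQ hy
    rw [orderOf_eq_one_iff.1 (by omega : orderOf y = 1)]
    exact Q.one_mem

lemma disjoint_sylow_three (hG : Condition4 G) (hQ : Nat.card Q = 9) :
    Pairwise (Function.onFun Disjoint fun P : Sylow 3 G => (P : Subgroup G)) := by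
  have := Fact.mk Nat.prime_three
  have hcard (P : Sylow 3 G) : Nat.card P = 9 := (Nat.card_congr (P.equiv Q).toEquiv).trans hQ
  intro P R hPR
  refine disjoint_iff_inf_le.2 fun c hc => ?_
  by_contra hc1
  have hle (S : Sylow 3 G) (hcS : c ∈ S) : (S : Subgroup G) ≤ Subgroup.centralizer {c} :=
    fun x hx => Subgroup.mem_centralizer_singleton_iff.2
      (commute_of_card_eq_prime_sq (p := 3) (hcard S) hx hcS)
  have hnorm : Subgroup.centralizer {c} ≤ Subgroup.normalizer (P : Set G) := by
    refine le_normalizer_of_card_le_two_mul (hle P hc.1) ?_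
    have h18 := hG.card_centralizer_dvd_eighteen (hG.orderOf_eq_three_of_mem_sylow hc.1 hc1)
    exact (Nat.le_of_dvd (by norm_num) h18).trans (by rw [hcard P])
  refine hPR (Sylow.ext (Subgroup.eq_of_le_of_card_ge (fun x hx => ?_) ?_)).symm
  · obtain ⟨k, hk⟩ := exists_orderOf_eq_pow_of_mem_sylow R hx
    exact mem_sylow_of_mem_normalizer P hk (hnorm (hle R hc.2 hx))
  · exact ((hcard P).trans (hcard R).symm).le

end SylowThreeOfCardNine

end Condition4

section ConjugateSubgroups

open scoped Pointwise

variable {G : Type*} [Group G]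

lemma index_normalizer_le_ncard {R : Subgroup G} {S : Set (Subgroup G)} (hSfin : S.Finite)
    (hS : ∀ g : G, ConjAct.toConjAct g • R ∈ S) :
    (Subgroup.normalizer (R : Set G)).index ≤ S.ncard := by
  let act : MulAction G (Subgroup G) :=
    MulAction.compHom (Subgroup G) (ConjAct.toConjAct : G ≃* ConjAct G).toMonoidHom
  have hstab : MulAction.stabilizer G R = Subgroup.normalizer (R : Set G) := by
    ext g
    exact Subgroup.conjAct_pointwise_smul_iff
  rw [← hstab, MulAction.index_stabilizer]
  refine Set.ncard_le_ncard ?_ hSfin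
  rintro _ ⟨g, rfl⟩
  exact hS g

lemma sup_inf_le_of_le_normalizer {Q R S : Subgroup G} (hRQ : R ≤ Q) (hd : Disjoint Q S)
    (hS : S ≤ Subgroup.normalizer (R : Set G)) : (R ⊔ S) ⊓ Q ≤ R := by
  rintro x ⟨hx, hxQ⟩
  change x ∈ ((R ⊔ S : Subgroup G) : Set G) at hx
  rw [Subgroup.coe_mul_of_right_le_normalizer_left R S hS] at hx
  obtain ⟨r, hr, s, hs, rfl⟩ := Set.mem_mul.1 hx
  have hs1 : s ∈ Q ⊓ S := ⟨(Q.mul_mem_cancel_left (hRQ hr)).1 hxQ, hs⟩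
  rw [Subgroup.mem_bot.1 (hd.le_bot hs1), mul_one]
  exact hr

variable [Finite G]

lemma card_mul_card_le_card_sup {R S : Subgroup G} (hd : Disjoint R S) :
    Nat.card R * Nat.card S ≤ Nat.card (R ⊔ S : Subgroup G) := by
  rw [← Nat.card_prod]
  exact Nat.card_le_card_of_injective (fun x => ⟨x.1 * x.2, Subgroup.mul_mem_sup x.1.2 x.2.2⟩)
    fun x y hxy => Subgroup.mul_injective_of_disjoint hd (congrArg Subtype.val hxy)

lemma exists_index_le_inf_le {Q T R : Subgroup G} (hT : Q.IsComplement' T) (hRQ : R ≤ Q) :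
    ∃ H : Subgroup G, H.index ≤ R.relIndex Q * (Subgroup.normalizer (R : Set G)).index ∧
      H ⊓ Q ≤ R := by
  set N := Subgroup.normalizer (R : Set G)
  refine ⟨R ⊔ N ⊓ T, ?_, sup_inf_le_of_le_normalizer hRQ
    (hT.disjoint.mono_right inf_le_right) inf_le_left⟩
  have hG : Nat.card G ≤ Nat.card (R ⊔ N ⊓ T : Subgroup G) * (R.relIndex Q * N.index) :=
    calc Nat.card G = Nat.card R * R.relIndex Q * (Nat.card (N ⊓ T : Subgroup G) *
          (N ⊓ T).relIndex T) := by
          rw [card_mul_relIndex_of_le hRQ, card_mul_relIndex_of_le inf_le_right, hT.card_mul_card]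
      _ = Nat.card R * Nat.card (N ⊓ T : Subgroup G) * (R.relIndex Q * N.relIndex T) := by
          rw [Subgroup.inf_relIndex_right]
          ring
      _ ≤ _ := by
          gcongr
          · exact card_mul_card_le_card_sup (hT.disjoint.mono hRQ inf_le_right)
          · rw [← N.relIndex_top_right]
            exact Subgroup.relIndex_le_of_le_right le_top (by
              rw [N.relIndex_top_right]
              exact Subgroup.index_ne_zero_of_finite)
  rw [← (R ⊔ N ⊓ T).card_mul_index] at hG
  exact Nat.le_of_mul_le_mul_left hG Nat.card_pos

end ConjugateSubgroups

section ElementaryAbelian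

variable {G : Type*} [Group G]

lemma mem_normalizer_zpowers {s q : G} (h : s * q * s⁻¹ = q ∨ s * q * s⁻¹ = q⁻¹) :
    s ∈ Subgroup.normalizer (Subgroup.zpowers q : Set G) := by
  rw [Subgroup.mem_normalizer_iff_map_conj_eq, MonoidHom.map_zpowers]
  change Subgroup.zpowers (s * q * s⁻¹) = _
  rcases h with h | h <;> rw [h]
  exact Subgroup.zpowers_inv

lemma exists_ne_one_conj_eq_or_eq_inv {Q : Subgroup G} [hQn : Q.Normal] (hQ : Q ≠ ⊥)
    (hcomm : ∀ x ∈ Q, ∀ y ∈ Q, Commute x y) {s : G} (hs : s ^ 2 = 1) :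
    ∃ q ∈ Q, q ≠ 1 ∧ (s * q * s⁻¹ = q ∨ s * q * s⁻¹ = q⁻¹) := by
  have hconj {q : G} (hq : q ∈ Q) : s * q * s⁻¹ ∈ Q := hQn.conj_mem q hq s
  by_cases h : ∀ q ∈ Q, q * (s * q * s⁻¹) = 1
  · obtain ⟨q, hq, hq1⟩ := Q.bot_or_exists_ne_one.resolve_left hQ
    exact ⟨q, hq, hq1, Or.inr (eq_inv_of_mul_eq_one_right (h q hq))⟩
  · push Not at h
    obtain ⟨q, hq, hq1⟩ := h
    refine ⟨_, Q.mul_mem hq (hconj hq), hq1, Or.inl ?_⟩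
    have hss : s * s = 1 := by rw [← sq, hs]
    calc s * (q * (s * q * s⁻¹)) * s⁻¹
      _ = s * q * s⁻¹ * (s * s * q * (s * s)⁻¹) := by group
      _ = s * q * s⁻¹ * q := by rw [hss, one_mul, inv_one, mul_one]
      _ = q * (s * q * s⁻¹) := hcomm _ (hconj hq) _ hq

lemma ncard_subgroup_card_prime_mul [Finite G] {p : ℕ} [Fact p.Prime] {Q : Subgroup G}
    (hexp : ∀ x ∈ Q, x ^ p = 1) :
    {R : Subgroup G | R ≤ Q ∧ Nat.card R = p}.ncard * (p - 1) = Nat.card Q - 1 := by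
  let L : Set (Subgroup G) := {R | R ≤ Q ∧ Nat.card R = p}
  have hdisj : Pairwise (Function.onFun Disjoint fun R : L => (R : Subgroup G)) := by
    intro R S hRS
    refine disjoint_of_prime_card_of_not_le (R.2.2.symm ▸ Fact.out) fun hle => hRS ?_
    exact Subtype.ext (Subgroup.eq_of_le_of_card_ge hle (S.2.2.trans R.2.2.symm).le)
  have hunion : {g : G | g ≠ 1 ∧ ∃ R : L, g ∈ (R : Subgroup G)} = (Q : Set G) \ {1} := by
    ext g
    constructor
    · rintro ⟨hg1, R, hgR⟩
      exact ⟨R.2.1 hgR, hg1⟩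
    · rintro ⟨hgQ, hg1⟩
      have hcard : Nat.card (Subgroup.zpowers g) = p := by
        rw [Nat.card_zpowers, orderOf_eq_prime (hexp g hgQ) hg1]
      exact ⟨hg1, ⟨Subgroup.zpowers g, Subgroup.zpowers_le.2 hgQ, hcard⟩, Subgroup.mem_zpowers g⟩
  have hcount := ncard_iUnion_diff_one _ hdisj fun R => R.2.2
  rw [hunion, Set.ncard_sdiff_singleton_of_mem Q.one_mem, Nat.card_coe_set_eq] at hcount
  exact hcount.symm

lemma eq_bot_of_disjoint_of_centralizer_le {Q N : Subgroup G} [Q.Normal] [N.Normal]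
    (hQ : Subgroup.centralizer (Q : Set G) ≤ Q) (hd : Disjoint N Q) : N = ⊥ := by
  refine hd.eq_bot_of_le ((le_centralizer_of_disjoint ?_ hd).trans hQ)
  rw [Subgroup.normalizer_eq_top]
  exact le_top

end ElementaryAbelian

section Complement

variable {G : Type*} [Group G] [Finite G] {Q T R R₁ R₂ : Subgroup G}

lemma embedsInS6_of_index_normalizer_eq_two [Q.Normal]
    (hQ : Subgroup.centralizer (Q : Set G) ≤ Q) (hT : Q.IsComplement' T) (hRQ : R ≤ Q)
    (hR : (Nat.card R).Prime) (hRQ3 : R.relIndex Q = 3)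
    (hindex : (Subgroup.normalizer (R : Set G)).index = 2) : EmbedsInS6 G := by
  obtain ⟨H, hH, hHQ⟩ := exists_index_le_inf_le hT hRQ
  refine .of_index_le H (by rwa [hRQ3, hindex] at hH)
    (eq_bot_of_disjoint_of_centralizer_le hQ ?_)
  have hle : H.normalCore ⊓ Q ≤ R := (inf_le_inf_right Q H.normalCore_le).trans hHQ
  by_contra hd
  have hRcore : R ≤ H.normalCore ⊓ Q := by
    by_contra hn
    exact hd (disjoint_iff_inf_le.2
      (((le_inf hle le_rfl).trans (disjoint_of_prime_card_of_not_le hR hn).le_bot)))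
  have hnormal : R.Normal := le_antisymm hle hRcore ▸ inferInstance
  rw [Subgroup.normalizer_eq_top, Subgroup.index_top] at hindex
  omega

lemma embedsInS6_of_normal_of_normal [Q.Normal]
    (hQ : Subgroup.centralizer (Q : Set G) ≤ Q) (hT : Q.IsComplement' T)
    [R₁.Normal] [R₂.Normal] (h₁ : R₁ ≤ Q) (h₂ : R₂ ≤ Q) (hd : Disjoint R₁ R₂)
    (h₁3 : R₁.relIndex Q = 3) (h₂3 : R₂.relIndex Q = 3) : EmbedsInS6 G := by
  obtain ⟨H₁, hH₁, hHQ₁⟩ := exists_index_le_inf_le hT h₁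
  obtain ⟨H₂, hH₂, hHQ₂⟩ := exists_index_le_inf_le hT h₂
  rw [Subgroup.normalizer_eq_top, Subgroup.index_top] at hH₁ hH₂
  refine .of_index_add_index_le H₁ H₂ (by omega) (eq_bot_of_disjoint_of_centralizer_le hQ ?_)
  refine disjoint_iff_inf_le.2 (le_trans (le_inf ?_ ?_) hd.le_bot)
  · exact (inf_le_inf_right Q (inf_le_left.trans H₁.normalCore_le)).trans hHQ₁
  · exact (inf_le_inf_right Q (inf_le_right.trans H₂.normalCore_le)).trans hHQ₂

end Complement

section NormalAbelian

open scoped Pointwise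

variable {G : Type*} [Group G] {Q T R : Subgroup G}

lemma le_normalizer_of_forall_commute (hcomm : ∀ x ∈ Q, ∀ y ∈ Q, Commute x y) (hR : R ≤ Q) :
    Q ≤ Subgroup.normalizer (R : Set G) := fun x hx =>
  Subgroup.centralizer_le_normalizer _ fun y hy => (hcomm x hx y (hR hy)).symm

lemma smul_mem_subgroup_card [hQn : Q.Normal] {m : ℕ} (g : ConjAct G)
    (hR : R ≤ Q ∧ Nat.card R = m) : g • R ≤ Q ∧ Nat.card (g • R : Subgroup G) = m := by
  refine ⟨?_, (Nat.card_congr (Subgroup.equivSMul _ R).toEquiv).symm.trans hR.2⟩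
  rw [← hQn.conjAct g]
  exact Subgroup.pointwise_smul_le_pointwise_smul_iff.2 hR.1

lemma mem_normalizer_smul (hT : Q.IsComplement' T) {z : G} (hz : ∀ t ∈ T, Commute z t)
    (hQR : Q ≤ Subgroup.normalizer (R : Set G)) (hzR : z ∈ Subgroup.normalizer (R : Set G))
    (g : G) :
    z ∈ Subgroup.normalizer ((ConjAct.toConjAct g • R : Subgroup G) : Set G) := by
  obtain ⟨⟨q, t⟩, hqt⟩ := hT.2 g⁻¹
  have hconj : g⁻¹ * z * g = q * z * (q : G)⁻¹ :=
    calc g⁻¹ * z * g = q * t * z * (q * t : G)⁻¹ := by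
          rw [show (q * t : G) = g⁻¹ from hqt, inv_inv]
      _ = q * (t * z * (t : G)⁻¹) * (q : G)⁻¹ := by group
      _ = q * z * (q : G)⁻¹ := by rw [← (hz t t.2).eq, mul_inv_cancel_right]
  have hmem : g⁻¹ * z * g ∈ Subgroup.normalizer (R : Set G) := by
    rw [hconj]
    exact mul_mem (mul_mem (hQR q.2) hzR) (inv_mem (hQR q.2))
  rw [← Subgroup.conjAct_pointwise_smul_iff] at hmem ⊢
  rw [ConjAct.toConjAct_mul, ConjAct.toConjAct_mul, ConjAct.toConjAct_inv, mul_smul, mul_smul,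
    inv_smul_eq_iff] at hmem
  exact hmem

lemma mem_normalizer_of_ncard_le_index [Finite G] [Q.Normal] (hT : Q.IsComplement' T)
    (hcomm : ∀ x ∈ Q, ∀ y ∈ Q, Commute x y) {m : ℕ} {z : G} (hz : ∀ t ∈ T, Commute z t)
    (hRQ : R ≤ Q) (hR : Nat.card R = m) (hzR : z ∈ Subgroup.normalizer (R : Set G))
    (hindex : {S : Subgroup G | S ≤ Q ∧ Nat.card S = m}.ncard ≤
      (Subgroup.normalizer (R : Set G)).index) {S : Subgroup G} (hSQ : S ≤ Q)
    (hS : Nat.card S = m) : z ∈ Subgroup.normalizer (S : Set G) := by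
  let L : Set (Subgroup G) := {S | S ≤ Q ∧ Nat.card S = m}
  have horbit : (Subgroup.normalizer (R : Set G)).index ≤
      {S ∈ L | z ∈ Subgroup.normalizer (S : Set G)}.ncard :=
    index_normalizer_le_ncard (Set.toFinite _) fun g => ⟨smul_mem_subgroup_card _ ⟨hRQ, hR⟩,
      mem_normalizer_smul hT hz (le_normalizer_of_forall_commute hcomm hRQ) hzR g⟩
  have hL := Set.eq_of_subset_of_ncard_le (Set.sep_subset L _) (hindex.trans horbit)
  have hSL : S ∈ L := ⟨hSQ, hS⟩
  rw [← hL] at hSL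
  exact hSL.2

end NormalAbelian

section CardDvdSeventyTwo

variable {G : Type*} [Group G] {Q : Sylow 3 G} {T R : Subgroup G}

lemma index_dvd_eight (h72 : Nat.card G ∣ 72) (hQ : Nat.card Q = 9) :
    (Q : Subgroup G).index ∣ 8 := by
  rw [← (Q : Subgroup G).card_mul_index, hQ] at h72
  exact Nat.dvd_of_mul_dvd_mul_left (k := 9) (by norm_num) h72

lemma index_normalizer_dvd_eight (h72 : Nat.card G ∣ 72) (hQ : Nat.card Q = 9)
    (hR : R ≤ Q) : (Subgroup.normalizer (R : Set G)).index ∣ 8 := by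
  have := Fact.mk Nat.prime_three
  exact (Subgroup.index_dvd_of_le (le_normalizer_of_forall_commute
    (fun _ hx _ => commute_of_card_eq_prime_sq (p := 3) hQ hx) hR)).trans (index_dvd_eight h72 hQ)

variable [Finite G]

lemma eq_of_mem_inf_normalizer (h72 : Nat.card G ∣ 72)
    (hT : Nat.card T ∣ 8) (hindex : (Subgroup.normalizer (R : Set G)).index = 4) {s z : G}
    (hs : s ∈ T ⊓ Subgroup.normalizer (R : Set G)) (hs1 : s ≠ 1)
    (hz : z ∈ T ⊓ Subgroup.normalizer (R : Set G)) (hz1 : z ≠ 1) : s = z := by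
  have hN : Nat.card (Subgroup.normalizer (R : Set G)) ∣ 18 := by
    have hmul := (Subgroup.normalizer (R : Set G)).card_mul_index
    rw [hindex] at hmul
    rw [← hmul] at h72
    exact Nat.dvd_of_mul_dvd_mul_right (k := 4) (by norm_num) h72
  have h2 : Nat.card (T ⊓ Subgroup.normalizer (R : Set G) : Subgroup G) ≤ 2 :=
    Nat.le_of_dvd (by norm_num) (Nat.dvd_gcd ((Subgroup.card_dvd_of_le inf_le_left).trans hT)
      ((Subgroup.card_dvd_of_le inf_le_right).trans hN))
  by_contra hsz
  have h3 := Set.ncard_le_ncard (s := {1, s, z})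
    (t := (T ⊓ Subgroup.normalizer (R : Set G) : Subgroup G))
    (by simp only [Set.insert_subset_iff, Set.singleton_subset_iff]
        exact ⟨one_mem _, hs, hz⟩)
  rw [Set.ncard_eq_three.2 ⟨1, s, z, hs1.symm, hz1.symm, hsz, rfl⟩,
    ← Nat.card_coe_set_eq] at h3
  exact absurd (h3.trans h2) (by norm_num)

end CardDvdSeventyTwo

namespace Condition4

section NormalSylowThree

open scoped Pointwise

variable {G : Type*} [Group G] [Fintype G] {Q : Sylow 3 G}

lemma normal_sylow_three (hG : Condition4 G) (h72 : Nat.card G ∣ 72) (hQ : Nat.card Q = 9) :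
    (Q : Subgroup G).Normal := by
  have := Fact.mk Nat.prime_three
  refine sylow_normal_of_card_eq_one Q (by_contra fun h1 => ?_)
  have h9 := card_le_card_sylow_of_disjoint Q (hG.disjoint_sylow_three hQ) h1
  have h8 := Nat.le_of_dvd (by norm_num) (Q.card_dvd_index.trans (index_dvd_eight h72 hQ))
  omega

lemma ncard_subgroup_card_three (hG : Condition4 G) (hQ : Nat.card Q = 9) :
    {R : Subgroup G | R ≤ Q ∧ Nat.card R = 3}.ncard = 4 := by
  have := Fact.mk Nat.prime_three
  have h := ncard_subgroup_card_prime_mul (Q := (Q : Subgroup G)) (p := 3) fun _ =>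
    hG.pow_three_eq_one_of_mem_sylow
  rw [hQ] at h
  omega

variable [hQn : (Q : Subgroup G).Normal]

lemma index_normalizer_le_four (hG : Condition4 G) (hQ : Nat.card Q = 9) {R : Subgroup G}
    (hRQ : R ≤ Q) (hR : Nat.card R = 3) : (Subgroup.normalizer (R : Set G)).index ≤ 4 := by
  rw [← hG.ncard_subgroup_card_three hQ]
  exact index_normalizer_le_ncard (Set.toFinite _) fun g => smul_mem_subgroup_card _ ⟨hRQ, hR⟩

lemma exists_mem_normalizer_of_sq_eq_one (hG : Condition4 G) (hQ : Nat.card Q = 9) {s : G}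
    (hs : s ^ 2 = 1) : ∃ R : Subgroup G, R ≤ Q ∧ Nat.card R = 3 ∧
      s ∈ Subgroup.normalizer (R : Set G) := by
  have := Fact.mk Nat.prime_three
  obtain ⟨q, hq, hq1, hsq⟩ := exists_ne_one_conj_eq_or_eq_inv (Q := (Q : Subgroup G))
    (fun h => by simp [h] at hQ) (fun _ hx _ => commute_of_card_eq_prime_sq (p := 3) hQ hx) hs
  refine ⟨Subgroup.zpowers q, Subgroup.zpowers_le.2 hq, ?_, mem_normalizer_zpowers hsq⟩
  rw [Nat.card_zpowers, hG.orderOf_eq_three_of_mem_sylow hq hq1]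

lemma exists_orderOf_eq_two_mem_normalizer (hG : Condition4 G) (hQ : Nat.card Q = 9)
    {T : Subgroup G} (hT : (Q : Subgroup G).IsComplement' T) (hT2 : IsPGroup 2 T) [Nontrivial T]
    (hindex : ∀ R : Subgroup G, R ≤ Q → Nat.card R = 3 →
      (Subgroup.normalizer (R : Set G)).index = 4) :
    ∃ z ∈ T, orderOf z = 2 ∧ ∀ R : Subgroup G, R ≤ Q → Nat.card R = 3 →
      z ∈ Subgroup.normalizer (R : Set G) := by
  have := Fact.mk Nat.prime_three
  obtain ⟨⟨z, hzT⟩, hzc, hz2⟩ := exists_central_involution hT2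
  rw [Subgroup.orderOf_mk] at hz2
  obtain ⟨S, hSQ, hS, hzS⟩ := hG.exists_mem_normalizer_of_sq_eq_one hQ (hz2 ▸ pow_orderOf_eq_one z)
  refine ⟨z, hzT, hz2, fun R hRQ hR => mem_normalizer_of_ncard_le_index hT
    (fun _ hx _ => commute_of_card_eq_prime_sq (p := 3) hQ hx) (fun t ht => ?_)
    hSQ hS hzS ?_ hRQ hR⟩
  · exact (congrArg Subtype.val (Subgroup.mem_center_iff.1 hzc ⟨t, ht⟩)).symm
  · rw [hindex S hSQ hS]
    exact (hG.ncard_subgroup_card_three hQ).le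

lemma index_normalizer_eq_four (hG : Condition4 G) (h72 : Nat.card G ∣ 72) (hQ : Nat.card Q = 9)
    {R : Subgroup G} (hRQ : R ≤ Q) (hR : Nat.card R = 3)
    (h2 : 2 < (Subgroup.normalizer (R : Set G)).index) :
    (Subgroup.normalizer (R : Set G)).index = 4 := by
  have h4 := hG.index_normalizer_le_four hQ hRQ hR
  have h8 := index_normalizer_dvd_eight h72 hQ hRQ
  generalize (Subgroup.normalizer (R : Set G)).index = n at h2 h4 h8
  interval_cases n <;> omega

/-- Otherwise the four subgroups of order 3 in `Q` form one orbit, so a central involution of a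
complement normalizes all of them and is the only involution doing so. -/
lemma exists_index_normalizer_le_two (hG : Condition4 G) (h72 : Nat.card G ∣ 72)
    (hQ : Nat.card Q = 9) : ∃ R : Subgroup G, R ≤ Q ∧ Nat.card R = 3 ∧
      (Subgroup.normalizer (R : Set G)).index ≤ 2 := by
  have := Fact.mk Nat.prime_three
  by_contra! hindex
  have hindex4 (R : Subgroup G) (hRQ : R ≤ Q) (hR : Nat.card R = 3) :
      (Subgroup.normalizer (R : Set G)).index = 4 :=
    hG.index_normalizer_eq_four h72 hQ hRQ hR (hindex R hRQ hR)
  obtain ⟨T, hT⟩ := Subgroup.exists_right_complement'_of_coprime Q.card_coprime_index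
  have hT8 : Nat.card T ∣ 2 ^ 3 := hT.symm.index_eq_card ▸ index_dvd_eight h72 hQ
  obtain ⟨k, -, hk⟩ := (Nat.dvd_prime_pow Nat.prime_two).1 hT8
  obtain ⟨R, hRQ, hR, -⟩ := hG.exists_mem_normalizer_of_sq_eq_one hQ (one_pow 2)
  have hT4 : 4 ∣ Nat.card T := by
    rw [← hT.symm.index_eq_card, ← hindex4 R hRQ hR]
    exact Subgroup.index_dvd_of_le (le_normalizer_of_forall_commute
      (fun _ hx _ => commute_of_card_eq_prime_sq (p := 3) hQ hx) hRQ)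
  have : Nontrivial T := Finite.one_lt_card_iff_nontrivial.1
    (Nat.lt_of_lt_of_le (by norm_num) (Nat.le_of_dvd Nat.card_pos hT4))
  obtain ⟨z, hzT, hz2, hz⟩ :=
    hG.exists_orderOf_eq_two_mem_normalizer hQ hT (IsPGroup.of_card hk) hindex4
  have hz1 : z ≠ 1 := mt orderOf_eq_one_iff.2 (by omega)
  obtain hTcard | hTcard : Nat.card T = 4 ∨ Nat.card T = 8 := by
    have := Nat.le_of_dvd (by norm_num) hT8
    generalize Nat.card T = n at *
    interval_cases n <;> omega
  · have hN := (Subgroup.normalizer (R : Set G)).card_mul_index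
    rw [hindex4 R hRQ hR, ← hT.card_mul_card, hTcard, hQ] at hN
    have hdvd := (Subgroup.normalizer (R : Set G)).orderOf_dvd_natCard (hz R hRQ hR)
    rw [hz2] at hdvd
    omega
  · obtain ⟨s, hsT, hs2, hsz⟩ := hG.exists_mem_orderOf_eq_two_ne hTcard hzT hz1
    obtain ⟨S, hSQ, hS, hsS⟩ := hG.exists_mem_normalizer_of_sq_eq_one hQ
      (hs2 ▸ pow_orderOf_eq_one s)
    exact hsz (eq_of_mem_inf_normalizer h72 hT8 (hindex4 S hSQ hS) ⟨hsT, hsS⟩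
      (mt orderOf_eq_one_iff.2 (by omega)) ⟨hzT, hz S hSQ hS⟩ hz1)

lemma exists_index_normalizer_le_two_ne (hG : Condition4 G) (h72 : Nat.card G ∣ 72)
    (hQ : Nat.card Q = 9) {R : Subgroup G} [hRn : R.Normal] (hRQ : R ≤ Q) (hR : Nat.card R = 3) :
    ∃ S : Subgroup G, S ≤ Q ∧ Nat.card S = 3 ∧ S ≠ R ∧
      (Subgroup.normalizer (S : Set G)).index ≤ 2 := by
  let L : Set (Subgroup G) := {S | S ≤ Q ∧ Nat.card S = 3}
  have hL : (L \ {R}).ncard = 3 := by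
    rw [Set.ncard_sdiff_singleton_of_mem (show R ∈ L from ⟨hRQ, hR⟩),
      hG.ncard_subgroup_card_three hQ]
  obtain ⟨S, ⟨hSQ, hS⟩, hSR⟩ := Set.nonempty_of_ncard_ne_zero (s := L \ {R}) (by omega)
  have hSR' : S ≠ R := hSR
  have h3 : (Subgroup.normalizer (S : Set G)).index ≤ 3 := by
    rw [← hL]
    refine index_normalizer_le_ncard (Set.toFinite _) fun g =>
      ⟨smul_mem_subgroup_card _ ⟨hSQ, hS⟩, fun h => hSR' ?_⟩
    rw [← inv_smul_smul (ConjAct.toConjAct g) S, Set.mem_singleton_iff.1 h]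
    exact hRn.conjAct _
  refine ⟨S, hSQ, hS, hSR', not_lt.1 fun h2 => ?_⟩
  have h4 := hG.index_normalizer_eq_four h72 hQ hSQ hS h2
  omega

end NormalSylowThree

lemma embedsInS6_of_card_sylow_three_eq_nine {G : Type*} [Group G] [Fintype G] {Q : Sylow 3 G}
    (hG : Condition4 G) (h72 : Nat.card G ∣ 72) (hQ : Nat.card Q = 9) : EmbedsInS6 G := by
  have := Fact.mk Nat.prime_three
  have := hG.normal_sylow_three h72 hQ
  have hcent := hG.centralizer_sylow_three_le hQ
  obtain ⟨T, hT⟩ := Subgroup.exists_right_complement'_of_coprime Q.card_coprime_index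
  have relIndex_eq {R : Subgroup G} (hRQ : R ≤ Q) (hR : Nat.card R = 3) :
      R.relIndex Q = 3 := by
    have h := card_mul_relIndex_of_le hRQ
    rw [hR, show Nat.card (Q : Subgroup G) = 9 from hQ] at h
    omega
  have embeds_of_not_normal {R : Subgroup G} (hRQ : R ≤ Q) (hR : Nat.card R = 3)
      (hle : (Subgroup.normalizer (R : Set G)).index ≤ 2) (hRn : ¬ R.Normal) : EmbedsInS6 G := by
    refine embedsInS6_of_index_normalizer_eq_two hcent hT hRQ (hR ▸ Nat.prime_three)
      (relIndex_eq hRQ hR) ?_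
    have h1 := mt (Subgroup.index_eq_one.trans Subgroup.normalizer_eq_top_iff).1 hRn
    have h0 := (Subgroup.normalizer (R : Set G)).index_ne_zero_of_finite
    omega
  obtain ⟨R, hRQ, hR, hRle⟩ := hG.exists_index_normalizer_le_two h72 hQ
  by_cases hRn : R.Normal
  · obtain ⟨S, hSQ, hS, hSR, hSle⟩ := hG.exists_index_normalizer_le_two_ne h72 hQ hRQ hR
    by_cases hSn : S.Normal
    · refine embedsInS6_of_normal_of_normal hcent hT hRQ hSQ ?_ (relIndex_eq hRQ hR)
        (relIndex_eq hSQ hS)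
      exact (disjoint_of_prime_card_of_not_le (hS ▸ Nat.prime_three) fun h =>
        hSR (Subgroup.eq_of_le_of_card_ge h (by rw [hR, hS]))).symm
    · exact embeds_of_not_normal hSQ hS hSle hSn
  · exact embeds_of_not_normal hRQ hR hRle hRn

end Condition4

/-! ### Groups of order divisible by 5 -/

lemma exists_coset_table {α : Type*} {X B : α → α} (hX : ∀ t, X (X t) = t)
    (hB : ∀ t, B (B (B t)) = t) (hXB : ∀ t, X (B (X (B (X (B (X (B (X (B t))))))))) = t) {c₀ : α}
    (h₀ : X (B c₀) = c₀) : ∃ f : Fin 12 → α, f 0 = c₀ ∧ (∀ i, X (f i) ∈ Set.range f) ∧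
      ∀ i, B (f i) ∈ Set.range f := by
  obtain ⟨c₁, x₀⟩ : ∃ c, X c₀ = c := ⟨_, rfl⟩
  obtain ⟨c₂, b₁⟩ : ∃ c, B c₁ = c := ⟨_, rfl⟩
  obtain ⟨c₃, x₂⟩ : ∃ c, X c₂ = c := ⟨_, rfl⟩
  obtain ⟨c₄, b₃⟩ : ∃ c, B c₃ = c := ⟨_, rfl⟩
  obtain ⟨c₅, x₄⟩ : ∃ c, X c₄ = c := ⟨_, rfl⟩
  obtain ⟨c₆, b₄⟩ : ∃ c, B c₄ = c := ⟨_, rfl⟩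
  obtain ⟨c₇, b₅⟩ : ∃ c, B c₅ = c := ⟨_, rfl⟩
  obtain ⟨c₈, b₇⟩ : ∃ c, B c₇ = c := ⟨_, rfl⟩
  obtain ⟨c₉, x₈⟩ : ∃ c, X c₈ = c := ⟨_, rfl⟩
  obtain ⟨c₁₀, b₉⟩ : ∃ c, B c₉ = c := ⟨_, rfl⟩
  obtain ⟨c₁₁, x₁₀⟩ : ∃ c, X c₁₀ = c := ⟨_, rfl⟩
  have x₁ : X c₁ = c₀ := by rw [← x₀, hX]
  have x₃ : X c₃ = c₂ := by rw [← x₂, hX]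
  have x₅ : X c₅ = c₄ := by rw [← x₄, hX]
  have x₉ : X c₉ = c₈ := by rw [← x₈, hX]
  have x₁₁ : X c₁₁ = c₁₀ := by rw [← x₁₀, hX]
  have b₀ : B c₀ = c₁ := by rw [← x₀, ← hX (B c₀), h₀]
  have b₂ : B c₂ = c₀ := by rw [← b₁, ← b₀, hB]
  have b₆ : B c₆ = c₃ := by rw [← b₄, ← b₃, hB]
  have b₈ : B c₈ = c₅ := by rw [← b₇, ← b₅, hB]
  have x₇ : X c₇ = c₆ := by
    simpa only [b₆, x₃, b₂, x₀, b₁, x₂, b₃, x₄, b₅] using hXB c₆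
  have x₆ : X c₆ = c₇ := by rw [← x₇, hX]
  have b₁₁ : B c₁₁ = c₉ := by
    have h : X (B c₁₁) = c₈ := by
      simpa only [b₈, x₅, b₄, x₆, b₇, x₈, b₉, x₁₀] using hXB c₈
    rw [← hX (B c₁₁), h, x₈]
  have b₁₀ : B c₁₀ = c₁₁ := by rw [← b₉, ← b₁₁, hB]
  refine ⟨![c₀, c₁, c₂, c₃, c₄, c₅, c₆, c₇, c₈, c₉, c₁₀, c₁₁], rfl, fun i => ?_, fun i => ?_⟩
  · refine ⟨![1, 0, 3, 2, 5, 4, 7, 6, 9, 8, 11, 10] i, ?_⟩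
    fin_cases i
    exacts [x₀.symm, x₁.symm, x₂.symm, x₃.symm, x₄.symm, x₅.symm, x₆.symm, x₇.symm, x₈.symm,
      x₉.symm, x₁₀.symm, x₁₁.symm]
  · refine ⟨![1, 2, 0, 4, 6, 7, 3, 8, 5, 10, 11, 9] i, ?_⟩
    fin_cases i
    exacts [b₀.symm, b₁.symm, b₂.symm, b₃.symm, b₄.symm, b₅.symm, b₆.symm, b₇.symm, b₈.symm,
      b₉.symm, b₁₀.symm, b₁₁.symm]

section TriangleGroup

open scoped Pointwise

variable {G : Type*} [Group G]

lemma orbit_closure_subset {α : Type*} [MulAction G α] {s : Set G} {S : Set α} (hS : S.Finite)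
    (hs : ∀ g ∈ s, ∀ t ∈ S, g • t ∈ S) {c : α} (hc : c ∈ S) :
    MulAction.orbit (Subgroup.closure s) c ⊆ S := by
  have hle : Subgroup.closure s ≤ MulAction.stabilizer G S := by
    rw [Subgroup.closure_le]
    intro g hg
    rw [SetLike.mem_coe, MulAction.mem_stabilizer_set_iff_smul_set_subset hS]
    rintro _ ⟨t, ht, rfl⟩
    exact hs g hg t ht
  rintro _ ⟨⟨g, hg⟩, rfl⟩
  exact (MulAction.mem_stabilizer_set.1 (hle hg) c).2 hc

variable {x y : G}

lemma ncard_orbit_closure_pair_le {α : Type*} [MulAction G α] (hx : x ^ 2 = 1) (hy : y ^ 3 = 1)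
    (hxy : (x * y) ^ 5 = 1) {c : α} (hc : (x * y) • c = c) :
    (MulAction.orbit (Subgroup.closure {x, y}) c).ncard ≤ 12 := by
  obtain ⟨f, rfl, hfx, hfy⟩ := exists_coset_table (X := (x • · : α → α)) (B := (y • ·))
    (c₀ := c) (fun t => by rw [← mul_smul, ← pow_two, hx, one_smul])
    (fun t => by rw [← mul_smul, ← mul_smul, ← pow_two, ← pow_succ, hy, one_smul])
    (fun t => by
      simp only [← mul_smul, ← mul_assoc]
      simp only [pow_succ, pow_zero, one_mul, ← mul_assoc] at hxy
      rw [hxy, one_smul])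
    (by rw [← mul_smul, hc])
  have hsub : MulAction.orbit (Subgroup.closure {x, y}) (f 0) ⊆ Set.range f := by
    refine orbit_closure_subset (Set.finite_range f) ?_ (Set.mem_range_self 0)
    rintro _ (rfl | rfl) _ ⟨i, rfl⟩
    exacts [hfx i, hfy i]
  refine (Set.ncard_le_ncard hsub (Set.finite_range f)).trans ?_
  rw [← Nat.card_coe_set_eq]
  exact (Finite.card_range_le f).trans (Nat.card_fin 12).le

/-- The relations present `A₅`, in which `x * y` generates a subgroup of index 12; this is proved
here by enumerating its cosets. -/
lemma card_closure_pair_le_sixty (hx : x ^ 2 = 1) (hy : y ^ 3 = 1) (hxy : orderOf (x * y) = 5) :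
    Nat.card (Subgroup.closure {x, y}) ≤ 60 := by
  let C := Subgroup.zpowers (x * y)
  have hCle : C ≤ Subgroup.closure {x, y} := Subgroup.zpowers_le.2
    (mul_mem (Subgroup.subset_closure (by simp)) (Subgroup.subset_closure (by simp)))
  have hstab : MulAction.stabilizer (Subgroup.closure {x, y}) ((1 : G) : G ⧸ C) =
      C.subgroupOf (Subgroup.closure {x, y}) := by
    ext g
    exact SetLike.ext_iff.1 (MulAction.stabilizer_quotient C) (g : G)
  have hindex : C.relIndex (Subgroup.closure {x, y}) ≤ 12 := by
    rw [Subgroup.relIndex, ← hstab, MulAction.index_stabilizer]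
    exact ncard_orbit_closure_pair_le hx hy (hxy ▸ pow_orderOf_eq_one _)
      ((MulAction.stabilizer_quotient C).ge (Subgroup.mem_zpowers _))
  rw [← card_mul_relIndex_of_le hCle, Nat.card_zpowers, hxy]
  omega

end TriangleGroup

/-- A CP-group: every nontrivial element has prime power order. -/
def IsCPGroup (G : Type*) [Group G] : Prop := ∀ g : G, g ≠ 1 → IsPrimePow (orderOf g)

namespace IsCPGroup

variable {G : Type*} [Group G]

lemma subgroup (hG : IsCPGroup G) (H : Subgroup G) : IsCPGroup H := fun h h1 => by
  rw [← Subgroup.orderOf_coe]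
  exact hG h fun h' => h1 (Subtype.ext h')

lemma not_coprime_of_commute (hG : IsCPGroup G) {x y : G} (hxy : Commute x y) (hx : x ≠ 1)
    (hy : y ≠ 1) : ¬ (orderOf x).Coprime (orderOf y) := by
  intro hc
  have hmul := hxy.orderOf_mul_eq_mul_orderOf_of_coprime hc
  have hxy1 : x * y ≠ 1 := fun h => hx (orderOf_eq_one_iff.1
    (Nat.eq_one_of_mul_eq_one_right (hmul.symm.trans (orderOf_eq_one_iff.2 h))))
  have hpos := (hG x hx).pos
  have hpos' := (hG y hy).pos
  rcases (hc.isPrimePow_dvd_mul (hmul ▸ hG _ hxy1)).1 dvd_rfl with h | h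
  · exact hy (orderOf_eq_one_iff.1
      (Nat.dvd_one.1 (Nat.dvd_of_mul_dvd_mul_left hpos (by rwa [mul_one]))))
  · exact hx (orderOf_eq_one_iff.1
      (Nat.dvd_one.1 (Nat.dvd_of_mul_dvd_mul_right hpos' (by rwa [one_mul]))))

variable [Finite G]

section PrimeOrder

variable {p : ℕ} [Fact p.Prime]

lemma exists_card_centralizer_eq_pow (hG : IsCPGroup G) {x : G} (hx : orderOf x = p) :
    ∃ k, Nat.card (Subgroup.centralizer {x}) = p ^ k := by
  have hp : p.Prime := Fact.out
  refine ⟨_, Nat.eq_prime_pow_of_unique_prime_dvd Nat.card_pos.ne' fun {q} hq hdvd => ?_⟩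
  have := Fact.mk hq
  obtain ⟨⟨y, hy⟩, hyq⟩ := exists_prime_orderOf_dvd_card' q hdvd
  rw [Subgroup.orderOf_mk] at hyq
  have hc := hG.not_coprime_of_commute (Subgroup.mem_centralizer_singleton_iff.1 hy)
    (mt orderOf_eq_one_iff.2 (hyq ▸ hq.ne_one)) (mt orderOf_eq_one_iff.2 (hx ▸ hp.ne_one))
  rw [hx, hyq, Nat.coprime_primes hq hp] at hc
  exact not_not.1 hc

lemma card_le_pow_mul_ncard (hG : IsCPGroup G) {k : ℕ} (hk : ¬ p ^ (k + 1) ∣ Nat.card G) {x : G}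
    (hx : orderOf x = p) {S : Set G} (hS : ∀ g, g * x * g⁻¹ ∈ S) :
    Nat.card G ≤ p ^ k * S.ncard := by
  obtain ⟨n, hn⟩ := hG.exists_card_centralizer_eq_pow hx
  have hnk : n ≤ k := by
    by_contra! h
    exact hk ((pow_dvd_pow p h).trans (hn ▸ Subgroup.card_subgroup_dvd_card _))
  refine (card_le_card_centralizer_mul_ncard hS).trans (Nat.mul_le_mul_right _ ?_)
  rw [hn]
  exact Nat.pow_le_pow_right (Fact.out : p.Prime).pos hnk

lemma card_le_pow_mul_ncard_orderOf_eq (hG : IsCPGroup G) {k : ℕ} (hp : p ∣ Nat.card G)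
    (hk : ¬ p ^ (k + 1) ∣ Nat.card G) : Nat.card G ≤ p ^ k * {g : G | orderOf g = p}.ncard := by
  obtain ⟨x, hx⟩ := exists_prime_orderOf_dvd_card' p hp
  exact hG.card_le_pow_mul_ncard hk hx fun g =>
    (SemiconjBy.conj_mk g x).orderOf_eq.symm.trans hx

lemma card_le_pow_mul_card_normal (hG : IsCPGroup G) {k : ℕ} {N : Subgroup G} [hN : N.Normal]
    (hp : p ∣ Nat.card N) (hk : ¬ p ^ (k + 1) ∣ Nat.card G) :
    Nat.card G ≤ p ^ k * Nat.card N := by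
  obtain ⟨x, hx⟩ := exists_prime_orderOf_dvd_card' p hp
  rw [← Subgroup.orderOf_coe] at hx
  change Nat.card G ≤ p ^ k * Nat.card (N : Set G)
  rw [Nat.card_coe_set_eq]
  exact hG.card_le_pow_mul_ncard hk hx fun g => hN.conj_mem _ x.2 g

end PrimeOrder

/-- There would be at least 15 elements of order 2, 10 of order 3 and 6 of order 5. -/
lemma card_ne_thirty (hG : IsCPGroup G) : Nat.card G ≠ 30 := by
  intro hcard
  have := Fact.mk Nat.prime_two
  have := Fact.mk Nat.prime_three
  have := Fact.mk Nat.prime_five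
  have h2 := hG.card_le_pow_mul_ncard_orderOf_eq (p := 2) (k := 1) (by omega) (by omega)
  have h3 := hG.card_le_pow_mul_ncard_orderOf_eq (p := 3) (k := 1) (by omega) (by omega)
  have h5 := hG.card_le_pow_mul_ncard_orderOf_eq (p := 5) (k := 1) (by omega) (by omega)
  have hdisj {m n : ℕ} (hmn : m ≠ n) : Disjoint {g : G | orderOf g = m} {g | orderOf g = n} :=
    Set.disjoint_left.2 fun _ hm hn => hmn (Eq.trans (Eq.symm hm) hn)
  have hunion := Set.ncard_le_card
    ({g : G | orderOf g = 2} ∪ {g | orderOf g = 3} ∪ {g | orderOf g = 5})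
  rw [Set.ncard_union_eq ((hdisj (by norm_num)).union_left (hdisj (by norm_num))),
    Set.ncard_union_eq (hdisj (by norm_num))] at hunion
  omega

lemma eq_bot_of_card_dvd_sixty (hG : IsCPGroup G) (hcard : Nat.card G = 360)
    {N : Subgroup G} [N.Normal] (hN : Nat.card N ∣ 60) : N = ⊥ := by
  have := Fact.mk Nat.prime_two
  have := Fact.mk Nat.prime_three
  have := Fact.mk Nat.prime_five
  have h2 := fun h : 2 ∣ Nat.card N =>
    hG.card_le_pow_mul_card_normal (p := 2) (k := 3) h (by omega)
  have h3 := fun h : 3 ∣ Nat.card N =>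
    hG.card_le_pow_mul_card_normal (p := 3) (k := 2) h (by omega)
  have h5 := fun h : 5 ∣ Nat.card N =>
    hG.card_le_pow_mul_card_normal (p := 5) (k := 1) h (by omega)
  rw [hcard] at h2 h3 h5
  have hdiv : ∀ d ∈ Nat.divisors 60, (2 ∣ d → 360 ≤ 2 ^ 3 * d) → (3 ∣ d → 360 ≤ 3 ^ 2 * d) →
    (5 ∣ d → 360 ≤ 5 ^ 1 * d) → d = 1 := by decide +kernel
  exact Subgroup.card_eq_one.1 (hdiv _ (Nat.mem_divisors.2 ⟨hN, by norm_num⟩) h2 h3 h5)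

lemma embedsInS6_of_orderOf_eq (hG : IsCPGroup G) (hcard : Nat.card G = 360) {x y : G}
    (hx : orderOf x = 2) (hy : orderOf y = 3) (hxy : orderOf (x * y) = 5) : EmbedsInS6 G := by
  let A := Subgroup.closure {x, y}
  have hxA : x ∈ A := Subgroup.subset_closure (by simp)
  have hyA : y ∈ A := Subgroup.subset_closure (by simp)
  have h2 : 2 ∣ Nat.card A := hx ▸ A.orderOf_dvd_natCard hxA
  have h3 : 3 ∣ Nat.card A := hy ▸ A.orderOf_dvd_natCard hyA
  have h5 : 5 ∣ Nat.card A := hxy ▸ A.orderOf_dvd_natCard (mul_mem hxA hyA)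
  have h30 := (hG.subgroup A).card_ne_thirty
  have h60 : Nat.card A = 60 := by
    have hle : Nat.card A ≤ 60 := card_closure_pair_le_sixty
      (hx ▸ pow_orderOf_eq_one x) (hy ▸ pow_orderOf_eq_one y) hxy
    have hpos : 0 < Nat.card A := Nat.card_pos
    omega
  have hindex := A.card_mul_index
  rw [h60, hcard] at hindex
  exact EmbedsInS6.of_index_le A (by omega)
    (hG.eq_bot_of_card_dvd_sixty hcard (h60 ▸ Subgroup.card_dvd_of_le A.normalCore_le))

end IsCPGroup

section InvolutionsOutsideNormalizer

open scoped Pointwise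

variable {G : Type*} [Group G]

lemma conj_eq_inv_of_forall_commute_eq_one {Q : Subgroup G}
    (hcomm : ∀ x ∈ Q, ∀ y ∈ Q, Commute x y) {z : G} (hz : z ^ 2 = 1)
    (hzQ : z ∈ Subgroup.normalizer (Q : Set G)) (hfix : ∀ q ∈ Q, Commute z q → q = 1) {q : G}
    (hq : q ∈ Q) : z * q * z⁻¹ = q⁻¹ := by
  have hq' : z * q * z⁻¹ ∈ Q := (Subgroup.mem_normalizer_iff.1 hzQ q).1 hq
  refine (inv_eq_of_mul_eq_one_right (hfix _ (mul_mem hq hq') ?_)).symm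
  refine mul_inv_eq_iff_eq_mul.1 ?_
  calc z * (q * (z * q * z⁻¹)) * z⁻¹ = z * q * z⁻¹ * (z ^ 2 * q * (z ^ 2)⁻¹) := by group
    _ = z * q * z⁻¹ * q := by rw [hz, one_mul, inv_one, mul_one]
    _ = q * (z * q * z⁻¹) := (hcomm _ hq' _ hq).eq

lemma ncard_le_card_of_forall_conj_eq_inv {Q : Subgroup G} [Finite Q]
    (hQ : Subgroup.centralizer (Q : Set G) ≤ Q) {S : Set G}
    (hS : ∀ t ∈ S, ∀ q ∈ Q, t * q * t⁻¹ = q⁻¹) : S.ncard ≤ Nat.card Q := by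
  obtain rfl | ⟨z, hz⟩ := S.eq_empty_or_nonempty
  · simp
  refine (Set.ncard_le_ncard_of_injOn (t := (Q : Set G)) (z * ·) (fun t ht => hQ fun q hq => ?_)
    (mul_right_injective z).injOn (Set.toFinite _)).trans (Nat.card_coe_set_eq _).symm.le
  refine (mul_inv_eq_iff_eq_mul.1 ?_).symm
  calc z * t * q * (z * t)⁻¹ = z * (t * q * t⁻¹) * z⁻¹ := by group
    _ = q := by rw [hS t ht q hq, hS z hz _ (inv_mem hq), inv_inv]

lemma eq_of_inv_mul_mem_sylow {p : ℕ} {Q : Sylow p G}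
    (hdisj : Pairwise (Function.onFun Disjoint fun P : Sylow p G => (P : Subgroup G))) {s t : G}
    (hs : s ^ 2 = 1) (ht : t ^ 2 = 1) (hsQ : s ∉ Subgroup.normalizer (Q : Set G))
    (hst : s⁻¹ * t ∈ Q) : s = t := by
  have hinv : s⁻¹ = s := inv_eq_of_mul_eq_one_left ((pow_two s).symm.trans hs)
  have hinv' : t⁻¹ = t := inv_eq_of_mul_eq_one_left ((pow_two t).symm.trans ht)
  have hconj : s * (s⁻¹ * t) * s⁻¹ = (s⁻¹ * t)⁻¹ := by
    rw [mul_inv_cancel_left, mul_inv_rev, hinv', inv_inv, hinv]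
  have hne : s • Q ≠ Q := mt Sylow.smul_eq_iff_mem_normalizer.1 hsQ
  have hmem : s * (s⁻¹ * t) * s⁻¹ ∈ s • Q :=
    Subgroup.smul_mem_pointwise_smul _ (MulAut.conj s) (Q : Subgroup G) hst
  have hone := (hdisj hne).le_bot ⟨hmem, hconj ▸ Q.inv_mem hst⟩
  rw [Subgroup.mem_bot, hconj, inv_eq_one] at hone
  exact inv_mul_eq_one.1 hone

lemma mul_eq_compl_of_card_le [Finite G] {S : Set G} {H N : Subgroup G} (hHN : H ≤ N)
    (hSN : Disjoint S N) (hS : ∀ s ∈ S, ∀ t ∈ S, s⁻¹ * t ∈ H → s = t)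
    (hcard : Nat.card G ≤ S.ncard * Nat.card H + Nat.card N) :
    S * (H : Set G) = (N : Set G)ᶜ := by
  have hinj : Set.InjOn (fun a : G × G => a.1 * a.2) (S ×ˢ (H : Set G)) := by
    rintro ⟨s, h⟩ ⟨hs, hh⟩ ⟨t, k⟩ ⟨ht, hk⟩ (hst : s * h = t * k)
    obtain rfl : s = t := hS s hs t ht (by
      rw [eq_mul_inv_of_mul_eq hst.symm, mul_assoc, inv_mul_cancel_left]
      exact mul_mem hh (inv_mem hk))
    rw [mul_left_cancel hst]
  refine Set.eq_of_subset_of_ncard_le ?_ ?_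
  · rintro _ ⟨s, hs, h, hh, rfl⟩ hsh
    exact Set.disjoint_left.1 hSN hs ((Subgroup.mul_mem_cancel_right N (hHN hh)).1 hsh)
  · have hcompl := Set.ncard_add_ncard_compl (N : Set G)
    have hmul : (S * (H : Set G)).ncard = S.ncard * Nat.card H := by
      rw [← Set.image_mul_prod, hinj.ncard_image, Set.ncard_prod, ← Nat.card_coe_set_eq (H : Set G)]
      rfl
    have hN : (N : Set G).ncard = Nat.card N := (Nat.card_coe_set_eq _).symm
    omega

end InvolutionsOutsideNormalizer

namespace Condition4

variable {G : Type*} [Group G] [Fintype G]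

lemma exists_card_mul_add_ncard_eq (hG : Condition4 G) : ∃ m, 3 ≤ m ∧
    Nat.card G * m + {g : G | orderOf g = 3}.ncard + 2 * {g : G | orderOf g = 5}.ncard +
      3 * {g : G | orderOf g = 6}.ncard = 4 * Nat.card G + 8 := by
  obtain ⟨m, hm, hsum⟩ := hG.1.exists_sum_eq
  have hncard (k : ℕ) :
      {g : G | orderOf g = k}.ncard = ∑ g : G, if orderOf g = k then 1 else 0 := by
    rw [Set.ncard_eq_toFinset_card', Finset.sum_boole]
    simp
  have hone : {g : G | orderOf g = 1}.ncard = 1 := by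
    simp only [orderOf_eq_one_iff, Set.ofPred_eq_eq_singleton, Set.ncard_singleton]
  refine ⟨m, hm, ?_⟩
  rw [mul_comm, ← hsum, ← mul_one 8, ← hone, Nat.card_eq_fintype_card, ← Finset.card_univ,
    Finset.card_eq_sum_ones]
  simp only [hncard, Finset.mul_sum, ← Finset.sum_add_distrib]
  refine Finset.sum_congr rfl fun g _ => ?_
  have hpos := orderOf_pos g
  have hle := hG.orderOf_le_six g
  generalize orderOf g = n at hpos hle
  interval_cases n <;> rfl

section SylowFive

open scoped Pointwise

variable {Q : Sylow 3 G}

lemma card_sylow_three_ne_one (hG : Condition4 G) (hQ : Nat.card Q = 9) (h5 : 5 ∣ Nat.card G) :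
    Nat.card (Sylow 3 G) ≠ 1 := by
  intro h1
  have := Fact.mk Nat.prime_three
  have := Fact.mk Nat.prime_five
  have hQn := sylow_normal_of_card_eq_one Q h1
  obtain ⟨u, hu⟩ := exists_prime_orderOf_dvd_card' 5 h5
  have hu5 : u ^ 5 = 1 := hu ▸ pow_orderOf_eq_one u
  have hmod := ncard_modEq_ncard_fixedPoints (S := (Q : Set G)) (f := fun q => u * q * u⁻¹)
    (p := 5) (Set.toFinite _) (fun q hq => hQn.conj_mem q hq u) fun q _ => by
      calc u * (u * (u * (u * (u * q * u⁻¹) * u⁻¹) * u⁻¹) * u⁻¹) * u⁻¹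
          = u ^ 5 * q * (u ^ 5)⁻¹ := by
            simp only [pow_succ, pow_zero, one_mul, mul_inv_rev, mul_assoc]
        _ = q := by rw [hu5, one_mul, inv_one, mul_one]
  have hfixed : {q ∈ (Q : Set G) | u * q * u⁻¹ = q} = {1} := by
    refine Set.eq_singleton_iff_unique_mem.2 ⟨⟨one_mem Q, by simp⟩, fun q ⟨hq, huq⟩ => ?_⟩
    by_contra hq1
    have hq3 := hG.orderOf_eq_three_of_mem_sylow hq hq1
    have hle := hG.orderOf_mul_orderOf_le_six (mul_inv_eq_iff_eq_mul.1 huq)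
      (by rw [hu, hq3]; norm_num)
    rw [hu, hq3] at hle
    omega
  have hQ9 : (Q : Set G).ncard = 9 := (Nat.card_coe_set_eq _).symm.trans hQ
  rw [hfixed, Set.ncard_singleton, hQ9] at hmod
  exact absurd hmod (by decide)

lemma ncard_involutions_normalizer_le (hG : Condition4 G) (hCP : IsCPGroup G)
    (hQ : Nat.card Q = 9) :
    {t | orderOf t = 2 ∧ t ∈ Subgroup.normalizer (Q : Set G)}.ncard ≤ 9 := by
  have := Fact.mk Nat.prime_three
  rw [← hQ]
  refine ncard_le_card_of_forall_conj_eq_inv (hG.centralizer_sylow_three_le hQ)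
    fun t ⟨ht, htQ⟩ q hq => conj_eq_inv_of_forall_commute_eq_one
      (fun x hx y hy => commute_of_card_eq_prime_sq (p := 3) hQ hx hy)
      (ht ▸ pow_orderOf_eq_one t) htQ (fun r hr htr => by_contra fun hr1 => ?_) hq
  refine hCP.not_coprime_of_commute htr (mt orderOf_eq_one_iff.2 (by omega)) hr1 ?_
  rw [ht, hG.orderOf_eq_three_of_mem_sylow hr hr1]
  norm_num

/-- The at least 36 involutions outside `N = N(Q)` lie in distinct left cosets of `Q`, so these
cosets are all the cosets outside `N`, and one of them contains an element of order 5. -/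
lemma exists_orderOf_mul_eq_five (hG : Condition4 G) (hCP : IsCPGroup G)
    (hcard : Nat.card G = 360) (hQ : Nat.card Q = 9) (hn3 : Nat.card (Sylow 3 G) = 10) :
    ∃ x y : G, orderOf x = 2 ∧ orderOf y = 3 ∧ orderOf (x * y) = 5 := by
  have := Fact.mk Nat.prime_two
  have := Fact.mk Nat.prime_three
  have := Fact.mk Nat.prime_five
  let N := Subgroup.normalizer (Q : Set G)
  have hN : Nat.card N = 36 := by
    have hindex : Nat.card N * N.index = Nat.card G := N.card_mul_index
    rw [← Q.card_eq_index_normalizer, hn3, hcard] at hindex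
    omega
  let S : Set G := {t | orderOf t = 2 ∧ t ∉ N}
  have hScard : 36 ≤ S.ncard := by
    have hsplit : ({t : G | orderOf t = 2} ∩ N).ncard + S.ncard = {t : G | orderOf t = 2}.ncard :=
      Set.ncard_inter_add_ncard_sdiff_eq_ncard _ _
    have hin : ({t : G | orderOf t = 2} ∩ N).ncard ≤ 9 :=
      hG.ncard_involutions_normalizer_le hCP hQ
    have hall := hCP.card_le_pow_mul_ncard_orderOf_eq (p := 2) (k := 3) (by omega) (by omega)
    omega
  have hcover : S * (Q : Set G) = (N : Set G)ᶜ := by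
    refine mul_eq_compl_of_card_le (H := (Q : Subgroup G)) Subgroup.le_normalizer
      (Set.disjoint_left.2 fun _ ht => ht.2) (fun s hs t ht => ?_) ?_
    · exact eq_of_inv_mul_mem_sylow (hG.disjoint_sylow_three hQ) (hs.1 ▸ pow_orderOf_eq_one s)
        (ht.1 ▸ pow_orderOf_eq_one t) hs.2
    · have hmul := Nat.mul_le_mul_right (Nat.card (Q : Subgroup G)) hScard
      have hQ9 : Nat.card (Q : Subgroup G) = 9 := hQ
      have hN' : Nat.card (Subgroup.normalizer (Q : Set G)) = 36 := hN
      rw [hQ9] at hmul ⊢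
      omega
  obtain ⟨u, hu⟩ := exists_prime_orderOf_dvd_card' (G := G) 5 (by omega)
  have huN : u ∈ (N : Set G)ᶜ := fun h => by
    have hdvd := N.orderOf_dvd_natCard h
    rw [hu, hN] at hdvd
    omega
  rw [← hcover] at huN
  obtain ⟨x, hx, y, hy, rfl⟩ := huN
  refine ⟨x, y, hx.1, hG.orderOf_eq_three_of_mem_sylow hy ?_, hu⟩
  rintro rfl
  have hx2 := hx.1
  simp only [mul_one] at hu
  omega

end SylowFive

section ThirtySixSylowFive

variable {P : Sylow 5 G}

lemma embedsInS6_of_card_sylow_five_le_six (hG : Condition4 G) (hP : Nat.card P = 5)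
    (hn5 : Nat.card (Sylow 5 G) ≤ 6) : EmbedsInS6 G := by
  have := Fact.mk Nat.prime_five
  obtain ⟨M, hM, hMP, hcent⟩ := exists_index_le_max_of_card_sylow_prime P hP
  refine EmbedsInS6.of_index_le M (hM.trans (max_le (by norm_num) hn5)) ?_
  exact le_bot_iff.1 (hMP le_rfl (hcent.trans (hG.centralizer_sylow_five_le P hP)))

lemma card_sylow_five_eq_thirty_six (hG : Condition4 G) (hP : Nat.card P = 5)
    (hn5 : ¬ Nat.card (Sylow 5 G) ≤ 6) : Nat.card (Sylow 5 G) = 36 := by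
  have := Fact.mk Nat.prime_five
  have hindex := (P : Subgroup G).card_mul_index
  rw [show Nat.card (P : Subgroup G) = 5 from hP] at hindex
  have h72 : Nat.card (Sylow 5 G) ∣ 72 :=
    P.card_dvd_index.trans (Nat.dvd_of_mul_dvd_mul_left (by norm_num) (hindex ▸ hG.card_dvd))
  have hdiv : ∀ d ∈ Nat.divisors 72, ¬ d ≤ 6 → d % 5 = 1 % 5 → d = 36 := by decide +kernel
  exact hdiv _ (Nat.mem_divisors.2 ⟨h72, by norm_num⟩) hn5 (card_sylow_modEq_one 5 G)

lemma card_eq_three_hundred_sixty (hG : Condition4 G) (hP : Nat.card P = 5)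
    (hn5 : Nat.card (Sylow 5 G) = 36) : Nat.card G = 360 := by
  have := Fact.mk Nat.prime_five
  have hindex := (P : Subgroup G).card_mul_index
  rw [show Nat.card (P : Subgroup G) = 5 from hP] at hindex
  have h36 : 36 ∣ (P : Subgroup G).index := hn5 ▸ P.card_dvd_index
  have hle := Nat.le_of_dvd (by norm_num) hG.card_dvd
  have hpos : 0 < Nat.card G := Nat.card_pos
  obtain ⟨m, hm, hsum⟩ := hG.exists_card_mul_add_ncard_eq
  rw [ncard_orderOf_eq_of_card_sylow_eq hP, hn5] at hsum
  have hmul := Nat.mul_le_mul_left (Nat.card G) hm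
  omega

lemma card_sylow_three_eq_ten_and_ncard_orderOf_eq_six (hG : Condition4 G) (hP : Nat.card P = 5)
    (hn5 : Nat.card (Sylow 5 G) = 36) {Q : Sylow 3 G} (hQ : Nat.card Q = 9) :
    Nat.card (Sylow 3 G) = 10 ∧ {g : G | orderOf g = 6}.ncard = 0 := by
  have := Fact.mk Nat.prime_three
  have := Fact.mk Nat.prime_five
  have hcard := hG.card_eq_three_hundred_sixty hP hn5
  have hdisj := hG.disjoint_sylow_three hQ
  have hge := card_le_card_sylow_of_disjoint Q hdisj
    (hG.card_sylow_three_ne_one hQ (by rw [hcard]; norm_num))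
  have hthree := ncard_orderOf_eq_prime Q hdisj fun R x hx => hG.pow_three_eq_one_of_mem_sylow hx
  obtain ⟨m, hm, hsum⟩ := hG.exists_card_mul_add_ncard_eq
  rw [ncard_orderOf_eq_of_card_sylow_eq hP, hn5, hthree, hQ, hcard] at hsum
  rw [hQ] at hge
  have hmod : Nat.card (Sylow 3 G) % 3 = 1 % 3 := card_sylow_modEq_one 3 G
  omega

lemma isCPGroup_of_ncard_orderOf_eq_six (hG : Condition4 G)
    (h6 : {g : G | orderOf g = 6}.ncard = 0) : IsCPGroup G := by
  intro g hg
  have hne1 : orderOf g ≠ 1 := mt orderOf_eq_one_iff.1 hg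
  have hne6 : orderOf g ≠ 6 :=
    Set.eq_empty_iff_forall_notMem.1 ((Set.ncard_eq_zero (Set.toFinite _)).1 h6) g
  have hpos := orderOf_pos g
  have hle := hG.orderOf_le_six g
  generalize orderOf g = n at hne1 hne6 hpos hle
  obtain rfl | rfl | rfl | rfl : n = 2 ∨ n = 3 ∨ n = 2 ^ 2 ∨ n = 5 := by omega
  exacts [Nat.prime_two.isPrimePow, Nat.prime_three.isPrimePow,
    Nat.prime_two.isPrimePow.pow two_ne_zero, Nat.prime_five.isPrimePow]

end ThirtySixSylowFive

lemma embedsInS6_of_five_dvd_card (hG : Condition4 G) (h5 : 5 ∣ Nat.card G) : EmbedsInS6 G := by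
  have := Fact.mk Nat.prime_three
  have := Fact.mk Nat.prime_five
  obtain ⟨P⟩ : Nonempty (Sylow 5 G) := inferInstance
  have hP : Nat.card P = 5 := card_sylow_eq_pow (k := 1) P h5 hG.not_five_pow_two_dvd_card
  by_cases hn5 : Nat.card (Sylow 5 G) ≤ 6
  · exact hG.embedsInS6_of_card_sylow_five_le_six hP hn5
  replace hn5 := hG.card_sylow_five_eq_thirty_six hP hn5
  have hcard := hG.card_eq_three_hundred_sixty hP hn5
  obtain ⟨Q⟩ : Nonempty (Sylow 3 G) := inferInstance
  have hQ : Nat.card Q = 9 :=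
    card_sylow_eq_pow (k := 2) Q (by rw [hcard]; norm_num) hG.not_three_pow_three_dvd_card
  obtain ⟨hn3, h6⟩ := hG.card_sylow_three_eq_ten_and_ncard_orderOf_eq_six hP hn5 hQ
  have hCP := hG.isCPGroup_of_ncard_orderOf_eq_six h6
  obtain ⟨x, y, hx, hy, hxy⟩ := hG.exists_orderOf_mul_eq_five hCP hcard hQ hn3
  exact hCP.embedsInS6_of_orderOf_eq hcard hx hy hxy

lemma embedsInS6_of_not_five_dvd_card (hG : Condition4 G) (h5 : ¬ 5 ∣ Nat.card G) :
    EmbedsInS6 G := by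
  have := Fact.mk Nat.prime_two
  have := Fact.mk Nat.prime_three
  obtain ⟨Q⟩ : Nonempty (Sylow 3 G) := inferInstance
  by_cases h9 : 9 ∣ Nat.card G
  · have h72 : Nat.card G ∣ 72 := Nat.Coprime.dvd_of_dvd_mul_right
      ((Nat.prime_five.coprime_iff_not_dvd.2 h5).symm) hG.card_dvd
    exact hG.embedsInS6_of_card_sylow_three_eq_nine h72
      (card_sylow_eq_pow (k := 2) Q h9 hG.not_three_pow_three_dvd_card)
  have h24 := hG.card_dvd_twenty_four h5 h9
  by_cases h3 : 3 ∣ Nat.card G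
  · exact hG.embedsInS6_of_card_sylow_three_eq_three h24 (card_sylow_eq_pow (k := 1) Q h3 h9)
  have h8 : Nat.card G ∣ 2 ^ 3 := Nat.Coprime.dvd_of_dvd_mul_right
    ((Nat.prime_three.coprime_iff_not_dvd.2 h3).symm) h24
  have htop : IsPGroup 2 (⊤ : Subgroup G) := (IsPGroup.of_card_dvd_pow h8).to_subgroup ⊤
  obtain ⟨f, hf⟩ := hG.embedsInS6_of_isPGroup_two htop
  exact ⟨f.comp (Subgroup.topEquiv (G := G)).symm.toMonoidHom,
    hf.comp Subgroup.topEquiv.symm.injective⟩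

end Condition4

/-- A finite group satisfying Condition (4) embeds into `S₆` and has order not divisible by 16. -/
theorem embeds_in_S6_of_condition4 (G : Type*) [Group G] [Fintype G] (h : Condition4 G) :
    (∃ f : G →* Equiv.Perm (Fin 6), Function.Injective f) ∧
      ¬ (2 ^ 4 ∣ Fintype.card G) := by
  refine ⟨?_, Nat.card_eq_fintype_card (α := G) ▸ h.not_two_pow_four_dvd_card⟩
  by_cases h5 : 5 ∣ Nat.card G
  · exact h.embedsInS6_of_five_dvd_card h5
  · exact h.embedsInS6_of_not_five_dvd_card h5
end

section
/- For a finite group G, the following are equivalent: (i) G can be embedded into the symmetric group S₆ and the order of G is not divisible by 2⁴ = 16; (ii) G can be embedded into one of the following five groups: the alternating group A₆, the symmetric group S₅, the group N₇₂ = C₃²⋊D₈ of order 72 (isomorphic to the wreath product S₃≀C₂, and realizable as the normalizer of a 3-Sylow subgroup of S₆), C₂×A₄, or C₂×C₄. -/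
def zmodPowHom {M : Type*} [Monoid M] (n : ℕ) [NeZero n] (σ : M) (h : σ ^ n = 1) :
    Multiplicative (ZMod n) →* M where
  toFun x := σ ^ (Multiplicative.toAdd x).val
  map_one' := by
    show σ ^ (0 : ZMod n).val = 1
    simp [ZMod.val_zero]
  map_mul' x y := by
    have key : ∀ k : ℕ, σ ^ (k % n) = σ ^ k := fun k => by
      conv_rhs => rw [← Nat.mod_add_div k n]
      rw [pow_add, pow_mul, h, one_pow, mul_one]
    show σ ^ ((Multiplicative.toAdd x + Multiplicative.toAdd y)).val = _
    rw [ZMod.val_add, key, pow_add]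

/-- The swap automorphism of `S₃ × S₃`. -/
def swapS3 : MulAut (Equiv.Perm (Fin 3) × Equiv.Perm (Fin 3)) :=
  MulEquiv.prodComm

lemma swap_sq : swapS3 ^ 2 = 1 := by
  apply MulEquiv.ext
  intro x
  show swapS3 (swapS3 x) = x
  simp [swapS3]

/-- `N₇₂ = (S₃ × S₃) ⋊ C₂`, the wreath product `S₃ ≀ C₂`; it is isomorphic to `C₃²⋊D₈` and to
the normalizer of a 3-Sylow subgroup of `S₆`. -/
def GroupN72 : Type :=
  SemidirectProduct (Equiv.Perm (Fin 3) × Equiv.Perm (Fin 3)) (Multiplicative (ZMod 2))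
    (zmodPowHom 2 swapS3 swap_sq)

instance : Group GroupN72 := by unfold GroupN72; infer_instance

/-!
Let `G ≤ S₆` with `16 ∤ |G|` and `G ≰ A₆`; then `|G|` divides `360`.

* If `5 ∣ |G|`, let `P` be a Sylow 5-subgroup. It is even, so by Frattini's argument its normalizer
  contains an odd permutation, necessarily of order 4. Hence `20` divides the order of the
  normalizer, and `P` has one or six conjugates. In the first case `G` fixes the point fixed by `P`.
  In the second `|G| = 120`, since `|G| = 360` would force `G = A₆`, and `G` embeds into `S₅`
  because it acts faithfully on its six cosets in `S₆` and fixes one of them.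
* If `5 ∤ |G|` and `3 ∣ |G|`, either a nontrivial normal 3-subgroup has an orbit of length three,
  which is a block, so that `G ≤ S₃ ≀ C₂`; or `G` acts on its four Sylow 3-subgroups with kernel of
  order at most two. A trivial kernel gives `G ≤ S₄`. A kernel of order two has image `A₄`, and it
  meets the even subgroup trivially because the even elements of `G` already map onto `A₄`, so
  `G ≤ C₂ × A₄`.
* If `|G|` divides `8`, then `G` fixes one of the fifteen pairs of points, so `G ≤ S₂ × S₄`. Unless
  the projection to `S₄` is injective its image has order dividing four, and thus lies in `C₄` or
  in `A₄`.
-/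

open Equiv Equiv.Perm MulAction
open scoped Pointwise

theorem card_perm_fin (n : ℕ) : Nat.card (Perm (Fin n)) = n.factorial := by
  rw [Nat.card_perm, Nat.card_fin]

/-- The group `G` is isomorphic to a subgroup of `H`. -/
def EmbedsInto (G H : Type*) [Group G] [Group H] : Prop :=
  ∃ f : G →* H, Function.Injective f

namespace EmbedsInto

variable {G H K L : Type*} [Group G] [Group H] [Group K] [Group L]

theorem of_mulEquiv (e : G ≃* H) : EmbedsInto G H :=
  ⟨e.toMonoidHom, e.injective⟩

theorem subgroup (S : Subgroup G) : EmbedsInto S G :=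
  ⟨S.subtype, S.subtype_injective⟩

theorem trans (hGH : EmbedsInto G H) (hHK : EmbedsInto H K) : EmbedsInto G K :=
  let ⟨f, hf⟩ := hGH
  let ⟨g, hg⟩ := hHK
  ⟨g.comp f, hg.comp hf⟩

theorem prodMap (hGH : EmbedsInto G H) (hKL : EmbedsInto K L) : EmbedsInto (G × K) (H × L) :=
  let ⟨f, hf⟩ := hGH
  let ⟨g, hg⟩ := hKL
  ⟨f.prodMap g, hf.prodMap hg⟩

theorem codRestrict {f : G →* H} (hf : Function.Injective f) {S : Subgroup H}
    (hS : ∀ g, f g ∈ S) : EmbedsInto G S :=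
  ⟨f.codRestrict S hS, fun _ _ h => hf (congrArg Subtype.val h)⟩

theorem prod_range_snd {f : G →* H × K} (hf : Function.Injective f) :
    EmbedsInto G (H × ((MonoidHom.snd H K).comp f).range) :=
  ⟨((MonoidHom.fst H K).comp f).prod ((MonoidHom.snd H K).comp f).rangeRestrict, fun _ _ h =>
    hf (Prod.ext (Prod.ext_iff.1 h).1 (congrArg Subtype.val (Prod.ext_iff.1 h).2))⟩

theorem card_dvd (h : EmbedsInto G H) : Nat.card G ∣ Nat.card H :=
  let ⟨f, hf⟩ := h
  Subgroup.card_dvd_of_injective f hf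

theorem perm_of_embedding {α β : Type*} (ι : α ↪ β) : EmbedsInto (Perm α) (Perm β) :=
  ⟨viaEmbeddingHom ι, viaEmbeddingHom_injective ι⟩

theorem perm_prod_perm (α β : Type*) : EmbedsInto (Perm α × Perm β) (Perm (α ⊕ β)) :=
  ⟨sumCongrHom α β, sumCongrHom_injective⟩

theorem perm_of_faithfulSMul (G α : Type*) [Group G] [MulAction G α] [FaithfulSMul G α] :
    EmbedsInto G (Perm α) :=
  ⟨toPermHom G α, toPerm_injective⟩

theorem perm_fin_of_card_eq [Finite G] {n : ℕ} (hG : Nat.card G = n) :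
    EmbedsInto G (Perm (Fin n)) :=
  (perm_of_faithfulSMul G G).trans (perm_of_embedding (Finite.equivFinOfCardEq hG).toEmbedding)

theorem prod_perm_fin_add {m n : ℕ} (hG : EmbedsInto G (Perm (Fin m)))
    (hH : EmbedsInto H (Perm (Fin n))) : EmbedsInto (G × H) (Perm (Fin (m + n))) :=
  (hG.prodMap hH).trans <|
    (perm_prod_perm _ _).trans (perm_of_embedding finSumFinEquiv.toEmbedding)

theorem of_isCyclic [IsCyclic G] [IsCyclic H] [Finite H] (h : Nat.card G ∣ Nat.card H) :
    EmbedsInto G H := by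
  obtain ⟨x, hx⟩ := IsCyclic.exists_ofOrder_eq_natCard (α := H)
  obtain ⟨k, hk⟩ := h
  have hk0 : k ≠ 0 := by
    rintro rfl
    exact Nat.card_pos.ne' hk
  have hxk : orderOf (x ^ k) = Nat.card G := by
    rw [orderOf_pow_of_dvd hk0 (hx ▸ hk ▸ Dvd.intro_left _ rfl), hx, hk,
      Nat.mul_div_cancel _ (Nat.pos_of_ne_zero hk0)]
  exact (of_mulEquiv (mulEquivOfCyclicCardEq (by rw [Nat.card_zpowers, hxk]))).trans
    (subgroup (Subgroup.zpowers (x ^ k)))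

end EmbedsInto

section FaithfulAction

variable {G α : Type*} [Group G] [MulAction G α] [FaithfulSMul G α]

theorem embedsInto_perm_prod_perm_compl (A : SubMulAction G α) :
    EmbedsInto G (Perm A × Perm ↥Aᶜ) := by
  refine ⟨(toPermHom G A).prod (toPermHom G ↥Aᶜ), fun g h hgh => ?_⟩
  obtain ⟨hA, hAc⟩ := Prod.ext_iff.1 hgh
  refine eq_of_smul_eq_smul fun x : α => ?_
  by_cases hx : x ∈ A
  · exact congrArg Subtype.val (DFunLike.congr_fun hA ⟨x, hx⟩)
  · exact congrArg Subtype.val (DFunLike.congr_fun hAc ⟨x, hx⟩)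

theorem embedsInto_perm_fin_of_fixedPoint {n : ℕ} (hα : Nat.card α = n + 1) {a : α}
    (ha : ∀ g : G, g • a = a) : EmbedsInto G (Perm (Fin n)) := by
  have : Finite α := Nat.finite_of_card_ne_zero (by omega)
  let A : SubMulAction G α := ⟨{a}, by simpa using ha⟩
  have hAc : Nat.card ↥Aᶜ = n := by
    have h := Set.ncard_add_ncard_compl ({a} : Set α)
    rw [Set.ncard_singleton, hα, add_comm] at h
    exact Nat.add_right_cancel h
  have : Subsingleton A := inferInstanceAs (Subsingleton ({a} : Set α))
  have hsnd : EmbedsInto (Perm A × Perm ↥Aᶜ) (Perm ↥Aᶜ) :=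
    ⟨MonoidHom.snd _ _, fun x y h => Prod.ext (Subsingleton.elim _ _) h⟩
  exact ((embedsInto_perm_prod_perm_compl A).trans hsnd).trans
    (.perm_of_embedding (Finite.equivFinOfCardEq hAc).toEmbedding)

theorem fixedPoints_ne_univ_of_ne_bot {N : Subgroup G} (hN : N ≠ ⊥) :
    fixedPoints N α ≠ Set.univ := by
  contrapose! hN
  refine (Subgroup.eq_bot_iff_forall N).2 fun g hg => eq_of_smul_eq_smul fun x : α => ?_
  rw [one_smul]
  exact (hN ▸ Set.mem_univ x : x ∈ fixedPoints N α) ⟨g, hg⟩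

variable {p : ℕ} [Fact p.Prime]

theorem exists_forall_smul_eq_of_normal {N : Subgroup G} [N.Normal] (hN : IsPGroup p N)
    (hN_ne : N ≠ ⊥) (hα : Nat.card α = p + 1) : ∃ a : α, ∀ g : G, g • a = a := by
  have : Finite α := Nat.finite_of_card_ne_zero (by omega)
  have : 2 ≤ p := (Fact.out : p.Prime).two_le
  have hmod := hN.card_modEq_card_fixedPoints α
  have hlt : (fixedPoints N α).ncard < p + 1 :=
    hα ▸ (Set.ncard_lt_card (fixedPoints_ne_univ_of_ne_bot hN_ne))
  have hone : (fixedPoints N α).ncard = 1 := by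
    rw [hα, Nat.card_coe_set_eq] at hmod
    have hdvd := (Nat.modEq_iff_dvd' hlt.le).1 hmod.symm
    have hle := Nat.le_of_dvd (by omega) hdvd
    have hne : (fixedPoints N α).ncard ≠ 0 := fun h =>
      (Fact.out : p.Prime).not_dvd_one <| (Nat.dvd_add_right dvd_rfl).1 (by simpa [h] using hdvd)
    omega
  obtain ⟨a, ha⟩ := Set.ncard_eq_one.1 hone
  refine ⟨a, fun g => ?_⟩
  have haN : a ∈ fixedPoints N α := ha ▸ Set.mem_singleton a
  have hga : g • a ∈ fixedPoints N α := smul_mem_fixedPoints_of_normal g haN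
  rwa [ha] at hga

theorem exists_ncard_orbit_eq_prime [Nontrivial G] [Finite α] (hG : IsPGroup p G)
    (hα : Nat.card α < p ^ 2) : ∃ x : α, (orbit G x).ncard = p := by
  obtain ⟨g, hg⟩ := exists_ne (1 : G)
  obtain ⟨x, hx⟩ : ∃ x : α, g • x ≠ x := by
    contrapose! hg
    exact eq_of_smul_eq_smul fun x : α => by rw [hg, one_smul]
  obtain ⟨k, hk⟩ := hG.card_orbit x
  have hk2 : k < 2 := by
    refine (Nat.pow_lt_pow_iff_right (Fact.out : p.Prime).one_lt).1 ?_
    exact hk ▸ (Finite.card_subtype_le _).trans_lt hα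
  have hk0 : k ≠ 0 := by
    rintro rfl
    have := (Nat.card_eq_one_iff_unique.1 (hk.trans (pow_zero p))).1
    exact hx (congrArg Subtype.val
      (Subsingleton.elim (⟨g • x, mem_orbit x g⟩ : orbit G x) ⟨x, mem_orbit_self x⟩))
  obtain rfl : k = 1 := by omega
  exact ⟨x, hk.trans (pow_one p)⟩

end FaithfulAction

theorem exists_equiv_sum_of_ncard {α : Type*} [Finite α] {A : Set α} {m n : ℕ}
    (hα : Nat.card α = m + n) (hA : A.ncard = m) :
    ∃ e : α ≃ Fin m ⊕ Fin n, ∀ x, e x ∈ Set.range Sum.inl ↔ x ∈ A := by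
  classical
  have hAc : Aᶜ.ncard = n := by
    have h := Set.ncard_add_ncard_compl A
    omega
  refine ⟨(Equiv.Set.sumCompl A).symm.trans
    (sumCongr (Finite.equivFinOfCardEq hA) (Finite.equivFinOfCardEq hAc)), fun x => ?_⟩
  by_cases hx : x ∈ A
  · simp [hx, Set.sumCompl_symm_apply_of_mem hx]
  · simp [hx, Set.sumCompl_symm_apply_of_notMem hx]

namespace GroupN72

theorem card_eq : Nat.card GroupN72 = 72 := by
  refine SemidirectProduct.card.trans ?_
  rw [Nat.card_prod, Nat.card_perm, Nat.card_fin, Nat.card_eq_fintype_card (α := Multiplicative _)]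
  rfl

/-- The imprimitive action of `N₇₂ = S₃ ≀ C₂` on six points split into two blocks of three. -/
def toPerm : GroupN72 →* Perm (Fin 3 ⊕ Fin 3) :=
  SemidirectProduct.lift (sumCongrHom (Fin 3) (Fin 3))
    (zmodPowHom 2 (sumComm (Fin 3) (Fin 3) : Perm (Fin 3 ⊕ Fin 3)) (by decide)) <| by
      intro c
      obtain rfl | rfl : c = 1 ∨ c = Multiplicative.ofAdd 1 := by decide +revert
      · ext : 1
        simp
      · ext ⟨σ, τ⟩ (i | i) <;> rfl

theorem toPerm_injective : Function.Injective toPerm := by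
  rw [injective_iff_map_eq_one]
  rintro ⟨σ, c⟩ h
  obtain rfl | rfl : c = 1 ∨ c = Multiplicative.ofAdd 1 := by clear h; decide +revert
  · have hσ : sumCongrHom (Fin 3) (Fin 3) σ = 1 := h
    rw [sumCongrHom_injective (hσ.trans (map_one _).symm)]
    rfl
  · have h0 : (Sum.inr (σ.2 0) : Fin 3 ⊕ Fin 3) = Sum.inl 0 := DFunLike.congr_fun h (Sum.inl 0)
    cases h0

theorem mem_range_toPerm_of_mapsTo_inl {σ : Perm (Fin 3 ⊕ Fin 3)}
    (hσ : Set.MapsTo σ (Set.range Sum.inl) (Set.range Sum.inl)) : σ ∈ toPerm.range := by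
  obtain ⟨τ, rfl⟩ := mem_sumCongrHom_range_of_perm_mapsTo_inl hσ
  exact ⟨⟨τ, 1⟩, rfl⟩

theorem mem_range_toPerm_of_mapsTo_inr {σ : Perm (Fin 3 ⊕ Fin 3)}
    (hσ : Set.MapsTo σ (Set.range Sum.inl) (Set.range Sum.inr)) : σ ∈ toPerm.range := by
  let s : Perm (Fin 3 ⊕ Fin 3) := sumComm (Fin 3) (Fin 3)
  have hs : s ∈ toPerm.range := ⟨⟨1, Multiplicative.ofAdd 1⟩, by ext (i | i) <;> rfl⟩
  refine (Subgroup.mul_mem_cancel_left _ hs).1 (mem_range_toPerm_of_mapsTo_inl fun x hx => ?_)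
  obtain ⟨i, hi⟩ := hσ hx
  exact ⟨i, by rw [Perm.mul_apply, ← hi]; rfl⟩

end GroupN72

section ThreeBlock

variable {G α : Type*} [Group G] [MulAction G α] [FaithfulSMul G α]

theorem embedsInto_groupN72_of_isBlock (hα : Nat.card α = 6) {A : Set α} (hA : IsBlock G A)
    (hA_card : A.ncard = 3) : EmbedsInto G GroupN72 := by
  have : Finite α := Nat.finite_of_card_ne_zero (by omega)
  obtain ⟨e, he⟩ := exists_equiv_sum_of_ncard (n := 3) hα hA_card
  let f : G →* Perm (Fin 3 ⊕ Fin 3) := e.permCongrHom.toMonoidHom.comp (toPermHom G α)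
  have hf : Function.Injective f := e.permCongrHom.injective.comp toPerm_injective
  have hf_range (g : G) : f g ∈ GroupN72.toPerm.range := by
    obtain hg | hg := isBlock_iff_smul_eq_or_disjoint.1 hA g
    · refine GroupN72.mem_range_toPerm_of_mapsTo_inl fun y hy => (he _).2 ?_
      exact hg ▸ Set.smul_mem_smul_set ((he _).1 (by simpa using hy))
    · refine GroupN72.mem_range_toPerm_of_mapsTo_inr fun y hy => ?_
      rw [← Set.compl_range_inl, Set.mem_compl_iff]
      refine fun h => Set.disjoint_left.1 hg (Set.smul_mem_smul_set ?_) ((he _).1 h)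
      exact (he _).1 (by simpa using hy)
  exact (EmbedsInto.codRestrict hf hf_range).trans
    (.of_mulEquiv (MonoidHom.ofInjective GroupN72.toPerm_injective).symm)

theorem embedsInto_groupN72_of_normal (hα : Nat.card α = 6) {N : Subgroup G} [N.Normal]
    (hN : IsPGroup 3 N) (hN_ne : N ≠ ⊥) : EmbedsInto G GroupN72 := by
  have : Finite α := Nat.finite_of_card_ne_zero (by omega)
  have : Nontrivial N := (Subgroup.nontrivial_iff_ne_bot N).2 hN_ne
  obtain ⟨x, hx⟩ := exists_ncard_orbit_eq_prime (α := α) hN (by omega)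
  exact embedsInto_groupN72_of_isBlock hα (IsBlock.orbit_of_normal x) hx

end ThreeBlock

section Sylow

variable {G : Type*} [Group G] {p : ℕ}

theorem le_ker_of_coprime {M : Type*} [Group M] (φ : G →* M) {P : Subgroup G}
    (hP : IsPGroup p P) (hM : p.Coprime (Nat.card M)) : P ≤ φ.ker := by
  intro g hg
  obtain ⟨k, hk⟩ := hP ⟨g, hg⟩
  have hgk : g ^ p ^ k = 1 := congrArg Subtype.val hk
  refine orderOf_eq_one_iff.1 <|
    Nat.eq_one_of_dvd_coprimes (hM.pow_left k) ?_ (orderOf_dvd_natCard _)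
  exact orderOf_dvd_of_pow_eq_one (by rw [← map_pow, hgk, map_one])

variable [Finite G] [Fact p.Prime]

theorem exists_mem_normalizer_notMem (P : Sylow p G) {K : Subgroup G} [K.Normal] (hPK : P ≤ K)
    (hK : K ≠ ⊤) : ∃ g ∈ Subgroup.normalizer (P : Set G), g ∉ K := by
  by_contra! hle
  exact hK (top_le_iff.1 (P.normalizer_sup_eq_top' hPK ▸ sup_le hle le_rfl))

theorem card_sylow_eq_prime (P : Sylow p G) (hp : p ∣ Nat.card G) (hp2 : ¬ p ^ 2 ∣ Nat.card G) :
    Nat.card P = p := by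
  have hpow : (Nat.card G).factorization p = 1 := by
    have hG : Nat.card G ≠ 0 := Nat.card_pos.ne'
    have hprime := (Fact.out : p.Prime)
    have h1 := (hprime.dvd_iff_one_le_factorization hG).1 hp
    have h2 := mt (hprime.pow_dvd_iff_le_factorization hG).2 hp2
    omega
  rw [P.card_eq_multiplicity, hpow, pow_one]

end Sylow

theorem embedsInto_perm_fin_of_index_eq {α : Type*} [Finite α] {n : ℕ} (hα : 5 ≤ Nat.card α)
    {H : Subgroup (Perm α)} (hn : 2 ≤ n) (hH : H.index = n + 1) : EmbedsInto H (Perm (Fin n)) := by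
  classical
  have := Fintype.ofFinite α
  have : Nontrivial α := Finite.one_lt_card_iff_nontrivial.1 (by omega)
  have hcore : H.normalCore = ⊥ := by
    by_contra hne
    have hle : alternatingGroup α ≤ H :=
      (alternatingGroup_le_of_normal hα ((Subgroup.nontrivial_iff_ne_bot _).2 hne)).trans
        H.normalCore_le
    have hdvd := Subgroup.index_dvd_of_le hle
    rw [alternatingGroup.index_eq_two, hH] at hdvd
    have := Nat.le_of_dvd two_pos hdvd
    omega
  have hker : (toPermHom (Perm α) (Perm α ⧸ H)).ker = ⊥ := by rw [← H.normalCore_eq_ker, hcore]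
  have : FaithfulSMul H (Perm α ⧸ H) :=
    ⟨fun h => Subtype.ext ((MonoidHom.ker_eq_bot_iff _).1 hker (Equiv.ext h))⟩
  refine embedsInto_perm_fin_of_fixedPoint (α := Perm α ⧸ H) hH (a := QuotientGroup.mk 1)
    fun h => ?_
  exact QuotientGroup.eq.2 (by simp)

section FiveCycle

/-- A standard 5-cycle in `S₆`. -/
def fiveCycle : Perm (Fin 6) :=
  swap 0 1 * swap 1 2 * swap 2 3 * swap 3 4

theorem isConj_fiveCycle {τ : Perm (Fin 6)} (hτ : orderOf τ = 5) : IsConj τ fiveCycle := by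
  have : Fact (Nat.Prime 5) := ⟨by norm_num⟩
  have cycleType_eq {ρ : Perm (Fin 6)} (hρ : orderOf ρ = 5) : ρ.cycleType = {5} := by
    obtain ⟨n, hn⟩ := cycleType_prime_order (hρ ▸ Fact.out : (orderOf ρ).Prime)
    have hsum : 5 + n * 5 ≤ 6 := by
      have := ρ.sum_cycleType ▸ Finset.card_le_univ ρ.support
      simpa [hn, hρ] using this
    obtain rfl : n = 0 := by omega
    simpa [hρ] using hn
  have hfive : orderOf fiveCycle = 5 := orderOf_eq_prime (by decide) (by decide)
  rw [isConj_iff_cycleType_eq, cycleType_eq hτ, cycleType_eq hfive]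

-- The normalizer of a 5-cycle in `S₆` is `AGL(1, 5)`, where `x ↦ a x + b` is odd exactly when `a`
-- generates the multiplicative group of `𝔽₅`.
theorem pow_four_eq_one_of_conj_fiveCycle :
    ∀ (σ : Perm (Fin 6)) (i : Fin 5), σ * fiveCycle * σ⁻¹ = fiveCycle ^ (i : ℕ) → sign σ = -1 →
      σ ^ 4 = 1 ∧ σ ^ 2 ≠ 1 := by
  decide +kernel

theorem orderOf_eq_four_of_conj_mem_zpowers {σ τ : Perm (Fin 6)} (hτ : orderOf τ = 5)
    (hστ : σ * τ * σ⁻¹ ∈ Subgroup.zpowers τ) (hσ : sign σ = -1) : orderOf σ = 4 := by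
  obtain ⟨c, hc⟩ := isConj_iff.1 (isConj_fiveCycle hτ)
  obtain ⟨i, hi, hiτ⟩ : ∃ i < 5, τ ^ i = σ * τ * σ⁻¹ := by
    simpa [hτ] using mem_zpowers_iff_mem_range_orderOf.1 hστ
  have hconj : MulAut.conj c τ = fiveCycle := hc
  obtain ⟨h4, h2⟩ := pow_four_eq_one_of_conj_fiveCycle (MulAut.conj c σ) ⟨i, hi⟩
    (by rw [← hconj, ← map_pow, hiτ, map_mul, map_mul, map_inv]) <| by
      rw [MulAut.conj_apply, Perm.sign_mul, Perm.sign_mul, sign_inv, mul_right_comm,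
        Int.units_mul_self, one_mul, hσ]
  rw [← (MulAut.conj c).orderOf_eq]
  exact orderOf_eq_prime_pow (p := 2) (n := 1) h2 h4

theorem twenty_dvd_card_normalizer {H : Subgroup (Perm (Fin 6))} [Fact (Nat.Prime 5)]
    (P : Sylow 5 H) (hP : Nat.card P = 5) (hH : ¬ H ≤ alternatingGroup (Fin 6)) :
    20 ∣ Nat.card (Subgroup.normalizer (P : Set H)) := by
  set ε : H →* ℤˣ := sign.comp H.subtype
  have hε : ε.ker ≠ ⊤ := fun h => hH fun σ hσ => (h ▸ Subgroup.mem_top _ : ⟨σ, hσ⟩ ∈ ε.ker)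
  obtain ⟨σ, hσ, hσ_odd⟩ := exists_mem_normalizer_notMem P
    (le_ker_of_coprime ε P.isPGroup' (by simp; norm_num)) hε
  obtain ⟨τ, hτ⟩ := (Subgroup.isCyclic_iff_exists_zpowers_eq_top _).1 (isCyclic_of_prime_card hP)
  have hτ5 : orderOf (τ : Perm (Fin 6)) = 5 := by
    rw [Subgroup.orderOf_coe, ← Nat.card_zpowers, hτ]
    exact hP
  have hστ : (σ * τ * σ⁻¹ : Perm (Fin 6)) ∈ Subgroup.zpowers (τ : Perm (Fin 6)) := by
    have hτP : τ ∈ (P : Subgroup H) := hτ ▸ Subgroup.mem_zpowers τ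
    obtain ⟨k, hk⟩ : σ * τ * σ⁻¹ ∈ Subgroup.zpowers τ := by
      rw [hτ]
      exact (Subgroup.mem_normalizer_iff.1 hσ τ).1 hτP
    exact ⟨k, congrArg Subtype.val hk⟩
  have hσ4 : orderOf (σ : Perm (Fin 6)) = 4 :=
    orderOf_eq_four_of_conj_mem_zpowers hτ5 hστ ((Int.units_eq_one_or _).resolve_left hσ_odd)
  refine Nat.Coprime.mul_dvd_of_dvd_of_dvd (m := 5) (n := 4) (by norm_num) ?_ ?_
  · exact hP.symm.dvd.trans (Subgroup.card_dvd_of_le P.le_normalizer)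
  · rw [← hσ4, Subgroup.orderOf_coe]
    exact Subgroup.orderOf_dvd_natCard _ hσ

theorem embedsInto_perm_five_of_five_dvd {H : Subgroup (Perm (Fin 6))}
    (hH : ¬ H ≤ alternatingGroup (Fin 6)) (h360 : Nat.card H ∣ 360) (h5 : 5 ∣ Nat.card H) :
    EmbedsInto H (Perm (Fin 5)) := by
  have : Fact (Nat.Prime 5) := ⟨by norm_num⟩
  obtain ⟨P⟩ : Nonempty (Sylow 5 H) := inferInstance
  have hP : Nat.card P = 5 :=
    card_sylow_eq_prime P h5 fun h => absurd (h.trans h360) (by norm_num)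
  obtain ⟨m, hm⟩ := twenty_dvd_card_normalizer P hP hH
  set N := Subgroup.normalizer (P : Set H)
  have hcard : N.index * (20 * m) = Nat.card H := hm ▸ N.index_mul_card
  have hindex_mod : N.index ≡ 1 [MOD 5] := P.card_eq_index_normalizer ▸ card_sylow_modEq_one 5 H
  have hindex_dvd : N.index ∣ 18 :=
    Nat.dvd_of_mul_dvd_mul_right (k := 20) (by norm_num)
      ((Dvd.intro m (by rw [← hcard, mul_assoc])).trans h360)
  have hindex_cases : ∀ i ∈ Nat.divisors 18, i ≡ 1 [MOD 5] → i = 1 ∨ i = 6 := by decide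
  obtain h1 | h6 := hindex_cases _ (Nat.mem_divisors.2 ⟨hindex_dvd, by norm_num⟩) hindex_mod
  · have : (P : Subgroup H).Normal :=
      Subgroup.normalizer_eq_top_iff.1 (Subgroup.index_eq_one.1 h1)
    have hP_ne : (P : Subgroup H) ≠ ⊥ := P.ne_bot_of_dvd_card h5
    obtain ⟨a, ha⟩ := exists_forall_smul_eq_of_normal (α := Fin 6) P.isPGroup' hP_ne (by simp)
    exact embedsInto_perm_fin_of_fixedPoint (by simp) ha
  · have hm3 : m ∣ 3 :=
      Nat.dvd_of_mul_dvd_mul_left (k := 120) (by norm_num)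
        (by rwa [← hcard, h6, ← mul_assoc] at h360)
    have hH_index : H.index * (6 * (20 * m)) = 720 := by
      rw [h6] at hcard
      rw [hcard]
      exact H.index_mul_card.trans (card_perm_fin 6)
    obtain rfl | rfl := (Nat.dvd_prime Nat.prime_three).1 hm3
    · exact embedsInto_perm_fin_of_index_eq (by simp) (by norm_num) (by omega)
    · exact absurd (eq_alternatingGroup_of_index_eq_two (by omega)).le hH

end FiveCycle

section AlternatingQuotient

variable {G : Type*} [Group G]

theorem exists_ker_eq_normalCore_of_index_eq {N : Subgroup G} {n : ℕ} (hn : n ≠ 0)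
    (hN : N.index = n) : ∃ φ : G →* Perm (Fin n), φ.ker = N.normalCore := by
  have : Finite (G ⧸ N) := Nat.finite_of_card_ne_zero (hN.trans_ne hn)
  let e : G ⧸ N ≃ Fin n := Finite.equivFinOfCardEq hN
  refine ⟨e.permCongrHom.toMonoidHom.comp (toPermHom G (G ⧸ N)), ?_⟩
  rw [N.normalCore_eq_ker]
  exact MonoidHom.ker_mulEquiv_comp _ e.permCongrHom

theorem not_dvd_card_of_le_normalizer [Finite G] {p : ℕ} [Fact p.Prime] (P : Sylow p G)
    {K : Subgroup G} [K.Normal] (hK : K ≤ Subgroup.normalizer (P : Set G))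
    (hP : (P : Subgroup G).normalCore = ⊥) : ¬ p ∣ Nat.card K := by
  intro hp
  obtain ⟨x, hx⟩ := exists_prime_orderOf_dvd_card' p hp
  have mem_P {y : G} (hyK : y ∈ K) (hy : orderOf y = p) : y ∈ P := by
    have hyp : IsPGroup p (Subgroup.zpowers y) :=
      IsPGroup.of_card (n := 1) (by rw [Nat.card_zpowers, hy, pow_one])
    have hmem : y ∈ Subgroup.zpowers y ⊓ Subgroup.normalizer (P : Set G) :=
      ⟨Subgroup.mem_zpowers y, hK hyK⟩
    rw [hyp.inf_normalizer_sylow P] at hmem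
    exact hmem.2
  have hx_core : (x : G) ∈ (P : Subgroup G).normalCore := fun g =>
    mem_P (Subgroup.Normal.conj_mem inferInstance (x : G) x.2 g)
      (((MulAut.conj g).orderOf_eq x).trans (by rwa [Subgroup.orderOf_coe]))
  rw [hP, Subgroup.mem_bot, OneMemClass.coe_eq_one] at hx_core
  exact (Fact.out : p.Prime).one_lt.ne (by rw [← hx, hx_core, orderOf_one])

variable {α : Type*} [Fintype α] [DecidableEq α] {φ : G →* Perm α}

theorem alternatingGroup_le_map_ker (hφ : alternatingGroup α ≤ φ.range) (s : G →* ℤˣ) :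
    alternatingGroup α ≤ s.ker.map φ := by
  rw [← closure_three_cycles_eq_alternating, Subgroup.closure_le]
  intro σ hσ
  obtain ⟨g, rfl⟩ := hφ (IsThreeCycle.mem_alternatingGroup hσ)
  -- The 3-cycle `φ g` equals `φ (g ^ 4)`, and `s` kills every even power.
  refine ⟨g ^ 4, ?_, ?_⟩
  · rw [SetLike.mem_coe, MonoidHom.mem_ker, map_pow, pow_mul (s g) 2 2, Int.units_sq]
  · rw [map_pow, pow_succ, ← IsThreeCycle.orderOf hσ, pow_orderOf_eq_one, one_mul]

theorem embedsInto_zmod_two_prod_alternatingGroup (hφ : φ.range = alternatingGroup α)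
    (hker : Nat.card φ.ker = 2) {s : G →* ℤˣ} (hs : s ≠ 1) :
    EmbedsInto G (Multiplicative (ZMod 2) × alternatingGroup α) := by
  have hle : ¬ φ.ker ≤ s.ker := fun hle => by
    have hmap : (⊤ : Subgroup G).map φ ≤ s.ker.map φ := by
      rw [← MonoidHom.range_eq_map, hφ]
      exact alternatingGroup_le_map_ker hφ.ge s
    rw [Subgroup.map_le_map_iff', top_sup_eq, sup_eq_left.2 hle, top_le_iff] at hmap
    exact hs (MonoidHom.ker_eq_top_iff.1 hmap)
  have hdisj : Disjoint s.ker φ.ker := by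
    have : Fact (Nat.card φ.ker).Prime := ⟨hker ▸ Nat.prime_two⟩
    refine Subgroup.subgroupOf_eq_bot.1 ?_
    exact (Subgroup.eq_bot_or_eq_top_of_prime_card _).resolve_right
      fun h => hle (Subgroup.subgroupOf_eq_top.1 h)
  let e : ℤˣ ≃* Multiplicative (ZMod 2) := mulEquivOfPrimeCardEq (p := 2) (by simp) (by simp)
  refine .trans ⟨s.prod (φ.codRestrict _ fun g => hφ ▸ ⟨g, rfl⟩), ?_⟩
    (.prodMap (.of_mulEquiv e) (.of_mulEquiv (.refl _)))
  rw [← MonoidHom.ker_eq_bot_iff, MonoidHom.ker_prod, MonoidHom.ker_codRestrict]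
  exact hdisj.eq_bot

end AlternatingQuotient

section ThreeDvd

variable {G : Type*} [Group G]

theorem index_normalizer_sylow_three_eq_four [Finite G] (hG : Nat.card G ∣ 72) (P : Sylow 3 G)
    (hP : ¬ (P : Subgroup G).Normal) : (Subgroup.normalizer (P : Set G)).index = 4 := by
  rw [← Subgroup.normalizer_eq_top_iff, ← Subgroup.index_eq_one] at hP
  have hmod := P.card_eq_index_normalizer ▸ card_sylow_modEq_one 3 G
  have hdvd : (Subgroup.normalizer (P : Set G)).index ∣ 72 := (Subgroup.index_dvd_card _).trans hG
  have hdvd_cases : ∀ i ∈ Nat.divisors 72, i ≡ 1 [MOD 3] → i = 1 ∨ i = 4 := by decide +kernel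
  exact (hdvd_cases _ (Nat.mem_divisors.2 ⟨hdvd, by norm_num⟩) hmod).resolve_left hP

theorem embedsInto_of_normalCore_sylow_three_eq_bot [Finite G] (hG : Nat.card G ∣ 72)
    (h3 : 3 ∣ Nat.card G) {P : Sylow 3 G} (hP : (P : Subgroup G).normalCore = ⊥) {s : G →* ℤˣ}
    (hs : s ≠ 1) :
    EmbedsInto G (Perm (Fin 4)) ∨
      EmbedsInto G (Multiplicative (ZMod 2) × alternatingGroup (Fin 4)) := by
  have hP_normal : ¬ (P : Subgroup G).Normal := fun h =>
    P.ne_bot_of_dvd_card h3 ((P : Subgroup G).normalCore_eq_self.symm.trans hP)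
  have hindex := index_normalizer_sylow_three_eq_four hG P hP_normal
  obtain ⟨φ, hφ⟩ := exists_ker_eq_normalCore_of_index_eq four_ne_zero hindex
  have hker_le : φ.ker ≤ Subgroup.normalizer (P : Set G) := hφ ▸ Subgroup.normalCore_le _
  have hcard : Nat.card φ.range * Nat.card φ.ker = Nat.card G := by
    rw [← Subgroup.index_ker, Subgroup.index_mul_card]
  have hker3 : ¬ 3 ∣ Nat.card φ.ker := not_dvd_card_of_le_normalizer P hker_le hP
  have hrange : 12 ∣ Nat.card φ.range := by
    refine Nat.Coprime.mul_dvd_of_dvd_of_dvd (m := 3) (n := 4) (by norm_num) ?_ ?_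
    · exact (Nat.prime_three.dvd_mul.1 (hcard ▸ h3)).resolve_right hker3
    · rw [← Subgroup.index_ker]
      exact hindex.symm.dvd.trans (Subgroup.index_dvd_of_le hker_le)
  obtain ⟨m, hm⟩ := hrange
  have hm_dvd : m * Nat.card φ.ker ∣ 6 :=
    Nat.dvd_of_mul_dvd_mul_left (k := 12) (by norm_num) (by rwa [← mul_assoc, ← hm, hcard])
  have hker_cases : ∀ k ∈ Nat.divisors 6, ¬ 3 ∣ k → k = 1 ∨ k = 2 := by decide
  obtain h1 | h2 := hker_cases _
    (Nat.mem_divisors.2 ⟨(Dvd.intro_left _ rfl).trans hm_dvd, by norm_num⟩) hker3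
  · exact .inl ⟨φ, (MonoidHom.ker_eq_bot_iff φ).1 (Subgroup.card_eq_one.1 h1)⟩
  · have hrange_card : φ.range.index * (12 * m) = 24 := by
      rw [← hm]
      exact φ.range.index_mul_card.trans (card_perm_fin 4)
    have hm3 : m ∣ 3 := Nat.dvd_of_mul_dvd_mul_right two_pos (by rwa [h2] at hm_dvd)
    have hrange_index : φ.range.index = 2 := by
      obtain rfl | rfl := (Nat.dvd_prime Nat.prime_three).1 hm3 <;> omega
    exact .inr <| embedsInto_zmod_two_prod_alternatingGroup
      (eq_alternatingGroup_of_index_eq_two hrange_index) h2 hs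

theorem embedsInto_of_three_dvd_card {α : Type*} [MulAction G α] [FaithfulSMul G α]
    (hα : Nat.card α = 6) (hG : Nat.card G ∣ 72) (h3 : 3 ∣ Nat.card G) {s : G →* ℤˣ} (hs : s ≠ 1) :
    EmbedsInto G (Perm (Fin 5)) ∨ EmbedsInto G GroupN72 ∨
      EmbedsInto G (Multiplicative (ZMod 2) × alternatingGroup (Fin 4)) := by
  have : Finite G := Nat.finite_of_card_ne_zero fun h => by simp [h] at hG
  obtain ⟨P⟩ : Nonempty (Sylow 3 G) := inferInstance
  by_cases hP : (P : Subgroup G).normalCore = ⊥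
  · obtain h4 | h := embedsInto_of_normalCore_sylow_three_eq_bot hG h3 hP hs
    · exact .inl (h4.trans (.perm_of_embedding Fin.castSuccEmb))
    · exact .inr (.inr h)
  · have hN : IsPGroup 3 (P : Subgroup G).normalCore := P.isPGroup'.to_le (Subgroup.normalCore_le _)
    exact .inr (.inl (embedsInto_groupN72_of_normal hα hN hP))

end ThreeDvd

section TwoGroup

theorem embedsInto_cyclic_or_alternating_of_card_dvd_four {Q : Type*} [Group Q]
    (hQ : Nat.card Q ∣ 4) :
    EmbedsInto Q (Multiplicative (ZMod 4)) ∨ EmbedsInto Q (alternatingGroup (Fin 4)) := by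
  by_cases hcyc : IsCyclic Q
  · exact .inl (.of_isCyclic (by simpa using hQ))
  · have hQ4 : Nat.card Q = 2 ^ 2 := by
      obtain ⟨k, hk, hQk⟩ := (Nat.dvd_prime_pow Nat.prime_two).1 (show Nat.card Q ∣ 2 ^ 2 from hQ)
      obtain rfl | hk : k = 2 ∨ k ≤ 1 := by omega
      · exact hQk
      · exact absurd (isCyclic_of_card_dvd_prime (p := 2) (hQk ▸ pow_dvd_pow 2 hk)) hcyc
    have : IsKleinFour Q := ⟨hQ4, (not_isCyclic_iff_exponent_eq_prime Nat.prime_two hQ4).1 hcyc⟩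
    have : IsKleinFour (alternatingGroup.kleinFour (Fin 4)) :=
      alternatingGroup.kleinFour_isKleinFour (by simp)
    obtain ⟨e⟩ := IsKleinFour.nonempty_mulEquiv (G₁ := Q)
      (G₂ := alternatingGroup.kleinFour (Fin 4))
    exact .inr (.trans (.of_mulEquiv e) (.subgroup _))

variable {G α : Type*} [Group G] [MulAction G α]

theorem exists_subMulAction_card_eq {p n : ℕ} [Fact p.Prime] (hG : IsPGroup p G)
    (hα : ¬ p ∣ (Nat.card α).choose n) : ∃ A : SubMulAction G α, Nat.card A = n := by
  classical
  rw [← Set.powersetCard.card] at hα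
  obtain ⟨A, hA⟩ := hG.nonempty_fixed_point_of_prime_not_dvd_card _ hα
  refine ⟨⟨(A : Set α), fun g x hx => ?_⟩, Set.powersetCard.ncard_eq A⟩
  have hgA : g • (A : Finset α) = A := by rw [← Set.powersetCard.coe_smul, hA g]
  have hgx : g • x ∈ g • (A : Finset α) := Finset.smul_mem_smul_finset hx
  rwa [hgA] at hgx

variable [FaithfulSMul G α]

theorem embedsInto_perm_two_prod_perm_four (hα : Nat.card α = 6) (hG : IsPGroup 2 G) :
    EmbedsInto G (Perm (Fin 2) × Perm (Fin 4)) := by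
  have : Finite α := Nat.finite_of_card_ne_zero (by omega)
  obtain ⟨A, hA⟩ := exists_subMulAction_card_eq (α := α) (n := 2) hG (by rw [hα]; decide)
  have hAc : Nat.card ↥Aᶜ = 4 := by
    have h : Nat.card A + Nat.card ↥Aᶜ = Nat.card α := Set.ncard_add_ncard_compl (A : Set α)
    omega
  exact (embedsInto_perm_prod_perm_compl A).trans <|
    .prodMap (.perm_of_embedding (Finite.equivFinOfCardEq hA).toEmbedding)
      (.perm_of_embedding (Finite.equivFinOfCardEq hAc).toEmbedding)

theorem embedsInto_of_card_dvd_eight (hα : Nat.card α = 6) (hG : Nat.card G ∣ 8) :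
    EmbedsInto G (Perm (Fin 5)) ∨
      EmbedsInto G (Multiplicative (ZMod 2) × alternatingGroup (Fin 4)) ∨
      EmbedsInto G (Multiplicative (ZMod 2) × Multiplicative (ZMod 4)) := by
  have hG2 : IsPGroup 2 G :=
    have ⟨_, _, hk⟩ := (Nat.dvd_prime_pow Nat.prime_two).1 (show Nat.card G ∣ 2 ^ 3 from hG)
    IsPGroup.of_card hk
  obtain ⟨f, hf⟩ := embedsInto_perm_two_prod_perm_four hα hG2
  set q : G →* Perm (Fin 4) := (MonoidHom.snd _ _).comp f
  by_cases hq : Function.Injective q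
  · exact .inl (EmbedsInto.trans ⟨q, hq⟩ (.perm_of_embedding Fin.castSuccEmb))
  · have hrange : Nat.card q.range ∣ 4 := by
      have hker : 2 ∣ Nat.card q.ker := (hG2.to_subgroup q.ker).card_eq_or_dvd.resolve_left
        fun h => hq ((MonoidHom.ker_eq_bot_iff q).1 (Subgroup.card_eq_one.1 h))
      have hcard : Nat.card q.range * Nat.card q.ker = Nat.card G := by
        rw [← Subgroup.index_ker, Subgroup.index_mul_card]
      exact Nat.dvd_of_mul_dvd_mul_right two_pos ((mul_dvd_mul_left _ hker).trans (hcard ▸ hG))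
    have hS₂ : EmbedsInto (Perm (Fin 2)) (Multiplicative (ZMod 2)) :=
      .of_mulEquiv (mulEquivOfPrimeCardEq (p := 2) (card_perm_fin 2) (by simp))
    have hG_range : EmbedsInto G (Perm (Fin 2) × q.range) := .prod_range_snd hf
    obtain h | h := embedsInto_cyclic_or_alternating_of_card_dvd_four hrange
    · exact .inr (.inr (hG_range.trans (hS₂.prodMap h)))
    · exact .inr (.inl (hG_range.trans (hS₂.prodMap h)))

end TwoGroup

/-- The group `G` embeds into one of the five maximal groups of the theorem. -/
def EmbedsIntoMaximal (G : Type*) [Group G] : Prop :=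
  EmbedsInto G (alternatingGroup (Fin 6)) ∨ EmbedsInto G (Perm (Fin 5)) ∨
    EmbedsInto G GroupN72 ∨
    EmbedsInto G (Multiplicative (ZMod 2) × alternatingGroup (Fin 4)) ∨
    EmbedsInto G (Multiplicative (ZMod 2) × Multiplicative (ZMod 4))

theorem embedsIntoMaximal_of_not_sixteen_dvd_card {H : Subgroup (Perm (Fin 6))}
    (h16 : ¬ 16 ∣ Nat.card H) : EmbedsIntoMaximal H := by
  have h720 : Nat.card H ∣ 720 := H.card_subgroup_dvd_card.trans (card_perm_fin 6).dvd
  have h360 : Nat.card H ∣ 360 := by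
    have : ∀ n ∈ Nat.divisors 720, ¬ 16 ∣ n → n ∣ 360 := by decide +kernel
    exact this _ (Nat.mem_divisors.2 ⟨h720, by norm_num⟩) h16
  by_cases hH : H ≤ alternatingGroup (Fin 6)
  · exact .inl ⟨Subgroup.inclusion hH, Subgroup.inclusion_injective hH⟩
  by_cases h5 : 5 ∣ Nat.card H
  · exact .inr (.inl (embedsInto_perm_five_of_five_dvd hH h360 h5))
  have h72 : Nat.card H ∣ 72 :=
    (Nat.Coprime.symm ((Nat.Prime.coprime_iff_not_dvd (by norm_num)).2 h5)).dvd_of_dvd_mul_left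
      (show Nat.card H ∣ 5 * 72 from h360)
  by_cases h3 : 3 ∣ Nat.card H
  · have hsign : sign.comp H.subtype ≠ 1 := fun h =>
      hH fun σ hσ => DFunLike.congr_fun h (⟨σ, hσ⟩ : H)
    obtain h | h | h := embedsInto_of_three_dvd_card (α := Fin 6) (by simp) h72 h3 hsign
    · exact .inr (.inl h)
    · exact .inr (.inr (.inl h))
    · exact .inr (.inr (.inr (.inl h)))
  · have h8 : Nat.card H ∣ 8 :=
      (Nat.Coprime.pow_right 2
        (Nat.Coprime.symm ((Nat.Prime.coprime_iff_not_dvd (by norm_num)).2 h3))).dvd_of_dvd_mul_left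
        (show Nat.card H ∣ 3 ^ 2 * 8 from h72)
    obtain h | h := embedsInto_of_card_dvd_eight (α := Fin 6) (by simp) h8
    · exact .inr (.inl h)
    · exact .inr (.inr (.inr h))

theorem EmbedsInto.and_not_dvd_card {G M K : Type*} [Group G] [Group M] [Group K] {n m : ℕ}
    (hGM : EmbedsInto G M) (hMK : EmbedsInto M K) (hM : Nat.card M = m) (hn : ¬ n ∣ m) :
    EmbedsInto G K ∧ ¬ n ∣ Nat.card G :=
  ⟨hGM.trans hMK, fun h => hn (h.trans (hM ▸ hGM.card_dvd))⟩

theorem EmbedsIntoMaximal.embedsInto_perm_six_and_not_sixteen_dvd_card {G : Type*} [Group G]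
    (hG : EmbedsIntoMaximal G) : EmbedsInto G (Perm (Fin 6)) ∧ ¬ 16 ∣ Nat.card G := by
  have hC₂ : EmbedsInto (Multiplicative (ZMod 2)) (Perm (Fin 2)) := .perm_fin_of_card_eq (by simp)
  have hC₄ : EmbedsInto (Multiplicative (ZMod 4)) (Perm (Fin 4)) := .perm_fin_of_card_eq (by simp)
  have hA₄ : Nat.card (alternatingGroup (Fin 4)) = 12 := by
    rw [nat_card_alternatingGroup, Nat.card_fin]; rfl
  obtain h | h | h | h | h := hG
  · exact h.and_not_dvd_card (m := 360) (.subgroup _)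
      (by rw [nat_card_alternatingGroup, Nat.card_fin]; rfl) (by norm_num)
  · exact h.and_not_dvd_card (m := 120) (.perm_of_embedding Fin.castSuccEmb)
      (card_perm_fin 5) (by norm_num)
  · exact h.and_not_dvd_card (.trans ⟨_, GroupN72.toPerm_injective⟩
      (.perm_of_embedding finSumFinEquiv.toEmbedding)) GroupN72.card_eq (by norm_num)
  · exact h.and_not_dvd_card (m := 24) (.prod_perm_fin_add hC₂ (.subgroup _))
      (by rw [Nat.card_prod, hA₄]; simp) (by norm_num)
  · exact h.and_not_dvd_card (m := 8) (.prod_perm_fin_add hC₂ hC₄) (by simp) (by norm_num)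

/-- A finite group `G` embeds into `S₆` with `16 ∤ |G|` if and only if it embeds into one of the
five maximal groups `A₆`, `S₅`, `N₇₂ = C₃²⋊D₈ ≅ S₃≀C₂`, `C₂×A₄`, `C₂×C₄`. -/
theorem embeds_S6_order_iff_embeds_maximal (G : Type*) [Group G] [Fintype G] :
    ((∃ f : G →* Equiv.Perm (Fin 6), Function.Injective f) ∧
        ¬ (2 ^ 4 ∣ Fintype.card G)) ↔
      ((∃ f : G →* alternatingGroup (Fin 6), Function.Injective f) ∨
        (∃ f : G →* Equiv.Perm (Fin 5), Function.Injective f) ∨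
        (∃ f : G →* GroupN72, Function.Injective f) ∨
        (∃ f : G →* Multiplicative (ZMod 2) × alternatingGroup (Fin 4),
          Function.Injective f) ∨
        (∃ f : G →* Multiplicative (ZMod 2) × Multiplicative (ZMod 4),
          Function.Injective f)) := by
  rw [← Nat.card_eq_fintype_card]
  refine ⟨fun ⟨⟨f, hf⟩, h16⟩ => ?_,
    EmbedsIntoMaximal.embedsInto_perm_six_and_not_sixteen_dvd_card⟩
  have e : G ≃* f.range := MonoidHom.ofInjective hf
  rw [Nat.card_congr e.toEquiv] at h16
  have hG := EmbedsInto.of_mulEquiv e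
  exact (embedsIntoMaximal_of_not_sixteen_dvd_card h16).imp hG.trans <|
    .imp hG.trans <| .imp hG.trans <| .imp hG.trans hG.trans
end
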